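/- The two-sided ideal I_f of H_n generated by f decomposes as I_f = ⊕_{(α,Z) ∈ Π_n^+} X^α f_Z H^fn_n; equivalently, {X^α f_Z : (α,Z) ∈ Π_n^+} is a basis of I_f as a free right H^fn_n-module. -/

import Mathlib

set_option maxHeartbeats 1000000

namespace HC

/-- Generators of the affine Hecke–Clifford superalgebra `H_n`. -/
inductive Gen (n : ℕ) : Type
  | X : Fin n → Gen n
  | Xinv : Fin n → Gen n
  | C : Fin n → Gen n
  | T : Fin (n - 1) → Gen n

/-- The node `i` of `Fin n`, for `i : Fin (n-1)` (1-based: the node `i`). -/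
def lo {n : ℕ} (i : Fin (n - 1)) : Fin n :=
  ⟨i.val, by have := i.isLt; omega⟩

/-- The node `i+1` of `Fin n`, for `i : Fin (n-1)`. -/
def hi {n : ℕ} (i : Fin (n - 1)) : Fin n :=
  ⟨i.val + 1, by have := i.isLt; omega⟩

variable (F : Type) [Field F]

/-- The free algebra on the generators. -/
abbrev FA (n : ℕ) : Type := FreeAlgebra F (Gen n)

noncomputable def fx {n : ℕ} (i : Fin n) : FA F n := FreeAlgebra.ι F (Gen.X i)
noncomputable def fxinv {n : ℕ} (i : Fin n) : FA F n := FreeAlgebra.ι F (Gen.Xinv i)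
noncomputable def fc {n : ℕ} (i : Fin n) : FA F n := FreeAlgebra.ι F (Gen.C i)
noncomputable def ft {n : ℕ} (i : Fin (n - 1)) : FA F n := FreeAlgebra.ι F (Gen.T i)

/-- The defining relations of the affine Hecke–Clifford superalgebra, with parameter
`q` and `ξ = q - q⁻¹`. -/
inductive Rel (q : F) (n : ℕ) : FA F n → FA F n → Prop
  | XXinv (i : Fin n) : Rel q n (fx F i * fxinv F i) 1
  | XinvX (i : Fin n) : Rel q n (fxinv F i * fx F i) 1
  | XX (i j : Fin n) : Rel q n (fx F i * fx F j) (fx F j * fx F i)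
  | XiXi (i j : Fin n) : Rel q n (fxinv F i * fxinv F j) (fxinv F j * fxinv F i)
  | XXi (i j : Fin n) (h : i ≠ j) : Rel q n (fx F i * fxinv F j) (fxinv F j * fx F i)
  | CC (i : Fin n) : Rel q n (fc F i * fc F i) 1
  | Canti (i j : Fin n) (h : i ≠ j) : Rel q n (fc F i * fc F j) (-(fc F j * fc F i))
  | CX (i : Fin n) : Rel q n (fc F i * fx F i) (fxinv F i * fc F i)
  | CXi (i : Fin n) : Rel q n (fc F i * fxinv F i) (fx F i * fc F i)
  | CXo (i j : Fin n) (h : i ≠ j) : Rel q n (fc F i * fx F j) (fx F j * fc F i)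
  | CXio (i j : Fin n) (h : i ≠ j) : Rel q n (fc F i * fxinv F j) (fxinv F j * fc F i)
  | Tquad (i : Fin (n - 1)) : Rel q n (ft F i * ft F i) ((q - q⁻¹) • ft F i + 1)
  | Tbraid (i j : Fin (n - 1)) (h : (j : ℕ) = (i : ℕ) + 1) :
      Rel q n (ft F i * ft F j * ft F i) (ft F j * ft F i * ft F j)
  | TTfar (i j : Fin (n - 1)) (h : (i : ℕ) + 1 < (j : ℕ)) :
      Rel q n (ft F i * ft F j) (ft F j * ft F i)
  | TC (i : Fin (n - 1)) : Rel q n (ft F i * fc F (lo i)) (fc F (hi i) * ft F i)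
  | TCo (i : Fin (n - 1)) (j : Fin n) (h1 : j ≠ lo i) (h2 : j ≠ hi i) :
      Rel q n (ft F i * fc F j) (fc F j * ft F i)
  | TXo (i : Fin (n - 1)) (j : Fin n) (h1 : j ≠ lo i) (h2 : j ≠ hi i) :
      Rel q n (ft F i * fx F j) (fx F j * ft F i)
  | TXio (i : Fin (n - 1)) (j : Fin n) (h1 : j ≠ lo i) (h2 : j ≠ hi i) :
      Rel q n (ft F i * fxinv F j) (fxinv F j * ft F i)
  | cross (i : Fin (n - 1)) :
      Rel q n ((ft F i + (q - q⁻¹) • (fc F (lo i) * fc F (hi i))) * fx F (lo i) * ft F i)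
        (fx F (hi i))

/-- The affine Hecke–Clifford superalgebra `H_n` over `F` with parameter `q`. -/
abbrev H (q : F) (n : ℕ) : Type := RingQuot (Rel F q n)

noncomputable def X (q : F) {n : ℕ} (i : Fin n) : H F q n :=
  RingQuot.mkAlgHom F (Rel F q n) (fx F i)

noncomputable def Xinv (q : F) {n : ℕ} (i : Fin n) : H F q n :=
  RingQuot.mkAlgHom F (Rel F q n) (fxinv F i)

noncomputable def C (q : F) {n : ℕ} (i : Fin n) : H F q n :=
  RingQuot.mkAlgHom F (Rel F q n) (fc F i)

noncomputable def T (q : F) {n : ℕ} (i : Fin (n - 1)) : H F q n :=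
  RingQuot.mkAlgHom F (Rel F q n) (ft F i)

/-- `q` is either a primitive root of unity of odd order (including `q = 1`)
or not a root of unity at all (and `q ≠ 0`). -/
def GoodParam (q : F) : Prop :=
  q ≠ 0 ∧ ((∃ m : ℕ, Odd m ∧ IsPrimitiveRoot q m) ∨ ∀ m : ℕ, 0 < m → q ^ m ≠ 1)

/-- `X_i^a` for an integer exponent `a ∈ ℤ`. -/
noncomputable def XZ (q : F) {n : ℕ} (i : Fin n) (a : ℤ) : H F q n :=
  if 0 ≤ a then X F q i ^ a.toNat else Xinv F q i ^ (-a).toNat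

/-- The monomial `X^α = X_1^{α_1} ⋯ X_n^{α_n}` for `α ∈ ℤ^n`. -/
noncomputable def Xmon (q : F) {n : ℕ} (α : Fin n → ℤ) : H F q n :=
  ((List.finRange n).map fun i => XZ F q i (α i)).prod

/-- The monomial `C^β = C_1^{β_1} ⋯ C_n^{β_n}` for `β ∈ {0,1}^n`. -/
noncomputable def Cmon (q : F) {n : ℕ} (β : Fin n → Bool) : H F q n :=
  ((List.finRange n).map fun i => if β i then C F q i else 1).prod

/-- The basic transposition `s_i = (i, i+1)` of `S_n`. -/
def s {n : ℕ} (i : Fin (n - 1)) : Equiv.Perm (Fin n) := Equiv.swap (lo i) (hi i)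

/-- The Coxeter length (number of inversions) of a permutation of `Fin n`. -/
def len {n : ℕ} (w : Equiv.Perm (Fin n)) : ℕ :=
  ((Finset.univ : Finset (Fin n × Fin n)).filter fun p => p.1 < p.2 ∧ w p.2 < w p.1).card

/-- `Tw` is the family of standard basis elements `T_w`, `w ∈ S_n`: it satisfies
`T_1 = 1`, `T_{s_i} = T_i`, and `T_{s_i w} = T_i T_w` whenever `ℓ(s_i w) = ℓ(w) + 1`.
These conditions determine the family uniquely. -/
def IsTFam (q : F) {n : ℕ} (Tw : Equiv.Perm (Fin n) → H F q n) : Prop :=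
  Tw 1 = 1 ∧ (∀ i : Fin (n - 1), Tw (s i) = T F q i) ∧
    ∀ (i : Fin (n - 1)) (w : Equiv.Perm (Fin n)),
      len (s i * w) = len w + 1 → Tw (s i * w) = T F q i * Tw w

/-- `h` is the quantum characteristic of `q`:  the smallest positive integer with
`q^{1-h} + q^{3-h} + ⋯ + q^{h-1} = 0`. -/
def qcharEq (q : F) (h : ℕ) : Prop :=
  0 < h ∧ (∑ k ∈ Finset.range h, q ^ (1 - (h : ℤ) + 2 * (k : ℤ))) = 0 ∧
    ∀ h' : ℕ, 0 < h' → h' < h →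
      (∑ k ∈ Finset.range h', q ^ (1 - (h' : ℤ) + 2 * (k : ℤ))) ≠ 0

/-- `i ∈ I = {0, 1, …, ℓ}` where `ℓ = (h-1)/2` (no condition if the quantum
characteristic is infinite). -/
def memI (q : F) (i : ℕ) : Prop := ∀ h : ℕ, qcharEq F q h → 2 * i + 1 ≤ h

/-- `q(i) = 2(q^{2i+1} + q^{-2i-1})/(q + q⁻¹)`. -/
noncomputable def qres (q : F) (i : ℕ) : F :=
  2 * (q ^ (2 * i + 1) + q⁻¹ ^ (2 * i + 1)) / (q + q⁻¹)

/-- Index of the block containing position `k` (0-based), for a composition given as a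
list of parts. -/
def blk : List ℕ → ℕ → ℕ
  | [], _ => 0
  | a :: rest, k => if k < a then 0 else blk rest (k - a) + 1

/-- Membership in the Young subgroup `S_μ ⊆ S_n`. -/
def InYoung {n : ℕ} (μ : List ℕ) (w : Equiv.Perm (Fin n)) : Prop :=
  ∀ k : Fin n, blk μ (w k).val = blk μ k.val

/-- `μ` is a composition of `n`. -/
def IsComposition (μ : List ℕ) (n : ℕ) : Prop := (∀ a ∈ μ, 0 < a) ∧ μ.sum = n

/-- The parabolic subalgebra generated by all `X_i^{±1}`, `C_i`, and the `T_j` with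
`j` in a set `J` of admissible indices. -/
def parabolicJ (q : F) {n : ℕ} (J : Set (Fin (n - 1))) : Subalgebra F (H F q n) :=
  Algebra.adjoin F
    ((Set.range fun i : Fin n => X F q i) ∪ (Set.range fun i : Fin n => Xinv F q i) ∪
      (Set.range fun i : Fin n => C F q i) ∪ {h | ∃ j ∈ J, h = T F q j})

/-- The parabolic subalgebra `H_μ` for a composition `μ`. -/
def parabolicC (q : F) {n : ℕ} (μ : List ℕ) : Subalgebra F (H F q n) :=
  parabolicJ F q {j | InYoung μ (s j)}

/-- The classical parabolic subalgebra `H^cl_μ`, generated by the `T_j` with `s_j ∈ S_μ`. -/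
def clparC (q : F) {n : ℕ} (μ : List ℕ) : Subalgebra F (H F q n) :=
  Algebra.adjoin F {h | ∃ j : Fin (n - 1), InYoung μ (s j) ∧ h = T F q j}

/-- The finite Hecke–Clifford subalgebra `H^fn_n`, generated by all `C_i` and `T_j`. -/
def Hfin (q : F) (n : ℕ) : Subalgebra F (H F q n) :=
  Algebra.adjoin F
    ((Set.range fun i : Fin n => C F q i) ∪ {h | ∃ j : Fin (n - 1), h = T F q j})

/-- `x` is a minimal length `(S_μ, S_ν)`-double coset representative. -/
def IsMinDC {n : ℕ} (μ ν : List ℕ) (x : Equiv.Perm (Fin n)) : Prop :=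
  ∀ u v : Equiv.Perm (Fin n), InYoung μ u → InYoung ν v → len x ≤ len (u * x * v)

/-- `w ∈ S_μ x S_ν`. -/
def InDC {n : ℕ} (μ ν : List ℕ) (x w : Equiv.Perm (Fin n)) : Prop :=
  ∃ u v : Equiv.Perm (Fin n), InYoung μ u ∧ InYoung ν v ∧ w = u * x * v

/-- A covering step in the Bruhat order: multiplication by a reflection increasing length. -/
def BruhatStep {n : ℕ} (v w : Equiv.Perm (Fin n)) : Prop :=
  ∃ a b : Fin n, a ≠ b ∧ w = Equiv.swap a b * v ∧ len v < len w

/-- The Bruhat order on `S_n`. -/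
def BruhatLE {n : ℕ} : Equiv.Perm (Fin n) → Equiv.Perm (Fin n) → Prop :=
  Relation.ReflTransGen BruhatStep

/-- The space of `A`-equivariant linear maps between two representations of the
`F`-algebra `A`. -/
def eqvHoms {A : Type} [Ring A] [Algebra F A] {M N : Type}
    [AddCommGroup M] [Module F M] [AddCommGroup N] [Module F N]
    (ρM : A →ₐ[F] Module.End F M) (ρN : A →ₐ[F] Module.End F N) :
    Submodule F (M →ₗ[F] N) where
  carrier := {f | ∀ (x : A) (m : M), f (ρM x m) = ρN x (f m)}
  add_mem' := by
    intro f g hf hg x m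
    simp only [LinearMap.add_apply, hf x m, hg x m, map_add]
  zero_mem' := by
    intro x m
    simp only [LinearMap.zero_apply, map_zero]
  smul_mem' := by
    intro c f hf x m
    simp only [LinearMap.smul_apply, hf x m, map_smul]

/-- `(E, ρE, ι)` is the module induced along the algebra morphism `φ : B →ₐ A` from
the `B`-representation `(M, ρ)`, i.e. `E = A ⊗_B M`, characterized by its universal
property. -/
def IsInducedAlong {A B : Type} [Ring A] [Ring B] [Algebra F A] [Algebra F B]
    (φ : B →ₐ[F] A) {M : Type} [AddCommGroup M] [Module F M]
    (ρ : B →ₐ[F] Module.End F M) {E : Type} [AddCommGroup E] [Module F E]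
    (ρE : A →ₐ[F] Module.End F E) (ι : M →ₗ[F] E) : Prop :=
  (∀ (b : B) (m : M), ι (ρ b m) = ρE (φ b) (ι m)) ∧
    ∀ (P : Type) [AddCommGroup P] [Module F P],
      ∀ (ρP : A →ₐ[F] Module.End F P) (f : M →ₗ[F] P),
        (∀ (b : B) (m : M), f (ρ b m) = ρP (φ b) (f m)) →
        ∃! g : E →ₗ[F] P,
          (∀ (x : A) (e : E), g (ρE x e) = ρP x (g e)) ∧ ∀ m : M, g (ι m) = f m

/-- `δ` is the grading automorphism of the superalgebra `H_n`
(identity on even generators, `-1` on the odd generators `C_i`). -/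
def IsGradingAut (q : F) {n : ℕ} (δ : H F q n →ₐ[F] H F q n) : Prop :=
  (∀ i : Fin n, δ (X F q i) = X F q i) ∧ (∀ i : Fin n, δ (Xinv F q i) = Xinv F q i) ∧
    (∀ i : Fin n, δ (C F q i) = -C F q i) ∧ ∀ i : Fin (n - 1), δ (T F q i) = T F q i

/-- `τ` is the antiautomorphism of `H_n` with `τ(T_i) = T_i + ξ C_i C_{i+1}`,
`τ(C_j) = C_j`, `τ(X_j) = X_j`. -/
def IsTauAntiAut (q : F) {n : ℕ} (τ : H F q n →ₗ[F] H F q n) : Prop :=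
  Function.Bijective τ ∧ (∀ a b : H F q n, τ (a * b) = τ b * τ a) ∧ τ 1 = 1 ∧
    (∀ i : Fin (n - 1),
      τ (T F q i) = T F q i + (q - q⁻¹) • (C F q (lo i) * C F q (hi i))) ∧
    (∀ j : Fin n, τ (C F q j) = C F q j) ∧ (∀ j : Fin n, τ (X F q j) = X F q j) ∧
    ∀ j : Fin n, τ (Xinv F q j) = Xinv F q j

/-- `ρ'` is the representation of the subalgebra `B` obtained from the
`H_ν`-representation `ρν` by twisting with the isomorphism `φ_{x⁻¹}`
(determined by `X_i ↦ X_{x⁻¹ i}`, `C_i ↦ C_{x⁻¹ i}`, `T_w ↦ T_{x⁻¹ w x}`). -/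
def IsTwistedRep (q : F) {n : ℕ} (ν : List ℕ) (x : Equiv.Perm (Fin n))
    (B : Subalgebra F (H F q n)) {M : Type} [AddCommGroup M] [Module F M]
    (ρν : ↥(parabolicC F q (n := n) ν) →ₐ[F] Module.End F M)
    (ρ' : ↥B →ₐ[F] Module.End F M) : Prop :=
  (∀ (i : Fin n) (a : ↥B) (b : ↥(parabolicC F q (n := n) ν)),
      (a : H F q n) = X F q i → (b : H F q n) = X F q (x⁻¹ i) → ρ' a = ρν b) ∧
  (∀ (i : Fin n) (a : ↥B) (b : ↥(parabolicC F q (n := n) ν)),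
      (a : H F q n) = Xinv F q i → (b : H F q n) = Xinv F q (x⁻¹ i) → ρ' a = ρν b) ∧
  (∀ (i : Fin n) (a : ↥B) (b : ↥(parabolicC F q (n := n) ν)),
      (a : H F q n) = C F q i → (b : H F q n) = C F q (x⁻¹ i) → ρ' a = ρν b) ∧
  ∀ (j j' : Fin (n - 1)) (a : ↥B) (b : ↥(parabolicC F q (n := n) ν)),
      lo j' = x⁻¹ (lo j) → (a : H F q n) = T F q j → (b : H F q n) = T F q j' → ρ' a = ρν b

/-- The element `f = a_d X_1^d + ⋯ + a_1 X_1 + a_0` of `H_n`. -/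
noncomputable def felem (q : F) (n d : ℕ) (aa : ℕ → F) : H F q n :=
  if h : 0 < n then ∑ i ∈ Finset.range (d + 1), aa i • X F q (⟨0, h⟩ : Fin n) ^ i else 0

/-- The conditions on the coefficients of `f`: degree `d ≥ 1`, monic, and
`a_i = a_0 a_{d-i}`. -/
def GoodPoly (d : ℕ) (aa : ℕ → F) : Prop :=
  1 ≤ d ∧ aa d = 1 ∧ (∀ i ≤ d, aa i = aa 0 * aa (d - i)) ∧ ∀ i : ℕ, d < i → aa i = 0

/-- The relation generating the two-sided ideal `I_f` of `H_n`. -/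
inductive CycRel (q : F) (n d : ℕ) (aa : ℕ → F) : H F q n → H F q n → Prop
  | rel : CycRel q n d aa (felem F q n d aa) 0

/-- The cyclotomic Hecke–Clifford superalgebra `H_n^f = H_n / I_f`. -/
abbrev Hf (q : F) (n d : ℕ) (aa : ℕ → F) : Type := RingQuot (CycRel F q n d aa)

/-- The canonical quotient map `H_n → H_n^f`. -/
noncomputable def cyc (q : F) (n d : ℕ) (aa : ℕ → F) : H F q n →ₐ[F] Hf F q n d aa :=
  RingQuot.mkAlgHom F (CycRel F q n d aa)

noncomputable def Xf (q : F) (n d : ℕ) (aa : ℕ → F) (i : Fin n) : Hf F q n d aa :=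
  cyc F q n d aa (X F q i)
noncomputable def Xinvf (q : F) (n d : ℕ) (aa : ℕ → F) (i : Fin n) : Hf F q n d aa :=
  cyc F q n d aa (Xinv F q i)
noncomputable def Cf (q : F) (n d : ℕ) (aa : ℕ → F) (i : Fin n) : Hf F q n d aa :=
  cyc F q n d aa (C F q i)
noncomputable def Tf (q : F) (n d : ℕ) (aa : ℕ → F) (i : Fin (n - 1)) : Hf F q n d aa :=
  cyc F q n d aa (T F q i)

/-- `e` is the canonical embedding `H_k^f → H_N^f` (shifting all indices by `sh`;
for `sh = 0` this is the standard identification of `H_k^f` with a subalgebra of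
`H_N^f`). -/
def IsCycEmb (q : F) (k N d : ℕ) (aa : ℕ → F) (sh : ℕ)
    (e : Hf F q k d aa →ₐ[F] Hf F q N d aa) : Prop :=
  (∀ (i : Fin k) (i' : Fin N), (i' : ℕ) = sh + (i : ℕ) →
      e (Xf F q k d aa i) = Xf F q N d aa i') ∧
  (∀ (i : Fin k) (i' : Fin N), (i' : ℕ) = sh + (i : ℕ) →
      e (Xinvf F q k d aa i) = Xinvf F q N d aa i') ∧
  (∀ (i : Fin k) (i' : Fin N), (i' : ℕ) = sh + (i : ℕ) →
      e (Cf F q k d aa i) = Cf F q N d aa i') ∧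
  ∀ (j : Fin (k - 1)) (j' : Fin (N - 1)), (j' : ℕ) = sh + (j : ℕ) →
      e (Tf F q k d aa j) = Tf F q N d aa j'

/-- `δ` is the grading automorphism of the superalgebra `H_n^f`. -/
def IsCycGrading (q : F) (n d : ℕ) (aa : ℕ → F)
    (δ : Hf F q n d aa →ₐ[F] Hf F q n d aa) : Prop :=
  (∀ i : Fin n, δ (Xf F q n d aa i) = Xf F q n d aa i) ∧
  (∀ i : Fin n, δ (Xinvf F q n d aa i) = Xinvf F q n d aa i) ∧
  (∀ i : Fin n, δ (Cf F q n d aa i) = -Cf F q n d aa i) ∧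
  ∀ j : Fin (n - 1), δ (Tf F q n d aa j) = Tf F q n d aa j

/-- The elements `f_1 = f`, `f_{i+1} = (T_i + ξ C_i C_{i+1}) f_i T_i` of `H_n`
(0-based indexing: `fseq k = f_{k+1}`). -/
noncomputable def fseq (q : F) (n d : ℕ) (aa : ℕ → F) : ℕ → H F q n
  | 0 => felem F q n d aa
  | k + 1 =>
    if h : k < n - 1 then
      (T F q (⟨k, h⟩ : Fin (n - 1)) +
          (q - q⁻¹) • (C F q (lo (⟨k, h⟩ : Fin (n - 1))) *
            C F q (hi (⟨k, h⟩ : Fin (n - 1))))) *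
        fseq q n d aa k * T F q (⟨k, h⟩ : Fin (n - 1))
    else 0

/-- `f_Z = f_{z_1} ⋯ f_{z_u}` for `Z = {z_1 < ⋯ < z_u} ⊆ {1,…,n}` (0-based). -/
noncomputable def fZ (q : F) (n d : ℕ) (aa : ℕ → F) (Z : Finset (Fin n)) : H F q n :=
  ((Z.sort (· ≤ ·)).map fun z => fseq F q n d aa (z : ℕ)).prod

/-- The two-sided ideal `I_f` of `H_n` generated by `f` (the `F`-span of all
`u · f · v`). -/
def Ifideal (F : Type) [Field F] (q : F) (n d : ℕ) (aa : ℕ → F) :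
    Submodule F (H F q n) :=
  Submodule.span F {h | ∃ u v : H F q n, h = u * felem F q n d aa * v}

/-- The index set `Π_n^+`: pairs `(α, Z) ∈ Π_n` with `Z ≠ ∅`. -/
def PiIdxPlus (n d : ℕ) : Type :=
  {p : (Fin n → ℤ) × Finset (Fin n) //
    (∀ i : Fin n, i ∉ p.2 → 0 ≤ p.1 i ∧ p.1 i < d) ∧ p.2 ≠ ∅}

set_option linter.unusedSimpArgs false

section RankTwo

variable {F A : Type} [Field F] [Ring A] [Algebra F A]

theorem mul_mul_of_mul_eq {a b c : A} (h : a * b = c) (z : A) : a * (b * z) = c * z := by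
  rw [← mul_assoc, h]

/-- The relations between `X_i, X_{i+1}, C_i, C_{i+1}, T_i` used to construct the induced
representation; neither the quadratic relation nor the relations between `T_i` and
`C_i, C_{i+1}` are included. -/
structure CrossRel (ξ : F) (X Y : Aˣ) (C D T : A) : Prop where
  xy : (X : A) * Y = Y * X
  cc : C * C = 1
  dd : D * D = 1
  dc : D * C = -(C * D)
  cx : C * X = ↑X⁻¹ * C
  cy : C * Y = Y * C
  dx : D * X = X * D
  dy : D * Y = ↑Y⁻¹ * D
  tx : T * X = Y * T - ξ • (Y : A) - ξ • (↑X⁻¹ * (C * D))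
  ty : T * Y = X * T + ξ • (Y : A) - ξ • (↑Y⁻¹ * (C * D))

theorem mul_inv_eq_of_mul_eq {a b : A} {U V : Aˣ} (h : a * U = V * b) :
    (↑V⁻¹ : A) * a = b * ↑U⁻¹ := by
  rw [Units.eq_mul_inv_iff_mul_eq, mul_assoc, h, Units.inv_mul_cancel_left]

namespace CrossRel

variable {ξ : F} {X Y : Aˣ} {C D T : A} (h : CrossRel ξ X Y C D T)
include h

theorem xiy : (↑X⁻¹ : A) * Y = Y * ↑X⁻¹ := mul_inv_eq_of_mul_eq h.xy.symm
theorem xyi : (X : A) * ↑Y⁻¹ = ↑Y⁻¹ * X := (mul_inv_eq_of_mul_eq h.xy).symm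
theorem cxi : C * ↑X⁻¹ = X * C := by
  rw [Units.mul_inv_eq_iff_eq_mul, mul_assoc, h.cx, Units.mul_inv_cancel_left]
theorem dyi : D * ↑Y⁻¹ = Y * D := by
  rw [Units.mul_inv_eq_iff_eq_mul, mul_assoc, h.dy, Units.mul_inv_cancel_left]
theorem cyi : C * ↑Y⁻¹ = ↑Y⁻¹ * C := (mul_inv_eq_of_mul_eq h.cy).symm
theorem dxi : D * ↑X⁻¹ = ↑X⁻¹ * D := (mul_inv_eq_of_mul_eq h.dx).symm
theorem xiyi : (↑X⁻¹ : A) * ↑Y⁻¹ = ↑Y⁻¹ * ↑X⁻¹ := (mul_inv_eq_of_mul_eq h.xiy).symm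

theorem txi : T * ↑X⁻¹ = ↑Y⁻¹ * T + ξ • (↑X⁻¹ : A) + ξ • (↑Y⁻¹ * (C * D)) := by
  rw [Units.mul_inv_eq_iff_eq_mul, ← Units.mul_right_inj Y, ← mul_assoc]
  simp only [mul_add, add_mul, mul_smul_comm, smul_mul_assoc, mul_assoc, Units.inv_mul,
    Units.mul_inv_cancel_left, mul_one, h.tx, h.dx, mul_mul_of_mul_eq h.cx, mul_sub,
    Units.mul_inv_cancel_left]
  module

theorem tyi : T * ↑Y⁻¹ = ↑X⁻¹ * T - ξ • (↑X⁻¹ : A) + ξ • (↑X⁻¹ * (C * D)) := by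
  rw [Units.mul_inv_eq_iff_eq_mul, ← Units.mul_right_inj X, ← mul_assoc]
  simp only [mul_add, add_mul, mul_smul_comm, smul_mul_assoc, mul_assoc, Units.inv_mul,
    Units.mul_inv_cancel_left, mul_one, h.ty, h.dy, mul_mul_of_mul_eq h.cyi, mul_sub, sub_mul,
    Units.mul_inv_cancel_left, mul_mul_of_mul_eq h.xyi, ← mul_mul_of_mul_eq h.xy]
  module

theorem cdc : C * (D * C) = -D := by
  rw [h.dc, mul_neg, mul_mul_of_mul_eq h.cc, one_mul]
theorem dcd : D * (C * D) = -C := by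
  rw [← mul_assoc, h.dc, neg_mul, mul_assoc, h.dd, mul_one]

theorem tc_mul_x : (T * C - D * T) * X = ↑Y⁻¹ * (T * C - D * T) := by
  simp only [sub_mul, mul_sub, mul_assoc, h.cx, mul_mul_of_mul_eq h.txi, h.tx, add_mul,
    mul_smul_comm, smul_mul_assoc, h.cdc, h.dcd, mul_mul_of_mul_eq h.dy, h.dy,
    mul_mul_of_mul_eq h.dxi]
  simp only [mul_neg]
  module

theorem tc_mul_y : (T * C - D * T) * Y = X * (T * C - D * T) := by
  simp only [sub_mul, mul_sub, mul_assoc, h.cy, mul_mul_of_mul_eq h.ty, h.ty, add_mul, mul_add,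
    mul_smul_comm, smul_mul_assoc, h.cdc, h.dcd, mul_mul_of_mul_eq h.dx, h.dy,
    mul_mul_of_mul_eq h.dyi]
  simp only [mul_neg]
  module

theorem td_mul_x : (T * D - C * T - ξ • (D - C)) * X = Y * (T * D - C * T - ξ • (D - C)) := by
  simp only [sub_mul, mul_sub, mul_assoc, h.dx, mul_mul_of_mul_eq h.tx, h.tx, add_mul, mul_add,
    mul_smul_comm, smul_mul_assoc, h.dd, mul_one, h.cx, h.cy, mul_mul_of_mul_eq h.cy,
    mul_mul_of_mul_eq h.cxi, mul_mul_of_mul_eq h.cc, one_mul, smul_sub]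
  module

theorem td_mul_y :
    (T * D - C * T - ξ • (D - C)) * Y = ↑X⁻¹ * (T * D - C * T - ξ • (D - C)) := by
  simp only [sub_mul, mul_sub, mul_assoc, h.dy, mul_mul_of_mul_eq h.tyi, h.ty, add_mul, mul_add,
    mul_smul_comm, smul_mul_assoc, h.dd, mul_one, h.cx, h.cy, mul_mul_of_mul_eq h.cx,
    mul_mul_of_mul_eq h.cyi, mul_mul_of_mul_eq h.cc, one_mul, smul_sub]
  module

theorem tquad_mul_x (tc : T * C = D * T) (td : T * D = C * T + ξ • (D - C)) :
    (T * T - ξ • T - 1) * X = X * (T * T - ξ • T - 1) := by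
  simp only [sub_mul, mul_sub, mul_assoc, h.tx, h.ty, add_mul, mul_add, mul_mul_of_mul_eq h.ty,
    mul_smul_comm, smul_mul_assoc, mul_one, one_mul, smul_sub, mul_mul_of_mul_eq h.txi,
    mul_mul_of_mul_eq tc, td, h.dd, h.dc, mul_neg,
    mul_mul_of_mul_eq h.dc, neg_mul, h.cc]
  module

theorem tquad_mul_y (tc : T * C = D * T) (td : T * D = C * T + ξ • (D - C)) :
    (T * T - ξ • T - 1) * Y = Y * (T * T - ξ • T - 1) := by
  simp only [sub_mul, mul_sub, mul_assoc, h.tx, h.ty, add_mul, mul_add, mul_mul_of_mul_eq h.tx,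
    mul_smul_comm, smul_mul_assoc, mul_one, one_mul, smul_sub, mul_mul_of_mul_eq h.tyi,
    mul_mul_of_mul_eq tc, td, h.dd, h.dc, mul_neg,
    mul_mul_of_mul_eq h.dc, neg_mul, h.cc]
  module

theorem cross (tquad : T * T = ξ • T + 1) : (T + ξ • (C * D)) * X * T = Y := by
  simp only [add_mul, smul_mul_assoc, mul_assoc, mul_mul_of_mul_eq h.tx, sub_mul, tquad,
    mul_mul_of_mul_eq h.dx, mul_mul_of_mul_eq h.cx, mul_add, mul_one, mul_smul_comm]
  module

end CrossRel

end RankTwo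

section RankThree

variable {F A : Type} [Field F] [Ring A] [Algebra F A]

/-- The relations between two neighbouring nodes used to construct the induced
representation; the braid relation is not included. -/
structure NeighbourRel (ξ : F) (X Y Z : Aˣ) (C D E S T : A) : Prop where
  left : CrossRel ξ X Y C D S
  right : CrossRel ξ Y Z D E T
  cz : C * Z = Z * C
  ex : E * X = X * E
  sz : S * Z = Z * S
  tx : T * X = X * T
  ec : E * C = -(C * E)
  se : S * E = E * S
  tc : T * C = C * T
  sc : S * C = D * S
  sd : S * D = C * S + ξ • (D - C)
  td : T * D = E * T
  te : T * E = D * T + ξ • (E - D)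
  ss : S * S = ξ • S + 1
  tt : T * T = ξ • T + 1

namespace NeighbourRel

variable {ξ : F} {X Y Z : Aˣ} {C D E S T : A} (h : NeighbourRel ξ X Y Z C D E S T)
include h

theorem braid_mul :
    (S * T * S - T * S * T) * X = Z * (S * T * S - T * S * T) ∧
    (S * T * S - T * S * T) * Y = Y * (S * T * S - T * S * T) ∧
    (S * T * S - T * S * T) * Z = X * (S * T * S - T * S * T) := by
  have txi : T * ↑X⁻¹ = ↑X⁻¹ * T := (mul_inv_eq_of_mul_eq h.tx).symm
  have szi : S * ↑Z⁻¹ = ↑Z⁻¹ * S := (mul_inv_eq_of_mul_eq h.sz).symm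
  refine ⟨?_, ?_, ?_⟩
  all_goals
    simp only [mul_assoc, sub_mul, mul_sub, add_mul, mul_add, smul_sub, smul_add, mul_smul_comm,
      smul_mul_assoc, mul_neg, neg_mul, smul_neg, mul_one, one_mul,
      h.tx, mul_mul_of_mul_eq h.tx, h.sz, mul_mul_of_mul_eq h.sz,
      h.left.tx, h.left.ty, h.right.tx, h.right.ty, mul_mul_of_mul_eq h.left.tx,
      mul_mul_of_mul_eq h.left.ty, mul_mul_of_mul_eq h.right.tx, mul_mul_of_mul_eq h.right.ty,
      mul_mul_of_mul_eq h.left.txi, mul_mul_of_mul_eq h.left.tyi, mul_mul_of_mul_eq h.right.txi,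
      mul_mul_of_mul_eq h.right.tyi, mul_mul_of_mul_eq txi, mul_mul_of_mul_eq szi,
      h.sc, h.sd, h.se, h.tc, h.td, h.te, mul_mul_of_mul_eq h.sc, mul_mul_of_mul_eq h.sd,
      mul_mul_of_mul_eq h.se, mul_mul_of_mul_eq h.tc, mul_mul_of_mul_eq h.td,
      mul_mul_of_mul_eq h.te, h.ss, h.tt, mul_mul_of_mul_eq h.ss, mul_mul_of_mul_eq h.tt,
      h.left.cc, h.left.dd, h.right.dd, mul_mul_of_mul_eq h.left.cc, mul_mul_of_mul_eq h.left.dd,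
      mul_mul_of_mul_eq h.right.dd, h.left.dc, h.right.dc, h.ec, mul_mul_of_mul_eq h.left.dc,
      mul_mul_of_mul_eq h.right.dc, mul_mul_of_mul_eq h.ec]
    module

end NeighbourRel
end RankThree

section Induced

theorem int_pi_induction {n : ℕ} {P : (Fin n → ℤ) → Prop} (zero : P 0)
    (add : ∀ α j, P α → P (α + Pi.single j 1)) (sub : ∀ α j, P α → P (α - Pi.single j 1))
    (α : Fin n → ℤ) : P α := by
  have key : ∀ (j : Fin n) (a : ℤ) (β : Fin n → ℤ), P β → P (β + Pi.single j a) := by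
    intro j a β hβ
    induction a with
    | zero => simpa using hβ
    | succ i ih => rw [Pi.single_add, ← add_assoc]; exact add _ _ ih
    | pred i ih => rw [Pi.single_sub, ← add_sub_assoc]; exact sub _ _ ih
  rw [← Finset.univ_sum_single α]
  induction (Finset.univ : Finset (Fin n)) using Finset.induction_on with
  | empty => simpa using zero
  | insert j s hj ih => rw [Finset.sum_insert hj, add_comm]; exact key _ _ _ ih

theorem exists_zpow_prod {G : Type} [Group G] {n : ℕ} (U : Fin n → G)
    (hU : ∀ j k, j ≠ k → Commute (U j) (U k)) :
    ∃ E : (Fin n → ℤ) → G, E 0 = 1 ∧ (∀ α β, E (α + β) = E α * E β) ∧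
      ∀ j, E (Pi.single j 1) = U j := by
  classical
  have hcomm : Pairwise fun j k => ∀ x y : Multiplicative ℤ,
      Commute (zpowersHom G (U j) x) (zpowersHom G (U k) y) := by
    intro j k hjk x y
    rw [zpowersHom_apply, zpowersHom_apply]
    exact (hU j k hjk).zpow_zpow _ _
  let E := MonoidHom.noncommPiCoprod (fun j => zpowersHom G (U j)) hcomm
  refine ⟨fun α => E fun j => Multiplicative.ofAdd (α j), map_one E, fun α β => map_mul E _ _,
    fun j => ?_⟩
  have : (fun k => Multiplicative.ofAdd ((Pi.single j 1 : Fin n → ℤ) k)) =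
      Pi.mulSingle j (Multiplicative.ofAdd 1) := by
    ext k
    by_cases h : k = j
    · subst h; simp
    · simp [h]
  show E (fun k => Multiplicative.ofAdd ((Pi.single j 1 : Fin n → ℤ) k)) = U j
  rw [this, MonoidHom.noncommPiCoprod_mulSingle]
  simp

variable {F : Type} [Field F] {V : Type} [AddCommGroup V] [Module F V] {n : ℕ}

/-- Multiplication by the monomial `X^β` on `F[X_1^{±1}, …, X_n^{±1}] ⊗ V`. -/
noncomputable def shift (β : Fin n → ℤ) : (Module.End F ((Fin n → ℤ) →₀ V))ˣ where
  val := Finsupp.lmapDomain V F (fun α => β + α)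
  inv := Finsupp.lmapDomain V F (fun α => -β + α)
  val_inv := by ext; simp
  inv_val := by ext; simp

@[simp] theorem shift_single (β α : Fin n → ℤ) (v : V) :
    (shift β : (Module.End F ((Fin n → ℤ) →₀ V))ˣ).val (Finsupp.single α v) =
      Finsupp.single (β + α) v := by
  simp [shift]

theorem end_ext {W : Type} [AddCommGroup W] [Module F W] {f g : ((Fin n → ℤ) →₀ V) →ₗ[F] W}
    (h : ∀ α v, f (Finsupp.single α v) = g (Finsupp.single α v)) : f = g :=
  Finsupp.lhom_ext h

theorem shift_add (β γ : Fin n → ℤ) :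
    (shift (β + γ) : (Module.End F ((Fin n → ℤ) →₀ V))ˣ) = shift β * shift γ := by
  apply Units.ext
  apply end_ext
  intro α v
  simp [add_assoc]

theorem shift_zero : (shift 0 : (Module.End F ((Fin n → ℤ) →₀ V))ˣ) = 1 := by
  apply Units.ext
  apply end_ext
  intro α v
  simp

theorem shift_neg (β : Fin n → ℤ) :
    (shift (-β) : (Module.End F ((Fin n → ℤ) →₀ V))ˣ) = (shift β)⁻¹ := by
  rw [eq_inv_iff_mul_eq_one, ← shift_add, neg_add_cancel, shift_zero]

theorem shift_comm (β γ : Fin n → ℤ) :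
    (shift β : (Module.End F ((Fin n → ℤ) →₀ V))ˣ) * shift γ = shift γ * shift β := by
  rw [← shift_add, ← shift_add, add_comm]

/-- An operator that intertwines every `X_j` with some unit vanishes as soon as it vanishes
on `1 ⊗ V`. -/
theorem eq_zero_of_intertwines {R : Module.End F ((Fin n → ℤ) →₀ V)}
    (h0 : ∀ v, R (Finsupp.single 0 v) = 0)
    (hR : ∀ j, ∃ U : (Module.End F ((Fin n → ℤ) →₀ V))ˣ,
      R * (shift (Pi.single j 1)).val = U.val * R) : R = 0 := by
  apply end_ext
  intro α
  induction α using int_pi_induction with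
  | zero => simpa using h0
  | add α j ih =>
    intro v
    obtain ⟨U, hU⟩ := hR j
    have := congrArg (· (Finsupp.single α v)) hU
    simpa [ih v, add_comm] using this
  | sub α j ih =>
    intro v
    obtain ⟨U, hU⟩ := hR j
    have := congrArg (· (Finsupp.single (α - Pi.single j 1) v)) hU
    simp only [Module.End.mul_apply, shift_single, add_sub_cancel, ih v,
      LinearMap.zero_apply] at this
    have hcancel : ∀ m, U⁻¹.val (U.val m) = m := fun m => by
      rw [← Module.End.mul_apply, Units.inv_mul]; rfl
    rw [← hcancel (R _), ← this, map_zero, LinearMap.zero_apply]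

/-- A unit of `End (M × M)` from commuting-square data: it sends `(a, b)` to
`(U a + D b, W b)`. -/
def triUnit {M : Type} [AddCommGroup M] [Module F M] (U W : (Module.End F M)ˣ)
    (D : Module.End F M) : (Module.End F (M × M))ˣ where
  val := LinearMap.prod
    (U.val ∘ₗ LinearMap.fst F M M + D ∘ₗ LinearMap.snd F M M) (W.val ∘ₗ LinearMap.snd F M M)
  inv := LinearMap.prod
    (U⁻¹.val ∘ₗ LinearMap.fst F M M - (U⁻¹.val * D * W⁻¹.val) ∘ₗ LinearMap.snd F M M)
    (W⁻¹.val ∘ₗ LinearMap.snd F M M)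
  val_inv := by
    have hU : ∀ m, U.val (U⁻¹.val m) = m := fun m => by
      rw [← Module.End.mul_apply, Units.mul_inv]; rfl
    have hW : ∀ m, W.val (W⁻¹.val m) = m := fun m => by
      rw [← Module.End.mul_apply, Units.mul_inv]; rfl
    apply LinearMap.ext
    rintro ⟨a, b⟩
    simp [hU, hW]
  inv_val := by
    have hU : ∀ m, U⁻¹.val (U.val m) = m := fun m => by
      rw [← Module.End.mul_apply, Units.inv_mul]; rfl
    have hW : ∀ m, W⁻¹.val (W.val m) = m := fun m => by
      rw [← Module.End.mul_apply, Units.inv_mul]; rfl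
    apply LinearMap.ext
    rintro ⟨a, b⟩
    simp [hU, hW]

@[simp] theorem triUnit_apply {M : Type} [AddCommGroup M] [Module F M] (U W : (Module.End F M)ˣ)
    (D : Module.End F M) (p : M × M) :
    (triUnit U W D).val p = (U.val p.1 + D p.2, W.val p.2) := rfl

theorem triUnit_commute {M : Type} [AddCommGroup M] [Module F M]
    {U W U' W' : (Module.End F M)ˣ} {D D' : Module.End F M}
    (hU : U * U' = U' * U) (hW : W * W' = W' * W)
    (hD : U.val * D' + D * W'.val = U'.val * D + D' * W.val) :
    Commute (triUnit U W D) (triUnit U' W' D') := by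
  apply Units.ext
  apply LinearMap.ext
  rintro ⟨a, b⟩
  have h1 := congrArg (fun u => u.val a) hU
  have h2 := congrArg (fun u => u.val b) hW
  have h3 := congrArg (· b) hD
  simp only [Units.val_mul, Module.End.mul_apply, LinearMap.add_apply] at h1 h2 h3
  simp [h1, h2, add_assoc, h3]

/-- Extend `t : V → V` to an operator `T` on `F[X^{±1}] ⊗ V` with
`T X_j = X_{σ j} T + D_j` and `T = t` on `1 ⊗ V`. -/
theorem exists_twisted_extension (σ : Fin n → Fin n)
    (D : Fin n → Module.End F ((Fin n → ℤ) →₀ V))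
    (hD : ∀ j k, j ≠ k → (shift (Pi.single (σ j) 1)).val * D k + D j * (shift (Pi.single k 1)).val =
      (shift (Pi.single (σ k) 1)).val * D j + D k * (shift (Pi.single j 1)).val)
    (t : V →ₗ[F] V) :
    ∃ T : Module.End F ((Fin n → ℤ) →₀ V),
      (∀ v, T (Finsupp.single 0 v) = Finsupp.single 0 (t v)) ∧
      ∀ j, T * (shift (Pi.single j 1)).val = (shift (Pi.single (σ j) 1)).val * T + D j := by
  classical
  let U : Fin n → (Module.End F (((Fin n → ℤ) →₀ V) × ((Fin n → ℤ) →₀ V)))ˣ := fun j =>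
    triUnit (shift (Pi.single (σ j) 1)) (shift (Pi.single j 1)) (D j)
  have hU : ∀ j k, j ≠ k → Commute (U j) (U k) := fun j k hjk =>
    triUnit_commute (shift_comm _ _) (shift_comm _ _) (hD j k hjk)
  obtain ⟨E, E_zero, E_add, E_single⟩ := exists_zpow_prod U hU
  have E_snd : ∀ α (p : ((Fin n → ℤ) →₀ V) × ((Fin n → ℤ) →₀ V)), ((E α).val p).2 =
      (shift α : (Module.End F ((Fin n → ℤ) →₀ V))ˣ).val p.2 := by
    intro α
    induction α using int_pi_induction with
    | zero => intro p; rw [E_zero, shift_zero]; rfl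
    | add α j ih =>
      intro p
      rw [add_comm, E_add, E_single, shift_add]
      simp [U, ih]
    | sub α j ih =>
      intro p
      have h1 := ih p
      rw [← add_sub_cancel (Pi.single j 1) α, E_add, E_single, shift_add] at h1
      simp only [Units.val_mul, Module.End.mul_apply, U, triUnit_apply] at h1
      have hcancel : ∀ m, (shift (Pi.single j 1) : (Module.End F ((Fin n → ℤ) →₀ V))ˣ)⁻¹.val
          ((shift (Pi.single j 1) : (Module.End F ((Fin n → ℤ) →₀ V))ˣ).val m) = m := fun m => by
        rw [← Module.End.mul_apply, Units.inv_mul]; rfl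
      rw [← hcancel ((E _).val p).2, h1, hcancel]
  let T : Module.End F ((Fin n → ℤ) →₀ V) := Finsupp.lsum F fun α =>
    LinearMap.fst F _ _ ∘ₗ (E α).val ∘ₗ
      LinearMap.prod (Finsupp.lsingle 0 ∘ₗ t) (Finsupp.lsingle 0)
  have hT : ∀ α v, (E α).val (Finsupp.single 0 (t v), Finsupp.single 0 v) =
      (T (Finsupp.single α v), Finsupp.single α v) := by
    intro α v
    apply Prod.ext
    · show _ = T (Finsupp.single α v)
      rw [Finsupp.lsum_single]
      rfl
    · simp [E_snd]
  refine ⟨T, fun v => ?_, fun j => ?_⟩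
  · have := hT 0 v
    rw [E_zero] at this
    exact (congrArg Prod.fst this).symm
  · apply end_ext
    intro α v
    have := hT (Pi.single j 1 + α) v
    rw [E_add, E_single, Units.val_mul, Module.End.mul_apply, hT] at this
    simpa [U] using (congrArg Prod.fst this).symm

end Induced

section Relations

variable {F : Type} [Field F] {q : F} {n : ℕ}

theorem X_mul_Xinv (i : Fin n) : X F q i * Xinv F q i = 1 := by
  simpa [X, Xinv] using RingQuot.mkAlgHom_rel F (Rel.XXinv (F := F) (q := q) i)
theorem Xinv_mul_X (i : Fin n) : Xinv F q i * X F q i = 1 := by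
  simpa [X, Xinv] using RingQuot.mkAlgHom_rel F (Rel.XinvX (F := F) (q := q) i)
theorem X_mul_X (i j : Fin n) : X F q i * X F q j = X F q j * X F q i := by
  simpa [X, Xinv] using RingQuot.mkAlgHom_rel F (Rel.XX (F := F) (q := q) i j)
theorem C_mul_self (i : Fin n) : C F q i * C F q i = 1 := by
  simpa [C] using RingQuot.mkAlgHom_rel F (Rel.CC (F := F) (q := q) i)
theorem C_mul_C {i j : Fin n} (h : i ≠ j) : C F q i * C F q j = -(C F q j * C F q i) := by
  simpa [C] using RingQuot.mkAlgHom_rel F (Rel.Canti (F := F) (q := q) i j h)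
theorem C_mul_X (i : Fin n) : C F q i * X F q i = Xinv F q i * C F q i := by
  simpa [C, X, Xinv] using RingQuot.mkAlgHom_rel F (Rel.CX (F := F) (q := q) i)
theorem C_mul_X_of_ne {i j : Fin n} (h : i ≠ j) :
    C F q i * X F q j = X F q j * C F q i := by
  simpa [C, X] using RingQuot.mkAlgHom_rel F (Rel.CXo (F := F) (q := q) i j h)
theorem T_mul_self (i : Fin (n - 1)) : T F q i * T F q i = (q - q⁻¹) • T F q i + 1 := by
  simpa [T] using RingQuot.mkAlgHom_rel F (Rel.Tquad (F := F) (q := q) i)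
theorem T_braid {i j : Fin (n - 1)} (h : (j : ℕ) = (i : ℕ) + 1) :
    T F q i * T F q j * T F q i = T F q j * T F q i * T F q j := by
  simpa [T] using RingQuot.mkAlgHom_rel F (Rel.Tbraid (F := F) (q := q) i j h)
theorem T_mul_T {i j : Fin (n - 1)} (h : (i : ℕ) + 1 < (j : ℕ)) :
    T F q i * T F q j = T F q j * T F q i := by
  simpa [T] using RingQuot.mkAlgHom_rel F (Rel.TTfar (F := F) (q := q) i j h)
theorem T_mul_C_lo (i : Fin (n - 1)) : T F q i * C F q (lo i) = C F q (hi i) * T F q i := by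
  simpa [T, C] using RingQuot.mkAlgHom_rel F (Rel.TC (F := F) (q := q) i)
theorem T_mul_C {i : Fin (n - 1)} {j : Fin n} (h1 : j ≠ lo i) (h2 : j ≠ hi i) :
    T F q i * C F q j = C F q j * T F q i := by
  simpa [T, C] using RingQuot.mkAlgHom_rel F (Rel.TCo (F := F) (q := q) i j h1 h2)
theorem T_mul_X {i : Fin (n - 1)} {j : Fin n} (h1 : j ≠ lo i) (h2 : j ≠ hi i) :
    T F q i * X F q j = X F q j * T F q i := by
  simpa [T, X] using RingQuot.mkAlgHom_rel F (Rel.TXo (F := F) (q := q) i j h1 h2)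
theorem T_cross (i : Fin (n - 1)) :
    (T F q i + (q - q⁻¹) • (C F q (lo i) * C F q (hi i))) * X F q (lo i) * T F q i =
      X F q (hi i) := by
  simpa [T, C, X] using RingQuot.mkAlgHom_rel F (Rel.cross (F := F) (q := q) i)

/-- In any algebra, `T C = D T` and the quadratic relation determine `T D`. -/
theorem mul_eq_of_quadratic {A : Type} [Ring A] [Algebra F A] {ξ : F} {S C D : A}
    (ss : S * S = ξ • S + 1) (sc : S * C = D * S) : S * D = C * S + ξ • (D - C) := by
  have h1 : S * (D * S) = ξ • (D * S) + C := by
    rw [← sc, ← mul_assoc, ss, add_mul, one_mul, smul_mul_assoc, sc]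
  have h2 : S * (S - ξ • 1) = 1 := by
    rw [mul_sub, ss, mul_smul_comm, mul_one]; abel
  calc S * D = S * (D * (S * (S - ξ • 1))) := by rw [h2, mul_one]
    _ = (ξ • (D * S) + C) * (S - ξ • 1) := by rw [← h1]; noncomm_ring
    _ = ξ • (D * (S * (S - ξ • 1))) + C * (S - ξ • 1) := by
      rw [add_mul, smul_mul_assoc, mul_assoc]
    _ = _ := by
      rw [h2, mul_one, mul_sub, mul_smul_comm, mul_one]; module

theorem lo_ne_hi (i : Fin (n - 1)) : lo i ≠ hi i := by
  intro h
  have := congrArg Fin.val h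
  simp [lo, hi] at this

/-- Two commuting copies of the rank one relations: the commutator of the `T`'s intertwines. -/
theorem CrossRel.commutator_mul {A : Type} [Ring A] [Algebra F A] {ξ : F} {X Y : Aˣ}
    {C D S T : A} (h : CrossRel ξ X Y C D S) (tx : T * X = X * T) (ty : T * Y = Y * T)
    (tc : T * C = C * T) (td : T * D = D * T) :
    (S * T - T * S) * X = Y * (S * T - T * S) ∧ (S * T - T * S) * Y = X * (S * T - T * S) := by
  have txi : T * ↑X⁻¹ = ↑X⁻¹ * T := (mul_inv_eq_of_mul_eq tx).symm
  have tyi : T * ↑Y⁻¹ = ↑Y⁻¹ * T := (mul_inv_eq_of_mul_eq ty).symm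
  constructor <;>
  · simp only [sub_mul, mul_sub, add_mul, mul_add, mul_assoc, tx, ty, h.tx, h.ty,
      mul_mul_of_mul_eq h.tx, mul_mul_of_mul_eq h.ty, smul_mul_assoc, mul_smul_comm,
      mul_mul_of_mul_eq tx, mul_mul_of_mul_eq ty, mul_mul_of_mul_eq txi, mul_mul_of_mul_eq tyi,
      mul_mul_of_mul_eq tc, td]
    module

theorem CrossRel.commutator_mul_neg {A : Type} [Ring A] [Algebra F A] {ξ : F} {X Y : Aˣ}
    {C D S T : A} (h : CrossRel ξ X Y C D S) (tx : T * X = X * T) (ty : T * Y = Y * T)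
    (tc : T * C = C * T) (td : T * D = D * T) :
    (T * S - S * T) * X = Y * (T * S - S * T) ∧ (T * S - S * T) * Y = X * (T * S - S * T) := by
  obtain ⟨h1, h2⟩ := h.commutator_mul tx ty tc td
  rw [← neg_sub (S * T), neg_mul, mul_neg, neg_mul, mul_neg, h1, h2]
  exact ⟨rfl, rfl⟩

/-- The commutator of `T` with a distant Clifford generator intertwines. -/
theorem CrossRel.clifford_commutator_mul {A : Type} [Ring A] [Algebra F A] {ξ : F} {X Y : Aˣ}
    {C D E T : A} (h : CrossRel ξ X Y C D T) (ex : E * X = X * E) (ey : E * Y = Y * E)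
    (ec : E * C = -(C * E)) (ed : E * D = -(D * E)) :
    (T * E - E * T) * X = Y * (T * E - E * T) ∧ (T * E - E * T) * Y = X * (T * E - E * T) := by
  have exi : E * ↑X⁻¹ = ↑X⁻¹ * E := (mul_inv_eq_of_mul_eq ex).symm
  have eyi : E * ↑Y⁻¹ = ↑Y⁻¹ * E := (mul_inv_eq_of_mul_eq ey).symm
  have ecd : E * (C * D) = C * (D * E) := by
    rw [← mul_assoc, ec, neg_mul, mul_assoc, ed, mul_neg, neg_neg]
  constructor <;>
  · simp only [sub_mul, mul_sub, add_mul, mul_add, mul_assoc, ex, ey, h.tx, h.ty,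
      mul_mul_of_mul_eq h.tx, mul_mul_of_mul_eq h.ty, smul_mul_assoc, mul_smul_comm,
      mul_mul_of_mul_eq ex, mul_mul_of_mul_eq ey, mul_mul_of_mul_eq exi, mul_mul_of_mul_eq eyi,
      ecd]
    module

/-- The compatibility needed to extend `T` from `1 ⊗ V`. -/
theorem defect_compat {A : Type} [Ring A] [Algebra F A] {ξ : F} {X Y : Aˣ} {C D : A}
    (xy : (X : A) * Y = Y * X) (cx : C * X = ↑X⁻¹ * C) (cy : C * Y = Y * C)
    (dx : D * X = X * D) (dy : D * Y = ↑Y⁻¹ * D) :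
    (Y : A) * (ξ • ((Y : A) - ↑Y⁻¹ * (C * D))) + -(ξ • ((Y : A) + ↑X⁻¹ * (C * D))) * Y =
      X * -(ξ • ((Y : A) + ↑X⁻¹ * (C * D))) + ξ • ((Y : A) - ↑Y⁻¹ * (C * D)) * X := by
  have cyi : C * ↑Y⁻¹ = ↑Y⁻¹ * C := (mul_inv_eq_of_mul_eq cy).symm
  have xiyi : (↑X⁻¹ : A) * ↑Y⁻¹ = ↑Y⁻¹ * ↑X⁻¹ :=
    (mul_inv_eq_of_mul_eq (mul_inv_eq_of_mul_eq xy.symm)).symm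
  simp only [neg_mul, mul_neg, smul_mul_assoc, sub_mul, add_mul, mul_assoc,
    mul_smul_comm, mul_sub, mul_add, Units.mul_inv_cancel_left, cx, cy, dx, dy,
    mul_mul_of_mul_eq cx, mul_mul_of_mul_eq cyi, mul_mul_of_mul_eq xiyi, xy]
  module

theorem defect_commute {A : Type} [Ring A] [Algebra F A] {ξ : F} {X Y Z : Aˣ} {C D : A}
    (xz : (X : A) * Z = Z * X) (yz : (Y : A) * Z = Z * Y) (cz : C * Z = Z * C)
    (dz : D * Z = Z * D) :
    -(ξ • ((Y : A) + ↑X⁻¹ * (C * D))) * Z = Z * -(ξ • ((Y : A) + ↑X⁻¹ * (C * D))) ∧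
    ξ • ((Y : A) - ↑Y⁻¹ * (C * D)) * Z = Z * ξ • ((Y : A) - ↑Y⁻¹ * (C * D)) := by
  have xiz : (↑X⁻¹ : A) * Z = Z * ↑X⁻¹ := mul_inv_eq_of_mul_eq xz.symm
  have yiz : (↑Y⁻¹ : A) * Z = Z * ↑Y⁻¹ := mul_inv_eq_of_mul_eq yz.symm
  constructor <;>
  simp only [neg_mul, mul_neg, smul_mul_assoc, sub_mul, add_mul, mul_assoc,
    mul_smul_comm, mul_sub, mul_add, cz, dz, yz, mul_mul_of_mul_eq cz, mul_mul_of_mul_eq xiz,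
    mul_mul_of_mul_eq yiz]

end Relations

section Representation

variable {F : Type} [Field F] {n : ℕ} {V : Type} [AddCommGroup V] [Module F V]
  {ξ : F} {c : Fin n → Module.End F V} {t : Fin (n - 1) → Module.End F V}

/-- The relations of the finite Hecke–Clifford superalgebra `H^fn_n`. -/
structure FinRel {A : Type} [Ring A] [Algebra F A] (ξ : F) (c : Fin n → A)
    (t : Fin (n - 1) → A) : Prop where
  cc : ∀ i, c i * c i = 1
  anti : ∀ {i j}, i ≠ j → c i * c j = -(c j * c i)
  quad : ∀ i, t i * t i = ξ • t i + 1
  braid : ∀ {i j : Fin (n - 1)}, (j : ℕ) = (i : ℕ) + 1 → t i * t j * t i = t j * t i * t j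
  far : ∀ {i j : Fin (n - 1)}, (i : ℕ) + 1 < (j : ℕ) → t i * t j = t j * t i
  tc : ∀ i, t i * c (lo i) = c (hi i) * t i
  tc_of_ne : ∀ {i j}, j ≠ lo i → j ≠ hi i → t i * c j = c j * t i

theorem FinRel.tc_hi (hr : FinRel ξ c t) (i : Fin (n - 1)) :
    t i * c (hi i) = c (lo i) * t i + ξ • (c (hi i) - c (lo i)) :=
  mul_eq_of_quadratic (hr.quad i) (hr.tc i)

/-- The representation space: `F[X_1^{±1}, …, X_n^{±1}] ⊗ V`. -/
abbrev RepSpace (V : Type) [AddCommGroup V] (n : ℕ) : Type := (Fin n → ℤ) →₀ V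

noncomputable def opX (F : Type) [Field F] (V : Type) [AddCommGroup V] [Module F V] (j : Fin n) : (Module.End F (RepSpace V n))ˣ :=
  shift (Pi.single j 1)

noncomputable def opC (c : Fin n → Module.End F V) (j : Fin n) : Module.End F (RepSpace V n) :=
  Finsupp.lsum F fun α => Finsupp.lsingle (Function.update α j (-α j)) ∘ₗ
    c j

theorem opX_single (j : Fin n) (α : Fin n → ℤ) (v : V) :
    (opX F V j).val (Finsupp.single α v) = Finsupp.single (Pi.single j 1 + α) v :=
  shift_single _ _ _

theorem opX_inv_single (j : Fin n) (α : Fin n → ℤ) (v : V) :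
    (opX F V j)⁻¹.val (Finsupp.single α v) = Finsupp.single (-Pi.single j 1 + α) v := by
  rw [opX, ← shift_neg, shift_single]

theorem opC_single (j : Fin n) (α : Fin n → ℤ) (v : V) :
    opC c j (Finsupp.single α v) =
      Finsupp.single (Function.update α j (-α j)) (c j v) := by
  rw [opC, Finsupp.lsum_single]
  rfl

theorem opX_mul_opX (i j : Fin n) :
    (opX F V i).val * (opX F V j).val = (opX F V j).val * (opX F V i).val :=
  congrArg Units.val (shift_comm _ _)

theorem opC_mul_self (hr : FinRel ξ c t) (j : Fin n) : opC c j * opC c j = 1 := by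
  apply end_ext
  intro α v
  have h := LinearMap.congr_fun (hr.cc j) v
  rw [Module.End.mul_apply, Module.End.one_apply] at h
  rw [Module.End.mul_apply, opC_single, opC_single, h, Module.End.one_apply]
  simp

theorem opC_mul_opC (hr : FinRel ξ c t) {i j : Fin n} (h : i ≠ j) :
    opC c i * opC c j = -(opC c j * opC c i) := by
  apply end_ext
  intro α v
  have h' := LinearMap.congr_fun (hr.anti h) v
  rw [LinearMap.neg_apply, Module.End.mul_apply, Module.End.mul_apply] at h'
  rw [LinearMap.neg_apply, Module.End.mul_apply, Module.End.mul_apply, opC_single, opC_single,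
    opC_single, opC_single, h', Finsupp.single_neg, Function.update_of_ne h,
    Function.update_of_ne h.symm, Function.update_comm h]

theorem opC_mul_opX (j : Fin n) : opC c j * (opX F V j).val = (opX F V j)⁻¹.val * opC c j := by
  apply end_ext
  intro α v
  simp only [Module.End.mul_apply, opC_single, opX_single, opX_inv_single]
  congr 1
  ext k
  by_cases hk : k = j
  · subst hk; simp; ring
  · simp [hk]

theorem opC_mul_opX_of_ne {i j : Fin n} (h : i ≠ j) :
    opC c i * (opX F V j).val = (opX F V j).val * opC c i := by
  apply end_ext
  intro α v
  simp only [Module.End.mul_apply, opC_single, opX_single]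
  congr 1
  ext k
  by_cases hk : k = i
  · subst hk; simp [h]
  · simp [hk]

theorem exists_opT (hr : FinRel ξ c t) (i : Fin (n - 1)) : ∃ T' : Module.End F (RepSpace V n),
    (∀ v, T' (Finsupp.single 0 v) = Finsupp.single 0 (t i v)) ∧
    CrossRel ξ (opX F V (lo i)) (opX F V (hi i)) (opC c (lo i)) (opC c (hi i)) T' ∧
    ∀ j, j ≠ lo i → j ≠ hi i → T' * (opX F V j).val = (opX F V j).val * T' := by
  have hne := lo_ne_hi i
  obtain ⟨D, hDlo, hDhi, hDo⟩ : ∃ D : Fin n → Module.End F (RepSpace V n),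
      D (lo i) = -(ξ • ((opX F V (hi i)).val +
        (opX F V (lo i))⁻¹.val * (opC c (lo i) * opC c (hi i)))) ∧
      D (hi i) = ξ • ((opX F V (hi i)).val -
        (opX F V (hi i))⁻¹.val * (opC c (lo i) * opC c (hi i))) ∧
      ∀ j, j ≠ lo i → j ≠ hi i → D j = 0 :=
    ⟨fun j => if j = lo i then _ else if j = hi i then _ else 0, if_pos rfl,
      (if_neg hne.symm).trans (if_pos rfl), fun j h1 h2 => (if_neg h1).trans (if_neg h2)⟩
  have hDX : ∀ j k, j ≠ lo i → j ≠ hi i → D k * (opX F V j).val = (opX F V j).val * D k := by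
    intro j k h1 h2
    obtain ⟨e1, e2⟩ := defect_commute (ξ := ξ) (opX_mul_opX (F := F) (V := V) (lo i) j)
      (opX_mul_opX (hi i) j) (opC_mul_opX_of_ne (c := c) h1.symm)
      (opC_mul_opX_of_ne (c := c) h2.symm)
    by_cases hk : k = lo i
    · rw [hk, hDlo]; exact e1
    by_cases hk' : k = hi i
    · rw [hk', hDhi]; exact e2
    rw [hDo k hk hk', zero_mul, mul_zero]
  have hlohi : (opX F V (hi i)).val * D (hi i) + D (lo i) * (opX F V (hi i)).val =
      (opX F V (lo i)).val * D (lo i) + D (hi i) * (opX F V (lo i)).val := by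
    rw [hDlo, hDhi]
    exact defect_compat (opX_mul_opX _ _) (opC_mul_opX _) (opC_mul_opX_of_ne hne)
      (opC_mul_opX_of_ne hne.symm) (opC_mul_opX _)
  have hcompat : ∀ j k, j ≠ k →
      (opX F V (Equiv.swap (lo i) (hi i) j)).val * D k + D j * (opX F V k).val =
      (opX F V (Equiv.swap (lo i) (hi i) k)).val * D j + D k * (opX F V j).val := by
    intro j k hjk
    by_cases j1 : j = lo i
    · subst j1
      rw [Equiv.swap_apply_left]
      by_cases k2 : k = hi i
      · subst k2
        rw [Equiv.swap_apply_right, hlohi]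
      · rw [Equiv.swap_apply_of_ne_of_ne hjk.symm k2, hDo k hjk.symm k2, hDX k _ hjk.symm k2,
          mul_zero, zero_mul, zero_add, add_zero]
    by_cases j2 : j = hi i
    · subst j2
      rw [Equiv.swap_apply_right]
      by_cases k1 : k = lo i
      · subst k1
        rw [Equiv.swap_apply_left, hlohi]
      · rw [Equiv.swap_apply_of_ne_of_ne k1 hjk.symm, hDo k k1 hjk.symm, hDX k _ k1 hjk.symm,
          mul_zero, zero_mul, zero_add, add_zero]
    · rw [Equiv.swap_apply_of_ne_of_ne j1 j2, hDo j j1 j2, hDX j _ j1 j2,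
        mul_zero, zero_mul, zero_add, add_zero]
  obtain ⟨T', h0, hT⟩ := exists_twisted_extension (Equiv.swap (lo i) (hi i)) D hcompat (t i)
  change ∀ j, T' * (opX F V j).val = (opX F V _).val * T' + D j at hT
  refine ⟨T', h0, ⟨opX_mul_opX _ _, opC_mul_self hr _, opC_mul_self hr _, opC_mul_opC hr hne.symm,
    opC_mul_opX _, opC_mul_opX_of_ne hne, opC_mul_opX_of_ne hne.symm, opC_mul_opX _, ?_, ?_⟩, ?_⟩
  · rw [hT, hDlo, Equiv.swap_apply_left]; module
  · rw [hT, hDhi, Equiv.swap_apply_right]; module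
  · intro j h1 h2
    rw [hT, hDo j h1 h2, Equiv.swap_apply_of_ne_of_ne h1 h2, add_zero]

noncomputable def opT (hr : FinRel ξ c t) (i : Fin (n - 1)) : Module.End F (RepSpace V n) :=
  (exists_opT hr i).choose

theorem opT_single (hr : FinRel ξ c t) (i : Fin (n - 1)) (v : V) :
    opT hr i (Finsupp.single 0 v) = Finsupp.single 0 (t i v) :=
  (exists_opT hr i).choose_spec.1 v

theorem opT_crossRel (hr : FinRel ξ c t) (i : Fin (n - 1)) :
    CrossRel ξ (opX F V (lo i)) (opX F V (hi i)) (opC c (lo i)) (opC c (hi i)) (opT hr i) :=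
  (exists_opT hr i).choose_spec.2.1

theorem opT_mul_opX (hr : FinRel ξ c t) {i : Fin (n - 1)} {j : Fin n} (h1 : j ≠ lo i) (h2 : j ≠ hi i) :
    opT hr i * (opX F V j).val = (opX F V j).val * opT hr i :=
  (exists_opT hr i).choose_spec.2.2 j h1 h2

theorem opC_single_zero (j : Fin n) (v : V) :
    opC c j (Finsupp.single 0 v) = Finsupp.single 0 (c j v) := by
  rw [opC_single]; simp

/-- `R` restricts to `r` on `1 ⊗ V`. -/
def RestrictsTo (R : Module.End F (RepSpace V n)) (r : Module.End F V) : Prop :=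
  ∀ v, R (Finsupp.single 0 v) = Finsupp.single 0 (r v)

namespace RestrictsTo

variable {R S : Module.End F (RepSpace V n)} {r s : Module.End F V}

theorem mul (hR : RestrictsTo R r) (hS : RestrictsTo S s) : RestrictsTo (R * S) (r * s) :=
  fun v => by rw [Module.End.mul_apply, Module.End.mul_apply, hS, hR]

theorem add (hR : RestrictsTo R r) (hS : RestrictsTo S s) : RestrictsTo (R + S) (r + s) :=
  fun v => by rw [LinearMap.add_apply, LinearMap.add_apply, hS, hR, Finsupp.single_add]

theorem sub (hR : RestrictsTo R r) (hS : RestrictsTo S s) : RestrictsTo (R - S) (r - s) :=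
  fun v => by rw [LinearMap.sub_apply, LinearMap.sub_apply, hS, hR, Finsupp.single_sub]

theorem smul (a : F) (hR : RestrictsTo R r) : RestrictsTo (a • R) (a • r) :=
  fun v => by rw [LinearMap.smul_apply, LinearMap.smul_apply, hR, Finsupp.smul_single]

theorem one : RestrictsTo (1 : Module.End F (RepSpace V n)) 1 := fun _ => rfl

theorem eq_of_intertwines (hR : RestrictsTo R r) (hS : RestrictsTo S s) (hrs : r = s)
    (h : ∀ j, ∃ U : (Module.End F (RepSpace V n))ˣ,
      (R - S) * (opX F V j).val = U.val * (R - S)) : R = S := by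
  subst hrs
  exact sub_eq_zero.1 (eq_zero_of_intertwines
    (fun v => by rw [LinearMap.sub_apply, hR, hS, sub_self]) h)

end RestrictsTo

theorem restrictsTo_opT (hr : FinRel ξ c t) (i : Fin (n - 1)) : RestrictsTo (opT hr i) (t i) :=
  opT_single hr i

theorem restrictsTo_opC (i : Fin n) : RestrictsTo (opC c i) (c i) := opC_single_zero i

theorem opT_mul_opC_lo (hr : FinRel ξ c t) (i : Fin (n - 1)) :
    opT hr i * opC c (lo i) = opC c (hi i) * opT hr i := by
  refine RestrictsTo.eq_of_intertwines ((restrictsTo_opT hr i).mul (restrictsTo_opC _))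
    ((restrictsTo_opC _).mul (restrictsTo_opT hr i)) (hr.tc i) ?_
  · intro j
    by_cases h1 : j = lo i
    · exact ⟨_, by rw [h1]; exact (opT_crossRel hr i).tc_mul_x⟩
    by_cases h2 : j = hi i
    · exact ⟨_, by rw [h2]; exact (opT_crossRel hr i).tc_mul_y⟩
    refine ⟨opX F V j, ?_⟩
    simp only [sub_mul, mul_sub, mul_assoc, opC_mul_opX_of_ne (Ne.symm h1),
      mul_mul_of_mul_eq (opT_mul_opX hr h1 h2), mul_mul_of_mul_eq (opC_mul_opX_of_ne (Ne.symm h2)),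
      opT_mul_opX hr h1 h2]

theorem opT_mul_opC_hi (hr : FinRel ξ c t) (i : Fin (n - 1)) : opT hr i * opC c (hi i) =
    opC c (lo i) * opT hr i + ξ • (opC c (hi i) - opC c (lo i)) := by
  rw [← sub_eq_iff_eq_add']
  refine RestrictsTo.eq_of_intertwines (((restrictsTo_opT hr i).mul (restrictsTo_opC _)).sub ((restrictsTo_opC _).mul (restrictsTo_opT hr i)))
    (((restrictsTo_opC _).sub (restrictsTo_opC _)).smul _) (sub_eq_iff_eq_add'.2 (hr.tc_hi i)) ?_
  · intro j
    by_cases h1 : j = lo i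
    · exact ⟨_, by rw [h1]; exact (opT_crossRel hr i).td_mul_x⟩
    by_cases h2 : j = hi i
    · exact ⟨_, by rw [h2]; exact (opT_crossRel hr i).td_mul_y⟩
    refine ⟨opX F V j, ?_⟩
    simp only [sub_mul, mul_sub, mul_assoc, opC_mul_opX_of_ne (Ne.symm h1),
      mul_mul_of_mul_eq (opT_mul_opX hr h1 h2), mul_mul_of_mul_eq (opC_mul_opX_of_ne (Ne.symm h1)),
      opT_mul_opX hr h1 h2, opC_mul_opX_of_ne (Ne.symm h2), smul_mul_assoc, mul_smul_comm]

theorem opT_mul_self (hr : FinRel ξ c t) (i : Fin (n - 1)) :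
    opT hr i * opT hr i = ξ • opT hr i + 1 := by
  rw [← sub_eq_iff_eq_add']
  refine RestrictsTo.eq_of_intertwines (((restrictsTo_opT hr i).mul (restrictsTo_opT hr i)).sub ((restrictsTo_opT hr i).smul _))
    RestrictsTo.one (sub_eq_iff_eq_add'.2 (hr.quad i)) ?_
  · intro j
    by_cases h1 : j = lo i
    · exact ⟨_, by rw [h1]; exact (opT_crossRel hr i).tquad_mul_x (opT_mul_opC_lo hr i) (opT_mul_opC_hi hr i)⟩
    by_cases h2 : j = hi i
    · exact ⟨_, by rw [h2]; exact (opT_crossRel hr i).tquad_mul_y (opT_mul_opC_lo hr i) (opT_mul_opC_hi hr i)⟩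
    refine ⟨opX F V j, ?_⟩
    simp only [sub_mul, mul_sub, mul_assoc, opT_mul_opX hr h1 h2,
      mul_mul_of_mul_eq (opT_mul_opX hr h1 h2), smul_mul_assoc, mul_smul_comm, mul_one, one_mul]

theorem opT_mul_opC (hr : FinRel ξ c t) {i : Fin (n - 1)} {j : Fin n} (h1 : j ≠ lo i) (h2 : j ≠ hi i) :
    opT hr i * opC c j = opC c j * opT hr i := by
  have h := opT_crossRel hr i
  obtain ⟨e1, e2⟩ := h.clifford_commutator_mul (opC_mul_opX_of_ne h1) (opC_mul_opX_of_ne h2)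
    (opC_mul_opC hr h1) (opC_mul_opC hr h2)
  refine RestrictsTo.eq_of_intertwines ((restrictsTo_opT hr i).mul (restrictsTo_opC _))
    ((restrictsTo_opC _).mul (restrictsTo_opT hr i)) (hr.tc_of_ne h1 h2) ?_
  · intro k
    by_cases k1 : k = lo i
    · exact ⟨_, by rw [k1]; exact e1⟩
    by_cases k2 : k = hi i
    · exact ⟨_, by rw [k2]; exact e2⟩
    have hk := opT_mul_opX hr k1 k2
    by_cases hj : j = k
    · subst hj
      have hk' : opT hr i * (opX F V j)⁻¹.val = (opX F V j)⁻¹.val * opT hr i :=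
        (mul_inv_eq_of_mul_eq hk).symm
      refine ⟨(opX F V j)⁻¹, ?_⟩
      simp only [sub_mul, mul_sub, mul_assoc, opC_mul_opX, mul_mul_of_mul_eq hk', hk,
        mul_mul_of_mul_eq (opC_mul_opX j)]
    · refine ⟨opX F V k, ?_⟩
      simp only [sub_mul, mul_sub, mul_assoc, opC_mul_opX_of_ne hj, mul_mul_of_mul_eq hk, hk,
        mul_mul_of_mul_eq (opC_mul_opX_of_ne hj)]

theorem opT_mul_opT (hr : FinRel ξ c t) {i j : Fin (n - 1)} (hij : (i : ℕ) + 1 < (j : ℕ)) :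
    opT hr i * opT hr j = opT hr j * opT hr i := by
  have n1 : lo i ≠ lo j := by simp only [lo, Ne, Fin.mk.injEq]; omega
  have n2 : lo i ≠ hi j := by simp only [lo, hi, Ne, Fin.mk.injEq]; omega
  have n3 : hi i ≠ lo j := by simp only [lo, hi, Ne, Fin.mk.injEq]; omega
  have n4 : hi i ≠ hi j := by simp only [lo, hi, Ne, Fin.mk.injEq]; omega
  obtain ⟨a1, a2⟩ := (opT_crossRel hr i).commutator_mul (opT_mul_opX hr n1 n2)
    (opT_mul_opX hr n3 n4) (opT_mul_opC hr n1 n2) (opT_mul_opC hr n3 n4)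
  obtain ⟨b1, b2⟩ := (opT_crossRel hr j).commutator_mul_neg (opT_mul_opX hr n1.symm n3.symm)
    (opT_mul_opX hr n2.symm n4.symm) (opT_mul_opC hr n1.symm n3.symm) (opT_mul_opC hr n2.symm n4.symm)
  refine RestrictsTo.eq_of_intertwines ((restrictsTo_opT hr i).mul (restrictsTo_opT hr j))
    ((restrictsTo_opT hr j).mul (restrictsTo_opT hr i)) (hr.far hij) ?_
  · intro k
    by_cases k1 : k = lo i
    · exact ⟨_, by rw [k1]; exact a1⟩
    by_cases k2 : k = hi i
    · exact ⟨_, by rw [k2]; exact a2⟩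
    by_cases k3 : k = lo j
    · exact ⟨_, by rw [k3]; exact b1⟩
    by_cases k4 : k = hi j
    · exact ⟨_, by rw [k4]; exact b2⟩
    refine ⟨opX F V k, ?_⟩
    have h1 := opT_mul_opX hr k1 k2
    have h2 := opT_mul_opX hr k3 k4
    simp only [sub_mul, mul_sub, mul_assoc, h1, h2, mul_mul_of_mul_eq h1, mul_mul_of_mul_eq h2]

theorem opT_braid (hr : FinRel ξ c t) {i j : Fin (n - 1)} (hij : (j : ℕ) = (i : ℕ) + 1) :
    opT hr i * opT hr j * opT hr i = opT hr j * opT hr i * opT hr j := by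
  have e : lo j = hi i := by ext; simp [lo, hi, hij]
  have n1 : lo i ≠ lo j := by simp only [lo, Ne, Fin.mk.injEq]; omega
  have n2 : lo i ≠ hi j := by simp only [lo, hi, Ne, Fin.mk.injEq]; omega
  have n4 : hi i ≠ hi j := by simp only [lo, hi, Ne, Fin.mk.injEq]; omega
  have key : NeighbourRel ξ (opX F V (lo i)) (opX F V (hi i)) (opX F V (hi j)) (opC c (lo i))
      (opC c (hi i)) (opC c (hi j)) (opT hr i) (opT hr j) :=
    { left := opT_crossRel hr i
      right := e ▸ opT_crossRel hr j
      cz := opC_mul_opX_of_ne n2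
      ex := opC_mul_opX_of_ne n2.symm
      sz := opT_mul_opX hr n2.symm n4.symm
      tx := opT_mul_opX hr n1 n2
      ec := opC_mul_opC hr n2.symm
      se := opT_mul_opC hr n2.symm n4.symm
      tc := opT_mul_opC hr n1 n2
      sc := opT_mul_opC_lo hr i
      sd := opT_mul_opC_hi hr i
      td := e ▸ opT_mul_opC_lo hr j
      te := e ▸ opT_mul_opC_hi hr j
      ss := opT_mul_self hr i
      tt := opT_mul_self hr j }
  obtain ⟨a1, a2, a3⟩ := key.braid_mul
  refine RestrictsTo.eq_of_intertwines (((restrictsTo_opT hr i).mul (restrictsTo_opT hr j)).mul (restrictsTo_opT hr i))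
    (((restrictsTo_opT hr j).mul (restrictsTo_opT hr i)).mul (restrictsTo_opT hr j)) (hr.braid hij) ?_
  · intro k
    by_cases k1 : k = lo i
    · exact ⟨_, by rw [k1]; exact a1⟩
    by_cases k2 : k = hi i
    · exact ⟨_, by rw [k2]; exact a2⟩
    by_cases k3 : k = hi j
    · exact ⟨_, by rw [k3]; exact a3⟩
    refine ⟨opX F V k, ?_⟩
    have h1 := opT_mul_opX hr k1 k2
    have h2 := opT_mul_opX hr (e.symm ▸ k2) k3
    simp only [sub_mul, mul_sub, mul_assoc, h1, h2, mul_mul_of_mul_eq h1, mul_mul_of_mul_eq h2]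

theorem exists_opGen {q : F} (hr : FinRel (q - q⁻¹) c t) :
    ∃ ρ : FA F n →ₐ[F] Module.End F (RepSpace V n),
    (∀ ⦃a b : FA F n⦄, Rel F q n a b → ρ a = ρ b) ∧
    (∀ j, ρ (fx F j) = (opX F V j).val) ∧ (∀ j, ρ (fxinv F j) = (opX F V j)⁻¹.val) ∧
    (∀ j, ρ (fc F j) = opC c j) ∧ ∀ i, ρ (ft F i) = opT hr i := by
  let g : Gen n → Module.End F (RepSpace V n)
    | Gen.X j => (opX F V j).val
    | Gen.Xinv j => (opX F V j)⁻¹.val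
    | Gen.C j => opC c j
    | Gen.T i => opT hr i
  have hx : ∀ j, FreeAlgebra.lift F g (fx F j) = (opX F V j).val := fun j =>
    FreeAlgebra.lift_ι_apply _ _
  have hxi : ∀ j, FreeAlgebra.lift F g (fxinv F j) = (opX F V j)⁻¹.val := fun j =>
    FreeAlgebra.lift_ι_apply _ _
  have hc : ∀ j, FreeAlgebra.lift F g (fc F j) = opC c j := fun j =>
    FreeAlgebra.lift_ι_apply _ _
  have ht : ∀ j, FreeAlgebra.lift F g (ft F j) = opT hr j := fun j =>
    FreeAlgebra.lift_ι_apply _ _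
  refine ⟨FreeAlgebra.lift F g, fun a b hab => ?_, hx, hxi, hc, ht⟩
  have hxi' : ∀ i j : Fin n, (opX F V i).val * (opX F V j)⁻¹.val = (opX F V j)⁻¹.val * (opX F V i).val :=
    fun i j => (mul_inv_eq_of_mul_eq (opX_mul_opX i j)).symm
  cases hab <;> simp only [map_mul, map_add, map_neg, map_smul, map_one, hx, hxi, hc, ht]
  case XXinv => exact Units.mul_inv _
  case XinvX => exact Units.inv_mul _
  case XX => exact opX_mul_opX _ _
  case XiXi i j => exact mul_inv_eq_of_mul_eq (hxi' i j).symm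
  case XXi => exact hxi' _ _
  case CC => exact opC_mul_self hr _
  case Canti h => exact opC_mul_opC hr h
  case CX => exact opC_mul_opX _
  case CXi j =>
    rw [Units.mul_inv_eq_iff_eq_mul, mul_assoc, opC_mul_opX, Units.mul_inv_cancel_left]
  case CXo h => exact opC_mul_opX_of_ne h
  case CXio h => exact (mul_inv_eq_of_mul_eq (opC_mul_opX_of_ne h)).symm
  case Tquad => exact opT_mul_self hr _
  case Tbraid h => exact opT_braid hr h
  case TTfar h => exact opT_mul_opT hr h
  case TC => exact opT_mul_opC_lo hr _
  case TCo h1 h2 => exact opT_mul_opC hr h1 h2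
  case TXo h1 h2 => exact opT_mul_opX hr h1 h2
  case TXio h1 h2 => exact (mul_inv_eq_of_mul_eq (opT_mul_opX hr h1 h2)).symm
  case cross => exact (opT_crossRel hr _).cross (opT_mul_self hr _)

end Representation

section PBW

variable {F : Type} [Field F] (q : F) (n : ℕ)

theorem FinRel.map {A B : Type} [Ring A] [Algebra F A] [Ring B] [Algebra F B] {n : ℕ} {ξ : F}
    {c : Fin n → A} {t : Fin (n - 1) → A} (hr : FinRel ξ c t) (φ : A →ₐ[F] B) :
    FinRel ξ (fun i => φ (c i)) (fun i => φ (t i)) where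
  cc i := by rw [← map_mul, hr.cc, map_one]
  anti h := by rw [← map_mul, hr.anti h, map_neg, map_mul]
  quad i := by rw [← map_mul, hr.quad, map_add, map_smul, map_one]
  braid h := by simp only [← map_mul, hr.braid h]
  far h := by rw [← map_mul, hr.far h, map_mul]
  tc i := by rw [← map_mul, hr.tc, map_mul]
  tc_of_ne h1 h2 := by rw [← map_mul, hr.tc_of_ne h1 h2, map_mul]

theorem finRel : FinRel (A := H F q n) (q - q⁻¹) (fun i => C F q i) (fun i => T F q i) :=
  ⟨C_mul_self, C_mul_C, T_mul_self, T_braid, T_mul_T, T_mul_C_lo, T_mul_C⟩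

/-- The coefficient map expressing the linear independence of the `X^γ` over `H^fn_n`. -/
theorem exists_coeff : ∃ Φ : H F q n →ₗ[F] RepSpace (H F q n) n,
    ∀ (γ : Fin n → ℤ), ∀ b ∈ Hfin F q n, Φ (Xmon F q γ * b) = Finsupp.single γ b := by
  obtain ⟨ρ₀, hrel, hx, hxi, hc, ht⟩ := exists_opGen ((finRel q n).map (Algebra.lmul F (H F q n)))
  let ρ : H F q n →ₐ[F] Module.End F (RepSpace (H F q n) n) :=
    RingQuot.liftAlgHom F ⟨ρ₀, hrel⟩
  have hρ : ∀ a, ρ (RingQuot.mkAlgHom F (Rel F q n) a) = ρ₀ a := fun a =>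
    RingQuot.liftAlgHom_mkAlgHom_apply _ _ _ _
  have hX : ∀ i, ρ (X F q i) = (shift (Pi.single i 1)).val := fun i => (hρ _).trans (hx i)
  have hXi : ∀ i, ρ (Xinv F q i) = (shift (-Pi.single i 1)).val := fun i => by
    rw [shift_neg]; exact (hρ _).trans (hxi i)
  have hpow : ∀ (β : Fin n → ℤ) (m : ℕ),
      (shift β : (Module.End F (RepSpace (H F q n) n))ˣ).val ^ m = (shift (m • β)).val := by
    intro β m
    induction m with
    | zero => rw [pow_zero, zero_smul, shift_zero]; rfl
    | succ m ih => rw [pow_succ, ih, succ_nsmul, shift_add, Units.val_mul]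
  have hXZ : ∀ i a, ρ (XZ F q i a) = (shift (Pi.single i a)).val := by
    intro i a
    rw [XZ]
    split_ifs with ha
    · rw [map_pow, hX, hpow, ← Pi.single_smul, nsmul_one, Int.toNat_of_nonneg ha]
    · rw [map_pow, hXi, hpow, smul_neg, ← Pi.single_smul, nsmul_one,
        Int.toNat_of_nonneg (by omega), ← Pi.single_neg, neg_neg]
  have hmon : ∀ γ, ρ (Xmon F q γ) = (shift γ).val := by
    intro γ
    have : ∀ l : List (Fin n), ρ ((l.map fun i => XZ F q i (γ i)).prod) =
        (shift (l.map fun i => Pi.single i (γ i)).sum).val := by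
      intro l
      induction l with
      | nil => simp [shift_zero]
      | cons i l ih => 
        rw [List.map_cons, List.prod_cons, map_mul, ih, hXZ, List.map_cons, List.sum_cons,
          shift_add, Units.val_mul]
    have hsum : ((List.finRange n).map fun i => (Pi.single i (γ i) : Fin n → ℤ)).sum = γ := by
      rw [← List.ofFn_eq_map, List.sum_ofFn, Finset.univ_sum_single]
    rw [Xmon, this, hsum]
  have hfin : ∀ b ∈ Hfin F q n, ∀ v : H F q n,
      ρ b (Finsupp.single 0 v) = Finsupp.single 0 (b * v) := by
    intro b hb
    induction hb using Algebra.adjoin_induction with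
    | mem x hx =>
      intro v
      rcases hx with ⟨i, rfl⟩ | ⟨i, rfl⟩
      · rw [show ρ (C F q i) = _ from (hρ _).trans (hc i)]
        exact opC_single_zero i v
      · rw [show ρ (T F q i) = _ from (hρ _).trans (ht i)]
        exact opT_single _ i v
    | algebraMap r => 
      intro v
      rw [AlgHom.commutes, ← Algebra.smul_def, Module.algebraMap_end_apply, Finsupp.smul_single]
    | add x y _ _ ihx ihy =>
      intro v
      rw [map_add, LinearMap.add_apply, ihx, ihy, add_mul, Finsupp.single_add]
    | mul x y _ _ ihx ihy =>
      intro v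
      rw [map_mul, Module.End.mul_apply, ihy, ihx, mul_assoc]
  refine ⟨LinearMap.applyₗ (Finsupp.single 0 1) ∘ₗ ρ.toLinearMap, fun γ b hb => ?_⟩
  show ρ (Xmon F q γ * b) (Finsupp.single 0 1) = _
  rw [map_mul, Module.End.mul_apply, hfin b hb, hmon, shift_single, mul_one, add_zero]

end PBW

section Abstract

variable {F A : Type} [Field F] [Ring A] [Algebra F A]

/-- The defining relations of `H_n`, for families indexed by `ℕ`. Relations which also hold
for the zero elements placed outside the range carry no bounds. -/
structure HCRel (ξ : F) (n : ℕ) (x : ℕ → Aˣ) (C T : ℕ → A) : Prop where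
  x_comm : ∀ i j, (x i : A) * x j = x j * x i
  C_sq : ∀ {i}, i < n → C i * C i = 1
  C_anti : ∀ {i j}, i ≠ j → C i * C j = -(C j * C i)
  C_x : ∀ i, C i * x i = ↑(x i)⁻¹ * C i
  C_x_ne : ∀ {i j}, i ≠ j → C i * x j = x j * C i
  T_sq : ∀ {i}, i + 1 < n → T i * T i = ξ • T i + 1
  braid : ∀ i, T i * T (i + 1) * T i = T (i + 1) * T i * T (i + 1)
  far : ∀ {i j}, i + 1 < j → T i * T j = T j * T i
  T_C : ∀ i, T i * C i = C (i + 1) * T i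
  T_C_ne : ∀ {i j}, j ≠ i → j ≠ i + 1 → T i * C j = C j * T i
  T_x_ne : ∀ {i j}, j ≠ i → j ≠ i + 1 → T i * x j = x j * T i
  cross : ∀ {i}, i + 1 < n → (T i + ξ • (C i * C (i + 1))) * x i * T i = x (i + 1)

/-- The element `T_i' = T_i + ξ C_i C_{i+1}`. -/
def Tp (ξ : F) (C T : ℕ → A) (i : ℕ) : A := T i + ξ • (C i * C (i + 1))

/-- The elements `f_i` of a family indexed by `ℕ`. -/
def fam (ξ : F) (C T : ℕ → A) (f : A) : ℕ → A
  | 0 => f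
  | k + 1 => Tp ξ C T k * fam ξ C T f k * T k

/-- The subalgebra generated by the `x_i^{±1}` with `i < k`. -/
def polyAlg (F : Type) [Field F] [Algebra F A] (x : ℕ → Aˣ) (k : ℕ) : Subalgebra F A :=
  Algebra.adjoin F {a | ∃ i < k, a = x i ∨ a = ↑(x i)⁻¹}

/-- The subalgebra generated by the `C_i` with `i < k` and the `T_i` with `i + 1 < k`. -/
def finAlg (F : Type) [Field F] [Algebra F A] (C T : ℕ → A) (k : ℕ) : Subalgebra F A :=
  Algebra.adjoin F ({a | ∃ i < k, a = C i} ∪ {a | ∃ i, i + 1 < k ∧ a = T i})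

theorem Tp_comm_of_comm {ξ : F} {C T : ℕ → A} {i : ℕ} {a : A} (hT : Commute a (T i)) (hC : Commute a (C i))
    (hD : Commute a (C (i + 1))) : Commute a (Tp ξ C T i) :=
  hT.add_right ((hC.mul_right hD).smul_right ξ)

/-- The mixed braid relation in a ring. -/
theorem mixed_braid {ξ : F} {C D E S T : A} (dc : D * C = -(C * D)) (ed : E * D = -(D * E))
    (ec : E * C = -(C * E)) (dd : D * D = 1)
    (se : S * E = E * S) (tc : T * C = C * T) (sc : S * C = D * S)
    (sd : S * D = C * S + ξ • (D - C)) (td : T * D = E * T) (ss : S * S = ξ • S + 1)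
    (tt : T * T = ξ • T + 1) (braid : S * T * S = T * S * T) :
    S * ((T + ξ • (D * E)) * (S + ξ • (C * D))) = (T + ξ • (D * E)) * (S + ξ • (C * D)) * T := by
  rw [mul_assoc, mul_assoc] at braid
  simp only [mul_assoc, sub_mul, mul_sub, add_mul, mul_add, smul_sub, smul_add, mul_smul_comm,
      smul_mul_assoc, mul_neg, neg_mul, smul_neg, mul_one, one_mul, sc, sd, se, tc, td, ss, tt,
      mul_mul_of_mul_eq sc, mul_mul_of_mul_eq sd, mul_mul_of_mul_eq se, mul_mul_of_mul_eq tc,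
      mul_mul_of_mul_eq td, mul_mul_of_mul_eq ss, mul_mul_of_mul_eq tt,
      dc, ed, ec, mul_mul_of_mul_eq dc, mul_mul_of_mul_eq ed, mul_mul_of_mul_eq ec,
      dd, mul_mul_of_mul_eq dd, braid]
  module

namespace HCRel

variable {ξ : F} {n : ℕ} {x : ℕ → Aˣ} {C T : ℕ → A} (h : HCRel ξ n x C T)
include h

theorem T_C_succ {i : ℕ} (hi : i + 1 < n) :
    T i * C (i + 1) = C i * T i + ξ • (C (i + 1) - C i) :=
  mul_eq_of_quadratic (h.T_sq hi) (h.T_C i)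

theorem CC_sq {i : ℕ} (hi : i + 1 < n) : C i * C (i + 1) * (C i * C (i + 1)) = -1 := by
  rw [mul_assoc, mul_mul_of_mul_eq (h.C_anti (Nat.succ_ne_self i)), neg_mul, mul_neg, mul_assoc,
    h.C_sq hi, mul_one, h.C_sq (by omega)]

theorem T_CC {i : ℕ} (hi : i + 1 < n) : T i * (C i * C (i + 1)) =
    -(C i * C (i + 1) * T i) + ξ • 1 + ξ • (C i * C (i + 1)) := by
  rw [← mul_assoc, h.T_C, mul_assoc, h.T_C_succ hi, mul_add, ← mul_assoc,
    h.C_anti (Nat.succ_ne_self i), mul_smul_comm, mul_sub, h.C_sq hi,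
    h.C_anti (Nat.succ_ne_self i), neg_mul]
  module

theorem Tp_sq {i : ℕ} (hi : i + 1 < n) :
    Tp ξ C T i * Tp ξ C T i = ξ • Tp ξ C T i + 1 := by
  simp only [Tp, add_mul, mul_add, smul_mul_assoc, mul_smul_comm, h.T_sq hi, h.T_CC hi,
    h.CC_sq hi]
  module

theorem T_mul_inv {i : ℕ} (hi : i + 1 < n) : T i * (T i - ξ • 1) = 1 := by
  rw [mul_sub, h.T_sq hi, mul_smul_comm, mul_one]; abel
theorem inv_mul_T {i : ℕ} (hi : i + 1 < n) : (T i - ξ • 1) * T i = 1 := by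
  rw [sub_mul, h.T_sq hi, smul_mul_assoc, one_mul]; abel
theorem Tp_mul_inv {i : ℕ} (hi : i + 1 < n) : Tp ξ C T i * (Tp ξ C T i - ξ • 1) = 1 := by
  rw [mul_sub, h.Tp_sq hi, mul_smul_comm, mul_one]; abel
theorem inv_mul_Tp {i : ℕ} (hi : i + 1 < n) : (Tp ξ C T i - ξ • 1) * Tp ξ C T i = 1 := by
  rw [sub_mul, h.Tp_sq hi, smul_mul_assoc, one_mul]; abel

theorem crossRel {i : ℕ} (hi : i + 1 < n) :
    CrossRel ξ (x i) (x (i + 1)) (C i) (C (i + 1)) (T i) where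
  xy := h.x_comm _ _
  cc := h.C_sq (by omega)
  dd := h.C_sq hi
  dc := h.C_anti (Nat.succ_ne_self i)
  cx := h.C_x i
  cy := h.C_x_ne (Nat.succ_ne_self i).symm
  dx := h.C_x_ne (Nat.succ_ne_self i)
  dy := h.C_x _
  tx := by
    have e : (T i + ξ • (C i * C (i + 1))) * x i = x (i + 1) * (T i - ξ • 1) := by
      rw [← h.cross hi, mul_assoc _ (T i), h.T_mul_inv hi, mul_one]
    rw [add_mul, smul_mul_assoc, mul_assoc, h.C_x_ne (Nat.succ_ne_self i), ← mul_assoc, h.C_x,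
      mul_assoc, mul_sub, mul_smul_comm, mul_one] at e
    rw [eq_sub_iff_add_eq, e]
  ty := by
    have e : (T i + ξ • (C i * C (i + 1)) - ξ • 1) * x (i + 1) = x i * T i := by
      rw [← h.cross hi, mul_assoc _ _ (T i), ← mul_assoc]
      exact (congrArg (· * _) (h.inv_mul_Tp hi)).trans (one_mul _)
    have hxi : C i * ↑(x (i + 1))⁻¹ = ↑(x (i + 1))⁻¹ * C i :=
      (mul_inv_eq_of_mul_eq (h.C_x_ne (Nat.succ_ne_self i).symm)).symm
    rw [sub_mul, add_mul, smul_mul_assoc, mul_assoc, h.C_x, ← mul_assoc, hxi,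
      mul_assoc, smul_mul_assoc, one_mul] at e
    rw [← e]; abel

theorem Tp_mul_x {i : ℕ} (hi : i + 1 < n) :
    Tp ξ C T i * x i = x (i + 1) * (T i - ξ • 1) := by
  rw [← h.cross hi, mul_assoc _ (T i), h.T_mul_inv hi, mul_one]; rfl

theorem C_mul_Tp {i : ℕ} (hi : i + 1 < n) : C i * Tp ξ C T i = Tp ξ C T i * C (i + 1) := by
  simp only [Tp, add_mul, mul_add, smul_mul_assoc, mul_smul_comm, mul_assoc, h.T_C_succ hi,
    h.C_sq hi, mul_mul_of_mul_eq (h.C_sq (show i < n by omega)), mul_one, one_mul]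
  module

theorem C_succ_mul_Tp {i : ℕ} (hi : i + 1 < n) :
    C (i + 1) * Tp ξ C T i = Tp ξ C T i * C i + ξ • (C (i + 1) - C i) := by
  simp only [Tp, add_mul, mul_add, smul_mul_assoc, mul_smul_comm, mul_assoc, h.T_C,
    h.C_anti (Nat.succ_ne_self i), mul_neg, mul_mul_of_mul_eq (h.C_anti (Nat.succ_ne_self i)),
    mul_mul_of_mul_eq (h.C_sq (show i < n by omega)), mul_one, one_mul, h.C_sq hi, neg_mul]
  module

theorem Tp_comm_C {i j : ℕ} (h1 : j ≠ i) (h2 : j ≠ i + 1) :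
    Tp ξ C T i * C j = C j * Tp ξ C T i := by
  simp only [Tp, add_mul, mul_add, smul_mul_assoc, mul_smul_comm, mul_assoc, h.T_C_ne h1 h2,
    h.C_anti h2.symm, mul_neg, mul_mul_of_mul_eq (h.C_anti h1), neg_mul]

theorem T_comm_T {i j : ℕ} (hij : i + 1 < j ∨ j + 1 < i) : Commute (T i) (T j) :=
  hij.elim (fun e => h.far e) fun e => (h.far e).symm

theorem Tp_comm_T {i j : ℕ} (hij : i + 1 < j ∨ j + 1 < i) : Commute (T j) (Tp ξ C T i) :=
  Tp_comm_of_comm (h.T_comm_T hij).symm (h.T_C_ne (by omega) (by omega))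
    (h.T_C_ne (by omega) (by omega))

theorem T_mul_Tp_mul_Tp {i : ℕ} (hi : i + 2 < n) :
    T i * (Tp ξ C T (i + 1) * Tp ξ C T i) = Tp ξ C T (i + 1) * Tp ξ C T i * T (i + 1) :=
  mixed_braid (h.C_anti (by omega)) (h.C_anti (by omega)) (h.C_anti (by omega))
    (h.C_sq (by omega)) (h.T_C_ne (by omega) (by omega))
    (h.T_C_ne (by omega) (by omega)) (h.T_C i) (h.T_C_succ (by omega)) (h.T_C (i + 1))
    (h.T_sq (by omega)) (h.T_sq hi) (h.braid i)

end HCRel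
end Abstract

section Abstract

variable {F A : Type} [Field F] [Ring A] [Algebra F A] {ξ : F} {n : ℕ} {x : ℕ → Aˣ}
  {C T : ℕ → A} {k : ℕ}

theorem C_mem_finAlg {i : ℕ} (hi : i < k) : C i ∈ finAlg F C T k :=
  Algebra.subset_adjoin (Or.inl ⟨i, hi, rfl⟩)

theorem T_mem_finAlg {i : ℕ} (hi : i + 1 < k) : T i ∈ finAlg F C T k :=
  Algebra.subset_adjoin (Or.inr ⟨i, hi, rfl⟩)

theorem Tp_mem_finAlg {i : ℕ} (hi : i + 1 < k) : Tp ξ C T i ∈ finAlg F C T k :=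
  add_mem (T_mem_finAlg hi)
    (Subalgebra.smul_mem _ (mul_mem (C_mem_finAlg (by omega)) (C_mem_finAlg hi)) ξ)

theorem finAlg_mono {k l : ℕ} (hkl : k ≤ l) : finAlg F C T k ≤ finAlg F C T l :=
  Algebra.adjoin_mono (Set.union_subset_union (fun _ ⟨i, hi, e⟩ => ⟨i, hi.trans_le hkl, e⟩)
    (fun _ ⟨i, hi, e⟩ => ⟨i, hi.trans_le hkl, e⟩))

theorem polyAlg_mono {k l : ℕ} (hkl : k ≤ l) : polyAlg F x k ≤ polyAlg F x l :=
  Algebra.adjoin_mono (fun _ ⟨i, hi, e⟩ => ⟨i, hi.trans_le hkl, e⟩)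

theorem x_mem_polyAlg {i : ℕ} (hi : i < k) : (x i : A) ∈ polyAlg F x k :=
  Algebra.subset_adjoin ⟨i, hi, Or.inl rfl⟩

theorem x_inv_mem_polyAlg {i : ℕ} (hi : i < k) : (↑(x i)⁻¹ : A) ∈ polyAlg F x k :=
  Algebra.subset_adjoin ⟨i, hi, Or.inr rfl⟩

theorem x_zpow_mem_polyAlg {i : ℕ} (hi : i < k) (e : ℤ) :
    (↑(x i ^ e) : A) ∈ polyAlg F x k := by
  cases e with
  | ofNat m =>
    rw [Int.ofNat_eq_natCast, zpow_natCast, Units.val_pow_eq_pow_val]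
    exact pow_mem (x_mem_polyAlg hi) m
  | negSucc m =>
    rw [zpow_negSucc, ← inv_pow, Units.val_pow_eq_pow_val]
    exact pow_mem (x_inv_mem_polyAlg hi) _

theorem commute_polyAlg {a : A} (ha : ∀ i < k, Commute a (x i)) {p : A}
    (hp : p ∈ polyAlg F x k) : Commute a p := by
  refine Algebra.commute_of_mem_adjoin_of_forall_mem_commute hp ?_
  rintro _ ⟨i, hi, rfl | rfl⟩
  · exact ha i hi
  · exact (ha i hi).units_inv_right

theorem commute_finAlg {a : A} (hC : ∀ i < k, Commute a (C i))
    (hT : ∀ i, i + 1 < k → Commute a (T i)) {b : A} (hb : b ∈ finAlg F C T k) :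
    Commute a b := by
  refine Algebra.commute_of_mem_adjoin_of_forall_mem_commute hb ?_
  rintro _ (⟨i, hi, rfl⟩ | ⟨i, hi, rfl⟩)
  · exact hC i hi
  · exact hT i hi

/-- The span of the `x_k^a p b` with `0 < a < e`, `p` a Laurent polynomial in the previous
variables, and `b ∈ H^fn_{k+1}`. -/
def midSpan (F : Type) [Field F] [Algebra F A] (x : ℕ → Aˣ) (C T : ℕ → A) (k e : ℕ) :
    Submodule F A :=
  Submodule.span F {y | ∃ a, 0 < a ∧ a < e ∧ ∃ p ∈ polyAlg F x k, ∃ b ∈ finAlg F C T (k + 1),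
    y = (x k : A) ^ a * p * b}

theorem midSpan_mono {e e' : ℕ} (he : e ≤ e') : midSpan F x C T k e ≤ midSpan F x C T k e' :=
  Submodule.span_mono fun _ ⟨a, h0, h1, r⟩ => ⟨a, h0, h1.trans_le he, r⟩

theorem mem_midSpan {e a : ℕ} (h0 : 0 < a) (h1 : a < e) {p b : A} (hp : p ∈ polyAlg F x k)
    (hb : b ∈ finAlg F C T (k + 1)) : (x k : A) ^ a * p * b ∈ midSpan F x C T k e :=
  Submodule.subset_span ⟨a, h0, h1, p, hp, b, hb, rfl⟩

theorem mul_mem_midSpan_succ {e : ℕ} {y : A} (hy : y ∈ midSpan F x C T k e) :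
    (x k : A) * y ∈ midSpan F x C T k (e + 1) := by
  induction hy using Submodule.span_induction with
  | mem y hy =>
    obtain ⟨a, h0, h1, p, hp, b, hb, rfl⟩ := hy
    rw [← mul_assoc, ← mul_assoc, ← pow_succ']
    exact mem_midSpan (by omega) (by omega) hp hb
  | zero => rw [mul_zero]; exact zero_mem _
  | add y z _ _ hy hz => rw [mul_add]; exact add_mem hy hz
  | smul r y _ hy => rw [mul_smul_comm]; exact Submodule.smul_mem _ _ hy

namespace HCRel

variable (h : HCRel ξ n x C T)
include h

theorem C_comm_polyAlg {j : ℕ} (hj : k ≤ j) {p : A} (hp : p ∈ polyAlg F x k) :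
    Commute (C j) p :=
  commute_polyAlg (fun _ hi => h.C_x_ne (by omega)) hp

theorem T_comm_polyAlg {j : ℕ} (hj : k ≤ j) {p : A} (hp : p ∈ polyAlg F x k) :
    Commute (T j) p :=
  commute_polyAlg (fun _ hi => h.T_x_ne (by omega) (by omega)) hp

theorem Tp_mul_pow_mul_sub {k : ℕ} (hk : k + 1 < n) {p b : A} (hp : p ∈ polyAlg F x k)
    (hb : b ∈ finAlg F C T (k + 1)) (e : ℕ) :
    Tp ξ C T k * ((x k : A) ^ (e + 1) * p * b) * T k -
      (x (k + 1) : A) ^ (e + 1) * p * ((T k - ξ • 1) * b * T k) ∈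
      midSpan F x C T (k + 1) (e + 1) := by
  have hTp : (T k - ξ • 1) * p = p * (T k - ξ • 1) :=
    (h.T_comm_polyAlg le_rfl hp).sub_left ((Commute.one_left p).smul_left ξ)
  have hcp : C k * C (k + 1) * p = p * (C k * C (k + 1)) :=
    (h.C_comm_polyAlg le_rfl hp).mul_left (h.C_comm_polyAlg (Nat.le_succ k) hp)
  have hbT : b * T k ∈ finAlg F C T (k + 1 + 1) :=
    mul_mem (finAlg_mono (Nat.le_succ _) hb) (T_mem_finAlg (by omega))
  have hcb : C k * C (k + 1) * (b * T k) ∈ finAlg F C T (k + 1 + 1) :=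
    mul_mem (mul_mem (C_mem_finAlg (by omega)) (C_mem_finAlg (by omega))) hbT
  induction e with
  | zero =>
    rw [zero_add, pow_one, pow_one]
    have : Tp ξ C T k * (x k * p * b) * T k = x (k + 1) * p * ((T k - ξ • 1) * b * T k) := by
      rw [← mul_assoc, ← mul_assoc, h.Tp_mul_x hk, mul_assoc _ _ p, hTp]
      simp only [mul_assoc]
    rw [this, sub_self]
    exact zero_mem _
  | succ e ih =>
    have hcx : C k * C (k + 1) * (x k : A) ^ (e + 1) =
        (↑(x k)⁻¹ : A) ^ (e + 1) * (C k * C (k + 1)) := by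
      have : SemiconjBy (C k * C (k + 1)) (x k : A) (↑(x k)⁻¹ : A) := by
        rw [SemiconjBy, mul_assoc, h.C_x_ne (Nat.succ_ne_self k), ← mul_assoc, h.C_x, mul_assoc]
      exact this.pow_right _
    have key : Tp ξ C T k * (x k : A) ^ (e + 1 + 1) = x (k + 1) *
        (Tp ξ C T k * (x k : A) ^ (e + 1)) -
        ξ • (x (k + 1) * (↑(x k)⁻¹ : A) ^ (e + 1) * (C k * C (k + 1))) -
        ξ • (x (k + 1) * (x k : A) ^ (e + 1)) := by
      rw [pow_succ' _ (e + 1), ← mul_assoc, h.Tp_mul_x hk, mul_assoc _ _ (C k * C (k + 1)),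
        ← hcx, Tp]
      simp only [add_mul, mul_add, sub_mul, mul_sub, smul_mul_assoc, mul_smul_comm, one_mul,
        mul_assoc, mul_one]
      module
    have e1 := mul_mem_midSpan_succ ih
    have e2 : (x (k + 1) : A) ^ 1 * ((↑(x k)⁻¹ : A) ^ (e + 1) * p) *
        (C k * C (k + 1) * (b * T k)) ∈ midSpan F x C T (k + 1) (e + 1 + 1) :=
      mem_midSpan one_pos (by omega) (mul_mem (pow_mem (x_inv_mem_polyAlg (by omega)) _)
        (polyAlg_mono (Nat.le_succ k) hp)) hcb
    have e3 : (x (k + 1) : A) ^ 1 * ((x k : A) ^ (e + 1) * p) * (b * T k) ∈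
        midSpan F x C T (k + 1) (e + 1 + 1) :=
      mem_midSpan one_pos (by omega) (mul_mem (pow_mem (x_mem_polyAlg (by omega)) _)
        (polyAlg_mono (Nat.le_succ k) hp)) hbT
    refine (congrArg (· ∈ midSpan F x C T (k + 1) (e + 1 + 1)) ?_).mp
      (sub_mem (sub_mem e1 (Submodule.smul_mem _ ξ e2)) (Submodule.smul_mem _ ξ e3))
    rw [← mul_assoc (Tp ξ C T k), ← mul_assoc (Tp ξ C T k), ← mul_assoc (Tp ξ C T k),
      ← mul_assoc (Tp ξ C T k), key, pow_succ' _ (e + 1), pow_one]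
    simp only [sub_mul, mul_sub, smul_mul_assoc, mul_assoc, mul_smul_comm, one_mul]
    rw [← mul_assoc (C k) (C (k + 1)) (p * _), mul_mul_of_mul_eq hcp]
    simp only [mul_assoc]
    abel

/-- The shape of `f_k` as a polynomial in `x_k`. -/
theorem exists_fam_eq {d : ℕ} {f : A} {a₀ : F}
    (hf : f - (x 0 : A) ^ (d + 1) - a₀ • 1 ∈ midSpan F x C T 0 (d + 1)) (k : ℕ) (hk : k < n) :
    ∃ u ∈ finAlg F C T (k + 1), ∃ w ∈ finAlg F C T (k + 1), u * w = 1 ∧ w * u = 1 ∧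
      fam ξ C T f k - (x k : A) ^ (d + 1) - a₀ • u ∈ midSpan F x C T k (d + 1) := by
  induction k with
  | zero => exact ⟨1, one_mem _, 1, one_mem _, one_mul 1, one_mul 1, hf⟩
  | succ k ih =>
    obtain ⟨u, hu, w, hw, huw, hwu, hm⟩ := ih (by omega)
    have hle : finAlg F C T (k + 1) ≤ finAlg F C T (k + 1 + 1) := finAlg_mono (Nat.le_succ _)
    have hT : T k ∈ finAlg F C T (k + 1 + 1) := T_mem_finAlg (by omega)
    have hTp : Tp ξ C T k ∈ finAlg F C T (k + 1 + 1) := Tp_mem_finAlg (by omega)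
    have hξ : (ξ • 1 : A) ∈ finAlg F C T (k + 1 + 1) := Subalgebra.smul_mem _ (one_mem _) ξ
    refine ⟨Tp ξ C T k * u * T k, mul_mem (mul_mem hTp (hle hu)) hT,
      (T k - ξ • 1) * w * (Tp ξ C T k - ξ • 1),
      mul_mem (mul_mem (sub_mem hT hξ) (hle hw)) (sub_mem hTp hξ), ?_, ?_, ?_⟩
    · rw [mul_assoc, mul_assoc (T k - ξ • 1), mul_mul_of_mul_eq (h.T_mul_inv hk), one_mul,
        mul_assoc, mul_mul_of_mul_eq huw, one_mul, h.Tp_mul_inv hk]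
    · rw [mul_assoc, mul_assoc (Tp ξ C T k), mul_mul_of_mul_eq (h.inv_mul_Tp hk), one_mul,
        mul_assoc, mul_mul_of_mul_eq hwu, one_mul, h.inv_mul_T hk]
    · have e1 := h.Tp_mul_pow_mul_sub hk (one_mem (polyAlg F x k))
        (one_mem (finAlg F C T (k + 1))) d
      rw [mul_one, mul_one, mul_one, mul_one, h.inv_mul_T hk, mul_one] at e1
      have e2 : ∀ y ∈ midSpan F x C T k (d + 1),
          Tp ξ C T k * y * T k ∈ midSpan F x C T (k + 1) (d + 1) := by
        intro y hy
        induction hy using Submodule.span_induction with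
        | mem y hy =>
          obtain ⟨a, h0, h1, p, hp, b, hb, rfl⟩ := hy
          obtain ⟨a, rfl⟩ := Nat.exists_eq_succ_of_ne_zero h0.ne'
          have := add_mem (midSpan_mono h1.le (h.Tp_mul_pow_mul_sub hk hp hb a))
            (mem_midSpan h0 h1 (polyAlg_mono (Nat.le_succ k) hp)
              (mul_mem (mul_mem (sub_mem hT hξ) (hle hb)) hT))
          rwa [sub_add_cancel] at this
        | zero => rw [mul_zero, zero_mul]; exact zero_mem _
        | add y z _ _ hy hz => rw [mul_add, add_mul]; exact add_mem hy hz
        | smul r y _ hy =>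
          rw [mul_smul_comm, smul_mul_assoc]; exact Submodule.smul_mem _ _ hy
      have := add_mem e1 (e2 _ hm)
      refine (congrArg (· ∈ midSpan F x C T (k + 1) (d + 1)) ?_).mp this
      rw [fam]
      simp only [mul_sub, sub_mul, mul_smul_comm, smul_mul_assoc]
      abel

section Commutation

variable {f : A} (hfC : ∀ j, 0 < j → Commute (C j) f) (hfT : ∀ j, 0 < j → Commute (T j) f)
include hfC

theorem C_comm_fam_of_lt {j k : ℕ} (hj : k < j) : Commute (C j) (fam ξ C T f k) := by
  induction k with
  | zero => exact hfC j hj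
  | succ k ih =>
    exact ((show Commute (C j) _ from (h.Tp_comm_C (by omega) (by omega)).symm).mul_right
      (ih (by omega))).mul_right (h.T_C_ne (by omega) (by omega)).symm

theorem C_comm_fam_of_gt {j k : ℕ} (hk : k < n) (hj : j < k) :
    Commute (C j) (fam ξ C T f k) := by
  induction k with
  | zero => omega
  | succ k ih =>
    rcases Nat.lt_succ_iff_lt_or_eq.1 hj with hj | rfl
    · exact ((show Commute (C j) _ from (h.Tp_comm_C (by omega) (by omega)).symm).mul_right
        (ih (by omega) hj)).mul_right (h.T_C_ne (by omega) (by omega)).symm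
    · show C j * (Tp ξ C T j * fam ξ C T f j * T j) = _
      rw [← mul_assoc, ← mul_assoc, h.C_mul_Tp hk, mul_assoc (Tp ξ C T j),
        h.C_comm_fam_of_lt hfC (Nat.lt_succ_self j), ← mul_assoc, mul_assoc _ (C (j + 1)),
        ← h.T_C, ← mul_assoc]
      rfl

include hfT

theorem T_comm_fam_of_lt {j k : ℕ} (hj : k < j) : Commute (T j) (fam ξ C T f k) := by
  induction k with
  | zero => exact hfT j hj
  | succ k ih =>
    exact ((h.Tp_comm_T (Or.inl hj)).mul_right (ih (by omega))).mul_right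
      (h.T_comm_T (Or.inr hj))

theorem Tp_comm_fam_of_lt {j k : ℕ} (hj : k < j) :
    Commute (Tp ξ C T j) (fam ξ C T f k) :=
  (Tp_comm_of_comm (h.T_comm_fam_of_lt hfC hfT hj).symm (h.C_comm_fam_of_lt hfC hj).symm
    (h.C_comm_fam_of_lt hfC (by omega)).symm).symm

theorem T_comm_fam_of_gt {j k : ℕ} (hk : k < n) (hj : j + 1 < k) :
    Commute (T j) (fam ξ C T f k) := by
  induction k with
  | zero => omega
  | succ k ih =>
    rcases Nat.lt_succ_iff_lt_or_eq.1 hj with hj | rfl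
    · exact ((h.Tp_comm_T (Or.inr hj)).mul_right (ih (by omega) hj)).mul_right
        (h.T_comm_T (Or.inl hj))
    · have hc : T (j + 1) * fam ξ C T f j = fam ξ C T f j * T (j + 1) :=
        h.T_comm_fam_of_lt hfC hfT (Nat.lt_succ_self j)
      show T j * (Tp ξ C T (j + 1) * (Tp ξ C T j * fam ξ C T f j * T j) * T (j + 1)) =
        Tp ξ C T (j + 1) * (Tp ξ C T j * fam ξ C T f j * T j) * T (j + 1) * T j
      calc _ = T j * (Tp ξ C T (j + 1) * Tp ξ C T j) * fam ξ C T f j * T j * T (j + 1) := by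
            simp only [mul_assoc]
        _ = Tp ξ C T (j + 1) * Tp ξ C T j * (T (j + 1) * fam ξ C T f j) * T j * T (j + 1) := by
            rw [h.T_mul_Tp_mul_Tp hk]; simp only [mul_assoc]
        _ = Tp ξ C T (j + 1) * Tp ξ C T j * fam ξ C T f j * (T (j + 1) * T j * T (j + 1)) := by
            rw [hc]; simp only [mul_assoc]
        _ = _ := by rw [← h.braid]; simp only [mul_assoc]

theorem fam_comm_finAlg {k : ℕ} (hk : k < n) {b : A} (hb : b ∈ finAlg F C T k) :
    Commute (fam ξ C T f k) b :=
  commute_finAlg (fun _ hi => (h.C_comm_fam_of_gt hfC hk hi).symm)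
    (fun _ hi => (h.T_comm_fam_of_gt hfC hfT hk hi).symm) hb

end Commutation

end HCRel
end Abstract

section Abstract

variable {F A : Type} [Field F] [Ring A] [Algebra F A] {ξ : F} {n : ℕ} {x : ℕ → Aˣ}
  {C T : ℕ → A} {k : ℕ}

/-- A submodule stable under left multiplication by the generators of a subalgebra is stable
under left multiplication by the whole subalgebra. -/
theorem mul_mem_of_mem_adjoin {S : Set A} {N : Submodule F A}
    (hS : ∀ s ∈ S, ∀ y ∈ N, s * y ∈ N) {a : A} (ha : a ∈ Algebra.adjoin F S) :
    ∀ y ∈ N, a * y ∈ N := by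
  induction ha using Algebra.adjoin_induction with
  | mem s hs => exact hS s hs
  | algebraMap r =>
    intro y hy
    rw [← Algebra.smul_def]
    exact N.smul_mem r hy
  | add a b _ _ iha ihb =>
    intro y hy
    rw [add_mul]
    exact add_mem (iha y hy) (ihb y hy)
  | mul a b _ _ iha ihb =>
    intro y hy
    rw [mul_assoc]
    exact iha _ (ihb y hy)

/-- To check that left multiplication by `a` maps a span into a submodule, it suffices to
consider the spanning set. -/
theorem mul_mem_of_mem_span {S : Set A} {N : Submodule F A} {a : A}
    (hS : ∀ s ∈ S, a * s ∈ N) {y : A} (hy : y ∈ Submodule.span F S) : a * y ∈ N :=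
  (Submodule.span_le (p := N.comap (LinearMap.mulLeft F a))).2 hS hy

theorem mul_mem_of_mem_span_right {S : Set A} {N : Submodule F A} {a : A}
    (hS : ∀ s ∈ S, s * a ∈ N) {y : A} (hy : y ∈ Submodule.span F S) : y * a ∈ N :=
  (Submodule.span_le (p := N.comap (LinearMap.mulRight F a))).2 hS hy

/-- The span of the products of Laurent polynomials and finite type elements. -/
def prodSpan (F : Type) [Field F] [Algebra F A] (x : ℕ → Aˣ) (C T : ℕ → A) (k : ℕ) :
    Submodule F A :=
  Submodule.span F {y | ∃ p ∈ polyAlg F x k, ∃ b ∈ finAlg F C T k, y = p * b}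

theorem mul_mem_prodSpan {p b : A} (hp : p ∈ polyAlg F x k) (hb : b ∈ finAlg F C T k) :
    p * b ∈ prodSpan F x C T k :=
  Submodule.subset_span ⟨p, hp, b, hb, rfl⟩

theorem poly_mul_mem_prodSpan {p y : A} (hp : p ∈ polyAlg F x k)
    (hy : y ∈ prodSpan F x C T k) : p * y ∈ prodSpan F x C T k := by
  refine mul_mem_of_mem_span ?_ hy
  rintro _ ⟨p', hp', b, hb, rfl⟩
  rw [← mul_assoc]
  exact mul_mem_prodSpan (mul_mem hp hp') hb

/-- The span of the `p f_l b` with `l < m`. -/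
def famSpan (ξ : F) (x : ℕ → Aˣ) (C T : ℕ → A) (f : A) (k m : ℕ) : Submodule F A :=
  Submodule.span F {y | ∃ l < m, ∃ p ∈ polyAlg F x k, ∃ b ∈ finAlg F C T k,
    y = p * fam ξ C T f l * b}

section famSpan

variable {f : A} {m : ℕ}

theorem mem_famSpan {l : ℕ} (hl : l < m) {p b : A} (hp : p ∈ polyAlg F x k)
    (hb : b ∈ finAlg F C T k) : p * fam ξ C T f l * b ∈ famSpan ξ x C T f k m :=
  Submodule.subset_span ⟨l, hl, p, hp, b, hb, rfl⟩

theorem fam_mul_mem_famSpan {l : ℕ} (hl : l < m) {b : A} (hb : b ∈ finAlg F C T k) :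
    fam ξ C T f l * b ∈ famSpan ξ x C T f k m := by
  simpa using mem_famSpan (x := x) (f := f) (ξ := ξ) hl (one_mem _) hb

theorem famSpan_mono {m' : ℕ} (hm : m ≤ m') :
    famSpan ξ x C T f k m ≤ famSpan ξ x C T f k m' :=
  Submodule.span_mono fun _ ⟨l, hl, r⟩ => ⟨l, hl.trans_le hm, r⟩

theorem poly_mul_mem_famSpan {p y : A} (hp : p ∈ polyAlg F x k)
    (hy : y ∈ famSpan ξ x C T f k m) : p * y ∈ famSpan ξ x C T f k m := by
  refine mul_mem_of_mem_span ?_ hy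
  rintro _ ⟨l, hl, p', hp', b, hb, rfl⟩
  rw [← mul_assoc, ← mul_assoc]
  exact mem_famSpan hl (mul_mem hp hp') hb

theorem mul_fin_mem_famSpan {b y : A} (hb : b ∈ finAlg F C T k)
    (hy : y ∈ famSpan ξ x C T f k m) : y * b ∈ famSpan ξ x C T f k m := by
  refine mul_mem_of_mem_span_right ?_ hy
  rintro _ ⟨l, hl, p', hp', b', hb', rfl⟩
  rw [mul_assoc]
  exact mem_famSpan hl hp' (mul_mem hb' hb)

theorem mul_mem_famSpan_of_mul_fam {c : A} {k m m' : ℕ}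
    (hc : ∀ p ∈ polyAlg F x k, ∃ p' ∈ polyAlg F x k, c * p = p' * c)
    (hm : ∀ l < m, c * fam ξ C T f l ∈ famSpan ξ x C T f k m') {y : A}
    (hy : y ∈ famSpan ξ x C T f k m) : c * y ∈ famSpan ξ x C T f k m' := by
  refine mul_mem_of_mem_span ?_ hy
  rintro _ ⟨l, hl, p, hp, b, hb, rfl⟩
  obtain ⟨p', hp', e⟩ := hc p hp
  rw [← mul_assoc, ← mul_assoc, e, mul_assoc p']
  exact mul_fin_mem_famSpan hb (poly_mul_mem_famSpan hp' (hm l hl))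

end famSpan

namespace HCRel

variable (h : HCRel ξ n x C T)
include h

theorem C_mul_poly (j : ℕ) {p : A} (hp : p ∈ polyAlg F x k) :
    ∃ p' ∈ polyAlg F x k, C j * p = p' * C j := by
  induction hp using Algebra.adjoin_induction with
  | mem s hs =>
    obtain ⟨i, hi, rfl | rfl⟩ := hs
    · by_cases hij : j = i
      · subst hij
        exact ⟨_, x_inv_mem_polyAlg hi, h.C_x j⟩
      · exact ⟨_, x_mem_polyAlg hi, h.C_x_ne hij⟩
    · by_cases hij : j = i
      · subst hij
        refine ⟨_, x_mem_polyAlg hi, ?_⟩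
        rw [Units.mul_inv_eq_iff_eq_mul, mul_assoc, h.C_x, ← mul_assoc, Units.mul_inv, one_mul]
      · exact ⟨_, x_inv_mem_polyAlg hi, (show Commute _ _ from h.C_x_ne hij).units_inv_right⟩
  | algebraMap r => exact ⟨_, algebraMap_mem _ r, (Algebra.commutes r _).symm⟩
  | add p r _ _ ihp ihr =>
    obtain ⟨p', hp', ep⟩ := ihp
    obtain ⟨r', hr', er⟩ := ihr
    exact ⟨_, add_mem hp' hr', by rw [mul_add, ep, er, add_mul]⟩
  | mul p r _ _ ihp ihr =>
    obtain ⟨p', hp', ep⟩ := ihp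
    obtain ⟨r', hr', er⟩ := ihr
    exact ⟨_, mul_mem hp' hr', by rw [← mul_assoc, ep, mul_assoc, er, mul_assoc]⟩

theorem CC_mul_poly (i j : ℕ) {p : A} (hp : p ∈ polyAlg F x k) :
    ∃ p' ∈ polyAlg F x k, C i * C j * p = p' * (C i * C j) := by
  obtain ⟨p', hp', e⟩ := h.C_mul_poly j hp
  obtain ⟨r, hr, e'⟩ := h.C_mul_poly i hp'
  exact ⟨r, hr, by rw [mul_assoc, e, ← mul_assoc, e', mul_assoc]⟩

theorem T_mul_poly (hk : k ≤ n) {i : ℕ} (hi : i + 1 < k) {p : A} (hp : p ∈ polyAlg F x k) :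
    ∃ p' ∈ polyAlg F x k, ∃ r ∈ polyAlg F x k, ∃ s ∈ polyAlg F x k,
      T i * p = p' * T i + r + s * (C i * C (i + 1)) := by
  have hcr := h.crossRel (hi.trans_le hk)
  have hxi := x_mem_polyAlg (F := F) (x := x) (show i < k by omega)
  have hyi := x_mem_polyAlg (F := F) (x := x) hi
  have hxi' := x_inv_mem_polyAlg (F := F) (x := x) (show i < k by omega)
  have hyi' := x_inv_mem_polyAlg (F := F) (x := x) hi
  induction hp using Algebra.adjoin_induction with
  | mem s hs =>
    obtain ⟨j, hj, hs⟩ := hs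
    by_cases h1 : j = i
    · subst h1
      obtain rfl | rfl := hs
      · refine ⟨_, hyi, _, neg_mem (Subalgebra.smul_mem _ hyi ξ), _,
          neg_mem (Subalgebra.smul_mem _ hxi' ξ), ?_⟩
        rw [hcr.tx]
        simp only [neg_mul, smul_mul_assoc]
        abel
      · refine ⟨_, hyi', _, Subalgebra.smul_mem _ hxi' ξ, _, Subalgebra.smul_mem _ hyi' ξ, ?_⟩
        rw [hcr.txi, smul_mul_assoc]
    by_cases h2 : j = i + 1
    · subst h2
      obtain rfl | rfl := hs
      · refine ⟨_, hxi, _, Subalgebra.smul_mem _ hyi ξ, _,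
          neg_mem (Subalgebra.smul_mem _ hyi' ξ), ?_⟩
        rw [hcr.ty]
        simp only [neg_mul, smul_mul_assoc]
        abel
      · refine ⟨_, hxi', _, neg_mem (Subalgebra.smul_mem _ hxi' ξ), _,
          Subalgebra.smul_mem _ hxi' ξ, ?_⟩
        rw [hcr.tyi, smul_mul_assoc, sub_eq_add_neg]
    have hc : Commute (T i) (x j : A) := h.T_x_ne h1 h2
    obtain rfl | rfl := hs
    · exact ⟨_, x_mem_polyAlg hj, 0, zero_mem _, 0, zero_mem _, by simp [hc.eq]⟩
    · exact ⟨_, x_inv_mem_polyAlg hj, 0, zero_mem _, 0, zero_mem _,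
        by simp [hc.units_inv_right.eq]⟩
  | algebraMap r =>
    exact ⟨_, algebraMap_mem _ r, 0, zero_mem _, 0, zero_mem _,
      by simp [Algebra.commutes r (T i)]⟩
  | add p r _ _ ihp ihr =>
    obtain ⟨p', hp', p1, hp1, p2, hp2, ep⟩ := ihp
    obtain ⟨r', hr', r1, hr1, r2, hr2, er⟩ := ihr
    refine ⟨_, add_mem hp' hr', _, add_mem hp1 hr1, _, add_mem hp2 hr2, ?_⟩
    rw [mul_add, ep, er]
    simp only [add_mul]
    abel
  | mul p r _ hr ihp ihr =>
    obtain ⟨p', hp', p1, hp1, p2, hp2, ep⟩ := ihp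
    obtain ⟨r', hr', r1, hr1, r2, hr2, er⟩ := ihr
    obtain ⟨s, hs, es⟩ := h.CC_mul_poly i (i + 1) hr
    refine ⟨_, mul_mem hp' hr', _, add_mem (mul_mem hp' hr1) (mul_mem hp1 hr), _,
      add_mem (mul_mem hp' hr2) (mul_mem hp2 hs), ?_⟩
    rw [← mul_assoc, ep, add_mul, add_mul, mul_assoc, er, mul_assoc p2, es]
    simp only [mul_add, add_mul, mul_assoc]
    abel

theorem Tp_mul_poly (hk : k ≤ n) {i : ℕ} (hi : i + 1 < k) {p : A} (hp : p ∈ polyAlg F x k) :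
    ∃ p' ∈ polyAlg F x k, ∃ r ∈ polyAlg F x k, ∃ s ∈ polyAlg F x k,
      Tp ξ C T i * p = p' * Tp ξ C T i + r + s * (C i * C (i + 1)) := by
  obtain ⟨p', hp', r, hr, s, hs, e⟩ := h.T_mul_poly hk hi hp
  obtain ⟨t, ht, et⟩ := h.CC_mul_poly i (i + 1) hp
  refine ⟨p', hp', r, hr, s - ξ • p' + ξ • t,
    add_mem (sub_mem hs (Subalgebra.smul_mem _ hp' ξ)) (Subalgebra.smul_mem _ ht ξ), ?_⟩
  rw [Tp, add_mul, e, smul_mul_assoc, et]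
  simp only [add_mul, sub_mul, mul_add, smul_mul_assoc, mul_smul_comm]
  abel

theorem fin_mul_mem_prodSpan (hk : k ≤ n) {b : A} (hb : b ∈ finAlg F C T k) :
    ∀ y ∈ prodSpan F x C T k, b * y ∈ prodSpan F x C T k := by
  refine mul_mem_of_mem_adjoin ?_ hb
  intro s hs y hy
  refine mul_mem_of_mem_span ?_ hy
  rintro _ ⟨p, hp, b, hb, rfl⟩
  obtain ⟨i, hi, rfl⟩ | ⟨i, hi, rfl⟩ := hs
  · obtain ⟨p', hp', e⟩ := h.C_mul_poly i hp
    rw [← mul_assoc, e, mul_assoc]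
    exact mul_mem_prodSpan hp' (mul_mem (C_mem_finAlg hi) hb)
  · obtain ⟨p', hp', r, hr, s, hs, e⟩ := h.T_mul_poly hk hi hp
    rw [← mul_assoc, e, add_mul, add_mul, mul_assoc, mul_assoc s]
    exact add_mem (add_mem (mul_mem_prodSpan hp' (mul_mem (T_mem_finAlg hi) hb))
      (mul_mem_prodSpan hr hb)) (mul_mem_prodSpan hs (mul_mem (mul_mem
      (C_mem_finAlg (by omega)) (C_mem_finAlg hi)) hb))

section Ideal

variable {f : A} (hfC : ∀ j, 0 < j → Commute (C j) f) (hfT : ∀ j, 0 < j → Commute (T j) f)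
  (hf0 : ∃ p ∈ polyAlg F x 1, C 0 * f = p * f * C 0)

theorem Tp_mul_mem_famSpan_of_mul_fam (hk : k ≤ n) {i m m' : ℕ} (hi : i + 1 < k) (hmm : m ≤ m')
    (hC : ∀ j < k, ∀ l < m, C j * fam ξ C T f l ∈ famSpan ξ x C T f k m)
    (hm : ∀ l < m, Tp ξ C T i * fam ξ C T f l ∈ famSpan ξ x C T f k m') {y : A}
    (hy : y ∈ famSpan ξ x C T f k m) : Tp ξ C T i * y ∈ famSpan ξ x C T f k m' := by
  refine mul_mem_of_mem_span ?_ hy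
  rintro _ ⟨l, hl, p, hp, b, hb, rfl⟩
  obtain ⟨p', hp', r, hr, s, hs, e⟩ := h.Tp_mul_poly hk hi hp
  rw [← mul_assoc, ← mul_assoc, e, add_mul, add_mul, add_mul, add_mul, mul_assoc p', mul_assoc s,
    mul_assoc (C i)]
  refine add_mem (add_mem (mul_fin_mem_famSpan hb (poly_mul_mem_famSpan hp' (hm l hl)))
    (mem_famSpan (hl.trans_le hmm) hr hb)) (famSpan_mono hmm (mul_fin_mem_famSpan hb
    (poly_mul_mem_famSpan hs ?_)))
  exact mul_mem_famSpan_of_mul_fam (fun p hp => h.C_mul_poly i hp) (hC i (by omega))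
    (hC _ hi l hl)

theorem Tp_mul_fam {i : ℕ} (hi : i + 1 < n) :
    Tp ξ C T i * fam ξ C T f i = fam ξ C T f (i + 1) * (T i - ξ • 1) := by
  rw [fam, mul_assoc _ (T i), h.T_mul_inv hi, mul_one]

include hfC hfT

theorem Tp_mul_fam_mem (hk : k ≤ n) {l : ℕ} (hl : l < k) {j : ℕ} (hj : j + 1 < k) :
    Tp ξ C T j * fam ξ C T f l ∈ famSpan ξ x C T f k k := by
  have hT : T j ∈ finAlg F C T k := T_mem_finAlg hj
  obtain hjl | hjl := lt_or_ge l j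
  · rw [(h.Tp_comm_fam_of_lt hfC hfT hjl).eq]
    exact fam_mul_mem_famSpan hl (Tp_mem_finAlg hj)
  obtain rfl | hjl := hjl.eq_or_lt
  · rw [h.Tp_mul_fam (by omega)]
    exact fam_mul_mem_famSpan hj (sub_mem hT (Subalgebra.smul_mem _ (one_mem _) ξ))
  obtain rfl | hjl := (Nat.succ_le_of_lt hjl).eq_or_lt
  · have e : Tp ξ C T j * fam ξ C T f (j + 1) =
        ξ • (fam ξ C T f (j + 1) * 1) + fam ξ C T f j * T j := by
      rw [fam, ← mul_assoc, ← mul_assoc, h.Tp_sq (by omega)]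
      simp only [add_mul, smul_mul_assoc, one_mul, mul_one]
    rw [e]
    exact add_mem (Submodule.smul_mem _ _ (fam_mul_mem_famSpan hj (one_mem _)))
      (fam_mul_mem_famSpan (by omega) hT)
  · rw [← (h.fam_comm_finAlg hfC hfT (by omega) (Tp_mem_finAlg (ξ := ξ) hjl)).eq]
    exact fam_mul_mem_famSpan hl (Tp_mem_finAlg hj)

include hf0

theorem C_mul_fam_mem (hk : k ≤ n) (l : ℕ) (hl : l < k) :
    ∀ j < k, C j * fam ξ C T f l ∈ famSpan ξ x C T f k (l + 1) := by
  induction l using Nat.strong_induction_on with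
  | _ l ih =>
  intro j hj
  obtain hjl | rfl | hjl := lt_trichotomy j l
  · rw [(h.C_comm_fam_of_gt hfC (by omega) hjl).eq]
    exact fam_mul_mem_famSpan (by omega) (C_mem_finAlg hj)
  · obtain _ | i := j
    · obtain ⟨p, hp, e⟩ := hf0
      rw [fam, e]
      exact mem_famSpan (l := 0) (by omega) (polyAlg_mono hj hp) (C_mem_finAlg hj)
    · have hT : T i ∈ finAlg F C T k := T_mem_finAlg hj
      have ih' : ∀ j < k, ∀ l < i + 1, C j * fam ξ C T f l ∈ famSpan ξ x C T f k (i + 1) :=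
        fun j hj l hl => famSpan_mono (by omega) (ih l hl (by omega) j hj)
      have e : C (i + 1) * fam ξ C T f (i + 1) =
          Tp ξ C T i * (C i * fam ξ C T f i * T i) +
          ξ • (C (i + 1) * fam ξ C T f i * T i - C i * fam ξ C T f i * T i) := by
        rw [fam, ← mul_assoc, ← mul_assoc, h.C_succ_mul_Tp (by omega)]
        simp only [add_mul, sub_mul, smul_mul_assoc, mul_assoc]
      rw [e]
      refine add_mem (h.Tp_mul_mem_famSpan_of_mul_fam hk hj (Nat.le_succ _) ih' ?_
        (mul_fin_mem_famSpan hT (ih' i (by omega) i (by omega)))) (famSpan_mono (Nat.le_succ _)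
        (Submodule.smul_mem _ _ (sub_mem (mul_fin_mem_famSpan hT (ih' (i + 1) hj i (by omega)))
          (mul_fin_mem_famSpan hT (ih' i (by omega) i (by omega))))))
      intro l hl
      obtain rfl | hli := eq_or_ne l i
      · rw [h.Tp_mul_fam (by omega)]
        exact fam_mul_mem_famSpan (by omega) (sub_mem hT (Subalgebra.smul_mem _ (one_mem _) ξ))
      · rw [(h.Tp_comm_fam_of_lt hfC hfT (show l < i by omega)).eq]
        exact fam_mul_mem_famSpan (by omega) (Tp_mem_finAlg hj)
  · rw [(h.C_comm_fam_of_lt hfC hjl).eq]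
    exact fam_mul_mem_famSpan (by omega) (C_mem_finAlg hj)

theorem Tp_mul_mem_famSpan (hk : k ≤ n) {j : ℕ} (hj : j + 1 < k) {y : A}
    (hy : y ∈ famSpan ξ x C T f k k) : Tp ξ C T j * y ∈ famSpan ξ x C T f k k :=
  h.Tp_mul_mem_famSpan_of_mul_fam hk hj le_rfl
    (fun j hj l hl => famSpan_mono hl (h.C_mul_fam_mem hfC hfT hf0 hk l hl j hj))
    (fun _ hl => h.Tp_mul_fam_mem hfC hfT hk hl hj) hy

theorem fin_mul_mem_famSpan (hk : k ≤ n) {b : A} (hb : b ∈ finAlg F C T k) :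
    ∀ y ∈ famSpan ξ x C T f k k, b * y ∈ famSpan ξ x C T f k k := by
  have hC : ∀ j < k, ∀ y ∈ famSpan ξ x C T f k k, C j * y ∈ famSpan ξ x C T f k k :=
    fun j hj y hy => mul_mem_famSpan_of_mul_fam (fun p hp => h.C_mul_poly j hp)
      (fun l hl => famSpan_mono hl (h.C_mul_fam_mem hfC hfT hf0 hk l hl j hj)) hy
  refine mul_mem_of_mem_adjoin ?_ hb
  rintro _ (⟨i, hi, rfl⟩ | ⟨i, hi, rfl⟩) y hy
  · exact hC i hi y hy
  · have e : T i * y = Tp ξ C T i * y - ξ • (C i * (C (i + 1) * y)) := by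
      rw [Tp, add_mul, smul_mul_assoc, mul_assoc, add_sub_cancel_right]
    rw [e]
    exact sub_mem (h.Tp_mul_mem_famSpan hfC hfT hf0 hk hi hy) (Submodule.smul_mem _ _
      (hC i (by omega) _ (hC _ hi y hy)))

theorem fam_mul_mem (hfx : ∀ i, Commute f (x i)) (hk : k ≤ n) (l : ℕ) (hl : l < k) :
    ∀ y ∈ prodSpan F x C T k, fam ξ C T f l * y ∈ famSpan ξ x C T f k k := by
  induction l with
  | zero =>
    intro y hy
    refine mul_mem_of_mem_span ?_ hy
    rintro _ ⟨p, hp, b, hb, rfl⟩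
    rw [← mul_assoc, fam, (commute_polyAlg (fun i _ => hfx i) hp).eq]
    exact mem_famSpan (l := 0) hl hp hb
  | succ l ih =>
    intro y hy
    rw [fam, mul_assoc, mul_assoc]
    exact h.Tp_mul_mem_famSpan hfC hfT hf0 hk hl
      (ih (by omega) _ (h.fin_mul_mem_prodSpan hk (T_mem_finAlg hl) y hy))

/-- Every product `u f v` lies in the span of the `p f_l b`. -/
theorem mul_mul_mem_famSpan (hfx : ∀ i, Commute f (x i)) (hk : k ≤ n) (hk0 : 0 < k) {u v : A}
    (hu : u ∈ prodSpan F x C T k) (hv : v ∈ prodSpan F x C T k) :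
    u * f * v ∈ famSpan ξ x C T f k k := by
  rw [mul_assoc]
  refine mul_mem_of_mem_span_right ?_ hu
  rintro _ ⟨p, hp, b, hb, rfl⟩
  rw [mul_assoc]
  exact poly_mul_mem_famSpan hp (h.fin_mul_mem_famSpan hfC hfT hf0 hk hb _
    (h.fam_mul_mem hfC hfT hf0 hfx hk 0 hk0 v hv))

end Ideal

end HCRel
end Abstract

section Abstract

variable {F A : Type} [Field F] [Ring A] [Algebra F A] {ξ : F} {n : ℕ} {x : ℕ → Aˣ}
  {C T : ℕ → A} {k : ℕ}

/-- The element `x^α f_Z`, restricted to the indices below `k`. -/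
def vec (x : ℕ → Aˣ) (φ : ℕ → A) (α : ℕ → ℤ) (Z : Finset ℕ) : ℕ → A
  | 0 => 1
  | k + 1 => ↑(x k ^ α k) * vec x φ α Z k * if k ∈ Z then φ k else 1

theorem vec_congr {φ : ℕ → A} {α β : ℕ → ℤ} {Z Y : Finset ℕ} (k : ℕ)
    (hα : ∀ i < k, α i = β i) (hZ : ∀ i < k, i ∈ Z ↔ i ∈ Y) :
    vec x φ α Z k = vec x φ β Y k := by
  induction k with
  | zero => rfl
  | succ k ih =>
    rw [vec, vec, hα k (Nat.lt_succ_self k),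
      ih (fun i hi => hα i (hi.trans (Nat.lt_succ_self k)))
        (fun i hi => hZ i (hi.trans (Nat.lt_succ_self k)))]
    simp only [hZ k (Nat.lt_succ_self k)]

/-- The span of the `x^α f_Z b` over the admissible `(α, Z)`; if `Q` holds, then `Z` is
required to be nonempty. -/
def vecSpan (F : Type) [Field F] [Algebra F A] (x : ℕ → Aˣ) (C T φ : ℕ → A) (d : ℕ) (Q : Prop)
    (k : ℕ) : Submodule F A :=
  Submodule.span F {y | ∃ α : ℕ → ℤ, ∃ Z : Finset ℕ,
    (∀ i < k, i ∉ Z → 0 ≤ α i ∧ α i < d) ∧ (Q → ∃ i < k, i ∈ Z) ∧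
    ∃ b ∈ finAlg F C T k, y = vec x φ α Z k * b}

variable {φ : ℕ → A} {d : ℕ} {Q : Prop}

theorem vec_mul_mem_vecSpan {α : ℕ → ℤ} {Z : Finset ℕ}
    (hα : ∀ i < k, i ∉ Z → 0 ≤ α i ∧ α i < d) (hZ : Q → ∃ i < k, i ∈ Z) {b : A}
    (hb : b ∈ finAlg F C T k) : vec x φ α Z k * b ∈ vecSpan F x C T φ d Q k :=
  Submodule.subset_span ⟨α, Z, hα, hZ, b, hb, rfl⟩

theorem mul_fin_mem_vecSpan {b y : A} (hb : b ∈ finAlg F C T k)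
    (hy : y ∈ vecSpan F x C T φ d Q k) : y * b ∈ vecSpan F x C T φ d Q k := by
  refine mul_mem_of_mem_span_right ?_ hy
  rintro _ ⟨α, Z, hα, hZ, b', hb', rfl⟩
  rw [mul_assoc]
  exact vec_mul_mem_vecSpan hα hZ (mul_mem hb' hb)

theorem zpow_mul_mem_vecSpan {e : ℤ} (he : 0 ≤ e) (hd : e < d) {y : A}
    (hy : y ∈ vecSpan F x C T φ d Q k) :
    ↑(x k ^ e) * y ∈ vecSpan F x C T φ d Q (k + 1) := by
  refine mul_mem_of_mem_span ?_ hy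
  rintro _ ⟨α, Z, hα, hZ, b, hb, rfl⟩
  have hv : vec x φ (Function.update α k e) (Z.erase k) (k + 1) = ↑(x k ^ e) * vec x φ α Z k := by
    rw [vec, Function.update_self, if_neg (Finset.notMem_erase k Z), mul_one]
    congr 1
    refine vec_congr k (fun i hi => Function.update_of_ne hi.ne _ _) (fun i hi => ?_)
    simp [hi.ne]
  rw [← mul_assoc, ← hv]
  refine vec_mul_mem_vecSpan ?_ ?_ (finAlg_mono (Nat.le_succ k) hb)
  · intro i hi hiZ
    obtain rfl | hik := eq_or_ne i k
    · rw [Function.update_self]; exact ⟨he, hd⟩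
    · rw [Function.update_of_ne hik]
      exact hα i (by omega) (fun hz => hiZ (Finset.mem_erase.2 ⟨hik, hz⟩))
  · intro hQ
    obtain ⟨i, hi, hz⟩ := hZ hQ
    exact ⟨i, by omega, Finset.mem_erase.2 ⟨hi.ne, hz⟩⟩

theorem zpow_mul_mul_mem_vecSpan {Q' : Prop} (hφ : ∀ b ∈ finAlg F C T k, Commute (φ k) b) (e : ℤ)
    {y : A} (hy : y ∈ vecSpan F x C T φ d Q' k) :
    ↑(x k ^ e) * y * φ k ∈ vecSpan F x C T φ d Q (k + 1) := by
  rw [mul_assoc]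
  suffices ∀ y ∈ vecSpan F x C T φ d Q' k, LinearMap.mulLeft F (↑(x k ^ e) : A)
      (LinearMap.mulRight F (φ k) y) ∈ vecSpan F x C T φ d Q (k + 1) from this y hy
  refine (Submodule.span_le (p := ((vecSpan F x C T φ d Q (k + 1)).comap
    (LinearMap.mulLeft F (↑(x k ^ e) : A))).comap (LinearMap.mulRight F (φ k)))).2 ?_
  rintro _ ⟨α, Z, hα, hZ, b, hb, rfl⟩
  have hv : vec x φ (Function.update α k e) (insert k Z) (k + 1) =
      ↑(x k ^ e) * vec x φ α Z k * φ k := by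
    rw [vec, Function.update_self, if_pos (Finset.mem_insert_self k Z)]
    congr 2
    refine vec_congr k (fun i hi => Function.update_of_ne hi.ne _ _) (fun i hi => ?_)
    simp [hi.ne]
  change ↑(x k ^ e) * (vec x φ α Z k * b * φ k) ∈ vecSpan F x C T φ d Q (k + 1)
  rw [mul_assoc _ b, ← (hφ b hb).eq, ← mul_assoc, ← mul_assoc, ← hv]
  refine vec_mul_mem_vecSpan ?_ (fun _ => ⟨k, by omega, Finset.mem_insert_self k Z⟩)
    (finAlg_mono (Nat.le_succ k) hb)
  intro i hi hiZ
  rw [Finset.mem_insert, not_or] at hiZ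
  rw [Function.update_of_ne hiZ.1]
  exact hα i (by omega) hiZ.2

/-- Reduction of the exponent of `x_k` modulo `f_k`. -/
theorem zpow_mul_mem_of_reduction {W J : Submodule F A} {g u w : A} {a₀ : F} (ha : a₀ ≠ 0)
    (hu : u ∈ finAlg F C T (k + 1)) (hw : w ∈ finAlg F C T (k + 1)) (huw : u * w = 1)
    (hg : g - (x k : A) ^ d - a₀ • u ∈ midSpan F x C T k d)
    (hWx : ∀ y ∈ W, Commute y (x k)) (hWp : ∀ y ∈ W, ∀ p ∈ polyAlg F x k, y * p ∈ W)
    (hJ : ∀ y ∈ J, ∀ b ∈ finAlg F C T (k + 1), y * b ∈ J)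
    (hlow : ∀ y ∈ W, ∀ e : ℤ, 0 ≤ e → e < d → ↑(x k ^ e) * y ∈ J)
    (hmul : ∀ y ∈ W, ∀ e : ℤ, ↑(x k ^ e) * y * g ∈ J) (hd : 0 < d) (e : ℤ) :
    ∀ y ∈ W, ↑(x k ^ e) * y ∈ J := by
  have hcomm : ∀ y ∈ W, ∀ a : ℕ, y * (x k : A) ^ a = (x k : A) ^ a * y := fun y hy a =>
    (hWx y hy).pow_right a
  have hpow : ∀ (e : ℤ) (a : ℕ), ↑(x k ^ e) * (x k : A) ^ a = ↑(x k ^ (e + a)) := by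
    intro e a
    rw [zpow_add, zpow_natCast, Units.val_mul, Units.val_pow_eq_pow_val]
  have hshift : ∀ y ∈ W, ∀ (e : ℤ) (a : ℕ),
      ↑(x k ^ e) * y * (x k : A) ^ a = ↑(x k ^ (e + a)) * y := fun y hy e a => by
    rw [mul_assoc, hcomm y hy, ← mul_assoc, hpow]
  have hmid : ∀ e : ℤ, (∀ a : ℕ, 0 < a → a < d → ∀ y ∈ W, ↑(x k ^ (e + a)) * y ∈ J) →
      ∀ y ∈ W, ∀ m ∈ midSpan F x C T k d, ↑(x k ^ e) * y * m ∈ J := by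
    intro e he y hy m hm
    refine mul_mem_of_mem_span ?_ hm
    rintro _ ⟨a, h0, h1, p, hp, b, hb, rfl⟩
    rw [← mul_assoc, ← mul_assoc, hshift y hy, mul_assoc _ y]
    exact hJ _ (he a h0 h1 _ (hWp y hy p hp)) b hb
  have hsplit : ∀ y ∈ W, ∀ e : ℤ, ↑(x k ^ e) * y * (g - (x k : A) ^ d - a₀ • u) =
      ↑(x k ^ e) * y * g - ↑(x k ^ (e + d)) * y - a₀ • (↑(x k ^ e) * y * u) := by
    intro y hy e
    rw [mul_sub, mul_sub, hshift y hy, mul_smul_comm]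
  have hup : ∀ m : ℕ, ∀ y ∈ W, ↑(x k ^ (m : ℤ)) * y ∈ J := by
    intro m
    induction m using Nat.strong_induction_on with
    | _ m ih =>
    intro y hy
    obtain hmd | hmd := lt_or_ge m d
    · exact hlow y hy m (by omega) (by omega)
    obtain ⟨r, rfl⟩ := Nat.exists_eq_add_of_le' hmd
    have hm := hmid r (fun a h0 h1 => by exact_mod_cast ih (r + a) (by omega)) y hy _ hg
    rw [hsplit y hy] at hm
    have e2 := J.smul_mem a₀ (hJ _ (ih r (by omega) y hy) u hu)
    have := sub_mem (sub_mem (hmul y hy r) hm) e2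
    rw [Nat.cast_add]
    convert this using 1
    abel
  have hdown : ∀ m : ℕ, ∀ y ∈ W, ↑(x k ^ (-(m : ℤ))) * y ∈ J := by
    intro m
    induction m using Nat.strong_induction_on with
    | _ m ih =>
    have ih' : ∀ a : ℕ, 0 < a → ∀ y ∈ W, ↑(x k ^ (-(m : ℤ) + a)) * y ∈ J := by
      intro a ha
      obtain hma | hma := le_total m a
      · obtain ⟨r, rfl⟩ := Nat.exists_eq_add_of_le hma
        have : -(m : ℤ) + ((m + r : ℕ) : ℤ) = r := by push_cast; ring
        rw [this]
        exact hup r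
      · have : -(m : ℤ) + (a : ℤ) = -((m - a : ℕ) : ℤ) := by omega
        rw [this]
        exact ih _ (by omega)
    intro y hy
    have hm := hmid _ (fun a h0 _ => ih' a h0) y hy _ hg
    rw [hsplit y hy] at hm
    have e2 := sub_mem (sub_mem (hmul y hy (-(m : ℤ))) (ih' d hd y hy)) hm
    rw [sub_sub_cancel] at e2
    have e3 := hJ _ (J.smul_mem a₀⁻¹ e2) w hw
    rwa [smul_smul, inv_mul_cancel₀ ha, one_smul, mul_assoc, huw, mul_one] at e3
  obtain ⟨m, rfl | rfl⟩ := e.eq_nat_or_neg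
  · exact hup m
  · exact hdown m

theorem mem_span_zpow_mul_poly (hx : ∀ i j, (x i : A) * x j = x j * x i) {p : A}
    (hp : p ∈ polyAlg F x (k + 1)) :
    p ∈ Submodule.span F {y | ∃ e : ℤ, ∃ r ∈ polyAlg F x k, y = ↑(x k ^ e) * r} := by
  have h1 : (1 : A) ∈ Submodule.span F {y | ∃ e : ℤ, ∃ r ∈ polyAlg F x k, y = ↑(x k ^ e) * r} :=
    Submodule.subset_span ⟨0, 1, one_mem _, by simp⟩
  have hz : ∀ i, ∀ e : ℤ, Commute (x i : A) (↑(x k ^ e) : A) := by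
    intro i e
    have : Commute (x i) (x k) := Units.ext (hx i k)
    exact congrArg Units.val (this.zpow_right e).eq
  refine mul_one p ▸ mul_mem_of_mem_adjoin ?_ hp 1 h1
  rintro s ⟨i, hi, hs⟩ y hy
  refine mul_mem_of_mem_span ?_ hy
  rintro _ ⟨e, r, hr, rfl⟩
  obtain hik | rfl := Nat.lt_succ_iff_lt_or_eq.1 hi
  · obtain rfl | rfl := hs
    · exact Submodule.subset_span ⟨e, x i * r, mul_mem (x_mem_polyAlg hik) hr, by
        rw [← mul_assoc, (hz i e).eq, mul_assoc]⟩
    · exact Submodule.subset_span ⟨e, ↑(x i)⁻¹ * r, mul_mem (x_inv_mem_polyAlg hik) hr, by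
        rw [← mul_assoc, (hz i e).units_inv_left.eq, mul_assoc]⟩
  · obtain rfl | rfl := hs
    · exact Submodule.subset_span ⟨1 + e, r, hr, by
        rw [zpow_one_add, Units.val_mul, mul_assoc]⟩
    · exact Submodule.subset_span ⟨-1 + e, r, hr, by
        rw [zpow_add, zpow_neg_one, Units.val_mul, mul_assoc]⟩

namespace HCRel

variable (h : HCRel ξ n x C T)
include h

theorem x_comm_finAlg {b : A} (hb : b ∈ finAlg F C T k) : Commute (x k : A) b :=
  commute_finAlg (fun _ hi => (h.C_x_ne hi.ne).symm)
    (fun _ hi => (h.T_x_ne (by omega) (by omega)).symm) hb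

theorem x_comm_polyAlg (i : ℕ) {p : A} (hp : p ∈ polyAlg F x k) : Commute (x i : A) p :=
  commute_polyAlg (fun j _ => h.x_comm i j) hp

theorem commute_x_of_mem_prodSpan {y : A} (hy : y ∈ prodSpan F x C T k) : Commute y (x k) := by
  induction hy using Submodule.span_induction with
  | mem y hy =>
    obtain ⟨p, hp, b, hb, rfl⟩ := hy
    exact ((h.x_comm_polyAlg k hp).mul_right (h.x_comm_finAlg hb)).symm
  | zero => exact Commute.zero_left _
  | add y z _ _ hy hz => exact hy.add_left hz
  | smul r y _ hy => exact hy.smul_left r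

theorem mul_poly_mem_prodSpan (hk : k ≤ n) {y p : A} (hy : y ∈ prodSpan F x C T k)
    (hp : p ∈ polyAlg F x k) : y * p ∈ prodSpan F x C T k := by
  refine mul_mem_of_mem_span_right ?_ hy
  rintro _ ⟨r, hr, b, hb, rfl⟩
  rw [mul_assoc]
  refine poly_mul_mem_prodSpan hr (h.fin_mul_mem_prodSpan hk hb p ?_)
  simpa using mul_mem_prodSpan (T := T) hp (one_mem (finAlg F C T k))

variable {f : A} {a₀ : F}

theorem x_comm_fam (hfx : ∀ i, Commute f (x i)) {l : ℕ} (hl : l < k) :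
    Commute (x k : A) (fam ξ C T f l) := by
  induction l with
  | zero => exact (hfx k).symm
  | succ l ih =>
    exact ((h.x_comm_finAlg (Tp_mem_finAlg hl)).mul_right (ih (by omega))).mul_right
      (h.x_comm_finAlg (T_mem_finAlg hl))

theorem commute_x_of_mem_famSpan (hfx : ∀ i, Commute f (x i)) {m : ℕ} (hm : m ≤ k) {y : A}
    (hy : y ∈ famSpan ξ x C T f k m) : Commute y (x k) := by
  induction hy using Submodule.span_induction with
  | mem y hy =>
    obtain ⟨l, hl, p, hp, b, hb, rfl⟩ := hy
    exact (((h.x_comm_polyAlg k hp).mul_right (h.x_comm_fam hfx (hl.trans_le hm))).mul_right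
      (h.x_comm_finAlg hb)).symm
  | zero => exact Commute.zero_left _
  | add y z _ _ hy hz => exact hy.add_left hz
  | smul r y _ hy => exact hy.smul_left r

variable (hfC : ∀ j, 0 < j → Commute (C j) f) (hfT : ∀ j, 0 < j → Commute (T j) f)
  (hd : 0 < d) (ha : a₀ ≠ 0)
  (hexp : ∀ k < n, ∃ u ∈ finAlg F C T (k + 1), ∃ w ∈ finAlg F C T (k + 1), u * w = 1 ∧ w * u = 1 ∧
    fam ξ C T f k - (x k : A) ^ d - a₀ • u ∈ midSpan F x C T k d)
include hfC hfT hd ha hexp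

theorem prodSpan_le_vecSpan (hk : k ≤ n) :
    prodSpan F x C T k ≤ vecSpan F x C T (fam ξ C T f) d False k := by
  induction k with
  | zero =>
    refine Submodule.span_le.2 ?_
    rintro _ ⟨p, hp, b, hb, rfl⟩
    have hp' : p ∈ (⊥ : Subalgebra F A) := by
      convert hp using 1
      rw [polyAlg, ← Algebra.adjoin_empty]
      congr 1
      ext a
      simp
    obtain ⟨r, rfl⟩ := Algebra.mem_bot.1 hp'
    rw [← Algebra.smul_def]
    refine Submodule.smul_mem _ _ ?_
    simpa [vec] using vec_mul_mem_vecSpan (x := x) (φ := fam ξ C T f) (d := d) (α := 0) (Z := ∅)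
      (Q := False) (k := 0) (by simp) (by simp) hb
  | succ k ih =>
    obtain ⟨u, hu, w, hw, huw, -, hg⟩ := hexp k hk
    have key := zpow_mul_mem_of_reduction (W := prodSpan F x C T k)
      (J := vecSpan F x C T (fam ξ C T f) d False (k + 1)) ha hu hw huw hg
      (fun y hy => h.commute_x_of_mem_prodSpan hy)
      (fun y hy p hp => h.mul_poly_mem_prodSpan (by omega) hy hp)
      (fun y hy b hb => mul_fin_mem_vecSpan hb hy)
      (fun y hy e h0 h1 => zpow_mul_mem_vecSpan h0 h1 (ih (by omega) hy))
      (fun y hy e => zpow_mul_mul_mem_vecSpan (fun b hb => h.fam_comm_finAlg hfC hfT (by omega) hb)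
        e (ih (by omega) hy)) hd
    refine Submodule.span_le.2 ?_
    rintro _ ⟨p, hp, b, hb, rfl⟩
    refine mul_fin_mem_vecSpan hb ((Submodule.span_le.2 ?_) (mem_span_zpow_mul_poly h.x_comm hp))
    rintro _ ⟨e, r, hr, rfl⟩
    refine key e r ?_
    simpa using mul_mem_prodSpan (T := T) hr (one_mem (finAlg F C T k))

theorem famSpan_le_vecSpan (hf0 : ∃ p ∈ polyAlg F x 1, C 0 * f = p * f * C 0)
    (hfx : ∀ i, Commute f (x i)) (hk : k ≤ n) :
    famSpan ξ x C T f k k ≤ vecSpan F x C T (fam ξ C T f) d True k := by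
  induction k with
  | zero =>
    refine Submodule.span_le.2 ?_
    rintro _ ⟨l, hl, -⟩
    exact absurd hl (Nat.not_lt_zero l)
  | succ k ih =>
    obtain ⟨u, hu, w, hw, huw, -, hg⟩ := hexp k hk
    have hcomm : ∀ b ∈ finAlg F C T k, Commute (fam ξ C T f k) b :=
      fun b hb => h.fam_comm_finAlg hfC hfT (by omega) hb
    have key := zpow_mul_mem_of_reduction (W := famSpan ξ x C T f k k)
      (J := vecSpan F x C T (fam ξ C T f) d True (k + 1)) ha hu hw huw hg
      (fun y hy => h.commute_x_of_mem_famSpan hfx le_rfl hy)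
      (fun y hy p hp => by
        refine mul_mem_of_mem_span_right ?_ hy
        rintro _ ⟨l, hl, r, hr, b, hb, rfl⟩
        rw [mul_assoc, mul_assoc]
        refine poly_mul_mem_famSpan hr (h.fam_mul_mem hfC hfT hf0 hfx (by omega) l hl _
          (h.fin_mul_mem_prodSpan (by omega) hb p ?_))
        simpa using mul_mem_prodSpan (T := T) hp (one_mem (finAlg F C T k)))
      (fun y hy b hb => mul_fin_mem_vecSpan hb hy)
      (fun y hy e h0 h1 => zpow_mul_mem_vecSpan h0 h1 (ih (by omega) hy))
      (fun y hy e => zpow_mul_mul_mem_vecSpan hcomm e (ih (by omega) hy)) hd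
    refine Submodule.span_le.2 ?_
    rintro _ ⟨l, hl, p, hp, b, hb, rfl⟩
    refine mul_fin_mem_vecSpan hb
      (mul_mem_of_mem_span_right ?_ (mem_span_zpow_mul_poly h.x_comm hp))
    rintro _ ⟨e, r, hr, rfl⟩
    obtain hlk | rfl := Nat.lt_succ_iff_lt_or_eq.1 hl
    · rw [mul_assoc]
      refine key e _ ?_
      simpa using mem_famSpan (ξ := ξ) (f := f) (T := T) hlk hr (one_mem (finAlg F C T k))
    · refine zpow_mul_mul_mem_vecSpan hcomm e
        (h.prodSpan_le_vecSpan hfC hfT hd ha hexp (by omega) ?_)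
      simpa using mul_mem_prodSpan (T := T) hr (one_mem (finAlg F C T l))

end HCRel
end Abstract

section Abstract

/-- The exponent of the leading monomial of `x^α f_Z`. -/
def lead (d : ℕ) (α : ℕ → ℤ) (Z : Finset ℕ) (i : ℕ) : ℤ :=
  if i ∈ Z ∧ 0 ≤ α i then α i + d else α i

/-- The size of an exponent relative to the window `[0, d)`. -/
def expSize (d : ℕ) (e : ℤ) : ℕ := if e < 0 then (-e).toNat else (e - d + 1).toNat

/-- The colexicographic order of the functions `ℕ → ℕ`, restricted to the indices below `k`. -/
def ColexLT (k : ℕ) (g g' : ℕ → ℕ) : Prop :=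
  ∃ j < k, g j < g' j ∧ ∀ i, j < i → i < k → g i = g' i

/-- A nonempty finite family has an element which is not below any other one. -/
theorem exists_not_colexLT {ι : Type} (g : ι → ℕ → ℕ) (k : ℕ) (s : Finset ι) (hs : s.Nonempty) :
    ∃ p ∈ s, ∀ r ∈ s, ¬ ColexLT k (g p) (g r) := by
  classical
  induction k generalizing s with
  | zero =>
    obtain ⟨p, hp⟩ := hs
    exact ⟨p, hp, fun r _ ⟨j, hj, _⟩ => absurd hj (Nat.not_lt_zero j)⟩
  | succ k ih =>
    obtain ⟨m, hm, hmax⟩ := s.exists_max_image (fun p => g p k) hs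
    obtain ⟨p, hp, hpmax⟩ := ih (s.filter fun p => g p k = g m k)
      ⟨m, Finset.mem_filter.2 ⟨hm, rfl⟩⟩
    obtain ⟨hps, hpk⟩ := Finset.mem_filter.1 hp
    refine ⟨p, hps, fun r hr ⟨j, hj, hlt, heq⟩ => ?_⟩
    obtain hjk | rfl := Nat.lt_succ_iff_lt_or_eq.1 hj
    · refine hpmax r (Finset.mem_filter.2 ⟨hr, ?_⟩)
        ⟨j, hjk, hlt, fun i h1 h2 => heq i h1 (by omega)⟩
      rw [← hpk, heq k hjk (by omega)]
    · have := hmax r hr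
      omega

theorem lead_injective {d : ℕ} {α β : ℕ → ℤ} {Z Y : Finset ℕ} {i : ℕ}
    (hα : i ∉ Z → 0 ≤ α i ∧ α i < d) (hβ : i ∉ Y → 0 ≤ β i ∧ β i < d)
    (he : lead d α Z i = lead d β Y i) : α i = β i ∧ (i ∈ Z ↔ i ∈ Y) := by
  unfold lead at he
  by_cases hZ : i ∈ Z <;> by_cases hY : i ∈ Y <;>
    simp only [hZ, hY, true_and, false_and, if_false, not_true_eq_false, not_false_eq_true,
      forall_const, IsEmpty.forall_iff] at he hα hβ ⊢ <;>
    (try split_ifs at he) <;> simp <;> omega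

variable {F A : Type} [Field F] [Ring A] [Algebra F A] {ξ : F} {n : ℕ} {x : ℕ → Aˣ}
  {C T : ℕ → A} {k : ℕ} {d : ℕ}

/-- The Laurent monomial `x^γ`, restricted to the indices below `k`. -/
def mon (x : ℕ → Aˣ) (γ : ℕ → ℤ) : ℕ → A
  | 0 => 1
  | k + 1 => ↑(x k ^ γ k) * mon x γ k

theorem mon_congr {γ δ : ℕ → ℤ} (k : ℕ) (hγ : ∀ i < k, γ i = δ i) : mon x γ k = mon x δ k := by
  induction k with
  | zero => rfl
  | succ k ih =>
    rw [mon, mon, hγ k (Nat.lt_succ_self k), ih fun i hi => hγ i (hi.trans (Nat.lt_succ_self k))]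

theorem mon_update (γ : ℕ → ℤ) (k : ℕ) (e : ℤ) :
    mon x (Function.update γ k e) (k + 1) = ↑(x k ^ e) * mon x γ k := by
  rw [mon, Function.update_self, mon_congr k fun i hi => Function.update_of_ne hi.ne _ _]

theorem mon_mem_polyAlg (γ : ℕ → ℤ) (k : ℕ) : mon x γ k ∈ polyAlg F x k := by
  induction k with
  | zero => exact one_mem _
  | succ k ih =>
    exact mul_mem (x_zpow_mem_polyAlg (Nat.lt_succ_self k) _) (polyAlg_mono (Nat.le_succ k) ih)

theorem mem_span_mon (hx : ∀ i j, (x i : A) * x j = x j * x i) {p : A} (k : ℕ)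
    (hp : p ∈ polyAlg F x k) : p ∈ Submodule.span F {y | ∃ γ, y = mon x γ k} := by
  induction k generalizing p with
  | zero =>
    have h1 : (1 : A) ∈ Submodule.span F {y | ∃ γ, y = mon x γ 0} :=
      Submodule.subset_span ⟨0, rfl⟩
    refine mul_one p ▸ mul_mem_of_mem_adjoin ?_ hp 1 h1
    rintro s ⟨i, hi, -⟩
    exact absurd hi (Nat.not_lt_zero i)
  | succ k ih =>
    refine (Submodule.span_le.2 ?_) (mem_span_zpow_mul_poly hx hp)
    rintro _ ⟨e, r, hr, rfl⟩
    refine mul_mem_of_mem_span ?_ (ih hr)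
    rintro _ ⟨γ, rfl⟩
    exact Submodule.subset_span ⟨Function.update γ k e, (mon_update γ k e).symm⟩

/-- The span of the `x^δ b` with `δ` smaller than `γ`. -/
def lowSpan (F : Type) [Field F] [Algebra F A] (x : ℕ → Aˣ) (C T : ℕ → A) (d : ℕ) (γ : ℕ → ℤ)
    (k : ℕ) : Submodule F A :=
  Submodule.span F {y | ∃ δ : ℕ → ℤ, ColexLT k (expSize d ∘ δ) (expSize d ∘ γ) ∧
    ∃ b ∈ finAlg F C T k, y = mon x δ k * b}

variable {γ : ℕ → ℤ}

theorem mul_fin_mem_lowSpan {b y : A} (hb : b ∈ finAlg F C T k)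
    (hy : y ∈ lowSpan F x C T d γ k) : y * b ∈ lowSpan F x C T d γ k := by
  refine mul_mem_of_mem_span_right ?_ hy
  rintro _ ⟨δ, hδ, b', hb', rfl⟩
  rw [mul_assoc]
  exact Submodule.subset_span ⟨δ, hδ, _, mul_mem hb' hb, rfl⟩

theorem lowSpan_le_prodSpan : lowSpan F x C T d γ k ≤ prodSpan F x C T k := by
  refine Submodule.span_le.2 ?_
  rintro _ ⟨δ, -, b, hb, rfl⟩
  exact mul_mem_prodSpan (mon_mem_polyAlg δ k) hb

theorem zpow_mul_mem_lowSpan {y : A} (hy : y ∈ lowSpan F x C T d γ k) :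
    ↑(x k ^ γ k) * y ∈ lowSpan F x C T d γ (k + 1) := by
  refine mul_mem_of_mem_span ?_ hy
  rintro _ ⟨δ, ⟨j, hj, hlt, heq⟩, b, hb, rfl⟩
  rw [← mul_assoc, ← mon_update]
  refine Submodule.subset_span ⟨_, ⟨j, by omega, ?_, fun i h1 h2 => ?_⟩, b,
    finAlg_mono (Nat.le_succ k) hb, rfl⟩
  · simpa [Function.update_of_ne hj.ne] using hlt
  · obtain hik | rfl := Nat.lt_succ_iff_lt_or_eq.1 h2
    · simpa [Function.update_of_ne hik.ne] using heq i h1 hik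
    · simp

theorem zpow_mul_mem_lowSpan_of_lt (hx : ∀ i j, (x i : A) * x j = x j * x i) {e : ℤ}
    (he : expSize d e < expSize d (γ k)) {y : A} (hy : y ∈ prodSpan F x C T k) :
    ↑(x k ^ e) * y ∈ lowSpan F x C T d γ (k + 1) := by
  refine mul_mem_of_mem_span ?_ hy
  rintro _ ⟨p, hp, b, hb, rfl⟩
  rw [← mul_assoc]
  refine mul_fin_mem_lowSpan (finAlg_mono (Nat.le_succ k) hb) ?_
  refine mul_mem_of_mem_span ?_ (mem_span_mon hx k hp)
  rintro _ ⟨δ, rfl⟩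
  refine Submodule.subset_span ⟨_, ⟨k, Nat.lt_succ_self k, ?_, fun i h1 h2 => by omega⟩, 1,
    one_mem _, by rw [mul_one, mon_update δ k e]⟩
  simpa using he

namespace HCRel

variable (h : HCRel ξ n x C T)
include h

variable {f : A} {a₀ : F} (hd : 0 < d) (ha : a₀ ≠ 0)
  (hexp : ∀ k < n, ∃ u ∈ finAlg F C T (k + 1), ∃ w ∈ finAlg F C T (k + 1), u * w = 1 ∧ w * u = 1 ∧
    fam ξ C T f k - (x k : A) ^ d - a₀ • u ∈ midSpan F x C T k d)
include hd ha hexp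

/-- The leading term of `x^α f_Z`. -/
theorem exists_vec_eq {α : ℕ → ℤ} {Z : Finset ℕ} (hk : k ≤ n) :
    ∃ u ∈ finAlg F C T k, ∃ w ∈ finAlg F C T k, w * u = 1 ∧
      vec x (fam ξ C T f) α Z k - mon x (lead d α Z) k * u ∈
        lowSpan F x C T d (lead d α Z) k := by
  induction k with
  | zero => exact ⟨1, one_mem _, 1, one_mem _, one_mul 1, by simp [vec, mon]⟩
  | succ k ih =>
    obtain ⟨u, hu, w, hw, hwu, hv⟩ := ih (by omega)
    have hu' := finAlg_mono (Nat.le_succ k) hu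
    have hw' := finAlg_mono (Nat.le_succ k) hw
    set v := vec x (fam ξ C T f) α Z k with hvdef
    have hvP : v ∈ prodSpan F x C T k := by
      have := add_mem (lowSpan_le_prodSpan hv) (mul_mem_prodSpan (mon_mem_polyAlg (lead d α Z) k) hu)
      rwa [sub_add_cancel] at this
    have hmain : ↑(x k ^ lead d α Z k) * v - mon x (lead d α Z) (k + 1) * u ∈
        lowSpan F x C T d (lead d α Z) (k + 1) := by
      have := zpow_mul_mem_lowSpan hv
      rwa [mul_sub, ← mul_assoc, ← mon] at this
    rw [vec, ← hvdef]
    by_cases hkZ : k ∈ Z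
    swap
    · have hl : lead d α Z k = α k := if_neg fun hh => hkZ hh.1
      rw [hl] at hmain
      rw [if_neg hkZ, mul_one]
      exact ⟨u, hu', w, hw', hwu, hmain⟩
    rw [if_pos hkZ]
    obtain ⟨u₁, hu₁, w₁, hw₁, -, hwu₁, hg⟩ := hexp k hk
    have hshift : ∀ y ∈ prodSpan F x C T k, ∀ a : ℕ,
        ↑(x k ^ α k) * y * (x k : A) ^ a = ↑(x k ^ (α k + a)) * y := by
      intro y hy a
      rw [mul_assoc, ((h.commute_x_of_mem_prodSpan hy).pow_right a).eq, ← mul_assoc, zpow_add,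
        zpow_natCast, Units.val_mul, Units.val_pow_eq_pow_val]
    have hmid : (∀ a : ℕ, 0 < a → a < d →
        expSize d (α k + a) < expSize d (lead d α Z k)) →
        ↑(x k ^ α k) * v * (fam ξ C T f k - (x k : A) ^ d - a₀ • u₁) ∈
          lowSpan F x C T d (lead d α Z) (k + 1) := by
      intro hlt
      refine mul_mem_of_mem_span ?_ hg
      rintro _ ⟨a, h0, h1, p, hp, b, hb, rfl⟩
      rw [← mul_assoc, ← mul_assoc, hshift v hvP, mul_assoc _ v]
      exact mul_fin_mem_lowSpan hb (zpow_mul_mem_lowSpan_of_lt h.x_comm (hlt a h0 h1)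
        (h.mul_poly_mem_prodSpan (by omega) hvP hp))
    have hsplit : ↑(x k ^ α k) * v * (fam ξ C T f k - (x k : A) ^ d - a₀ • u₁) =
        ↑(x k ^ α k) * v * fam ξ C T f k - ↑(x k ^ (α k + d)) * v -
          a₀ • (↑(x k ^ α k) * v * u₁) := by
      rw [mul_sub, mul_sub, hshift v hvP, mul_smul_comm]
    rw [hsplit] at hmid
    by_cases h0 : 0 ≤ α k
    · have hl : lead d α Z k = α k + d := if_pos ⟨hkZ, h0⟩
      refine ⟨u, hu', w, hw', hwu, ?_⟩
      have h1 := hmid fun a h1 h2 => by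
        rw [hl]
        unfold expSize
        split_ifs <;> omega
      have h2 := mul_fin_mem_lowSpan hu₁ (zpow_mul_mem_lowSpan_of_lt h.x_comm
        (show expSize d (α k) < expSize d (lead d α Z k) by
          rw [hl]; unfold expSize; split_ifs <;> omega) hvP)
      rw [hl] at hmain
      convert add_mem (add_mem h1 hmain) (Submodule.smul_mem _ a₀ h2) using 1
      abel
    · have hl : lead d α Z k = α k := if_neg fun hh => h0 hh.2
      refine ⟨a₀ • (u * u₁), Subalgebra.smul_mem _ (mul_mem hu' hu₁) _, a₀⁻¹ • (w₁ * w),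
        Subalgebra.smul_mem _ (mul_mem hw₁ hw') _, ?_, ?_⟩
      · rw [smul_mul_smul_comm, inv_mul_cancel₀ ha, one_smul, mul_assoc, ← mul_assoc w, hwu,
          one_mul, hwu₁]
      have h1 := hmid fun a h1 h2 => by
        rw [hl]
        unfold expSize
        split_ifs <;> omega
      have h2 := zpow_mul_mem_lowSpan_of_lt (γ := lead d α Z) h.x_comm
        (show expSize d (α k + d) < expSize d (lead d α Z k) by
          rw [hl]; unfold expSize; split_ifs <;> omega) hvP
      rw [hl] at hmain
      have h3 := Submodule.smul_mem _ a₀ (mul_fin_mem_lowSpan hu₁ hmain)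
      convert add_mem (add_mem h1 h2) h3 using 1
      rw [sub_mul, smul_sub, mul_smul_comm, mul_assoc _ u u₁]
      abel

open Classical in
/-- The `x^α f_Z` are linearly independent over `H^fn_n`, if the `x^γ` are. -/
theorem eq_zero_of_sum_vec_eq_zero
    (hψ : ∀ γ : ℕ → ℤ, ∃ ψ : A →ₗ[F] A, ∀ δ : ℕ → ℤ, ∀ b ∈ finAlg F C T n,
      ψ (mon x δ n * b) = if ∀ i < n, δ i = γ i then b else 0)
    {ι : Type} (α : ι → ℕ → ℤ) (Z : ι → Finset ℕ)
    (hα : ∀ p, ∀ i < n, i ∉ Z p → 0 ≤ α p i ∧ α p i < d)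
    (hinj : ∀ p r, (∀ i < n, α p i = α r i ∧ (i ∈ Z p ↔ i ∈ Z r)) → p = r)
    (s : Finset ι) (c : ι → A) (hc : ∀ p, c p ∈ finAlg F C T n)
    (hsum : ∑ p ∈ s, vec x (fam ξ C T f) (α p) (Z p) n * c p = 0) : ∀ p ∈ s, c p = 0 := by
  by_contra! hne
  obtain ⟨p₀, hp₀, hcp₀⟩ := hne
  obtain ⟨p, hp, hmax⟩ := exists_not_colexLT (fun p => expSize d ∘ lead d (α p) (Z p)) n
    (s.filter fun p => c p ≠ 0) ⟨p₀, Finset.mem_filter.2 ⟨hp₀, hcp₀⟩⟩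
  obtain ⟨hps, hcp⟩ := Finset.mem_filter.1 hp
  obtain ⟨ψ, hψ⟩ := hψ (lead d (α p) (Z p))
  have hlow : ∀ r ∈ s, c r ≠ 0 → ∀ y ∈ lowSpan F x C T d (lead d (α r) (Z r)) n, ψ y = 0 := by
    intro r hr hcr
    refine (Submodule.span_le (p := LinearMap.ker ψ)).2 ?_
    rintro _ ⟨δ, hδ, b, hb, rfl⟩
    rw [SetLike.mem_coe, LinearMap.mem_ker, hψ δ b hb, if_neg]
    intro hδp
    refine hmax r (Finset.mem_filter.2 ⟨hr, hcr⟩) ?_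
    obtain ⟨j, hj, hlt, heq⟩ := hδ
    refine ⟨j, hj, ?_, fun i h1 h2 => ?_⟩
    · simpa [hδp j hj] using hlt
    · simpa [hδp i h2] using heq i h1 h2
  have hval : ∀ r, ∃ u ∈ finAlg F C T n, ∃ w ∈ finAlg F C T n, w * u = 1 ∧ (r ∈ s → c r ≠ 0 →
      ψ (vec x (fam ξ C T f) (α r) (Z r) n * c r) =
        if ∀ i < n, lead d (α r) (Z r) i = lead d (α p) (Z p) i then u * c r else 0) := by
    intro r
    obtain ⟨u, hu, w, hw, hwu, hv⟩ :=
      h.exists_vec_eq hd ha hexp (α := α r) (Z := Z r) (k := n) le_rfl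
    refine ⟨u, hu, w, hw, hwu, fun hr hcr => ?_⟩
    have h1 := hlow r hr hcr _ (mul_fin_mem_lowSpan (hc r) hv)
    rw [sub_mul, map_sub, sub_eq_zero, mul_assoc _ u] at h1
    rw [h1, hψ _ _ (mul_mem hu (hc r))]
  obtain ⟨u, -, w, -, hwu, hu⟩ := hval p
  have hz := congrArg ψ hsum
  rw [map_sum, map_zero, Finset.sum_eq_single_of_mem p hps, hu hps hcp,
    if_pos fun _ _ => rfl] at hz
  · refine hcp ?_
    rw [← one_mul (c p), ← hwu, mul_assoc, hz, mul_zero]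
  · intro r hr hrp
    by_cases hcr : c r = 0
    · rw [hcr, mul_zero, map_zero]
    · obtain ⟨_, -, _, -, -, hu⟩ := hval r
      rw [hu hr hcr, if_neg]
      exact fun he => hrp (hinj r p fun i hi =>
        lead_injective (hα r i hi) (hα p i hi) (he i hi))

end HCRel
end Abstract

section Abstract

variable {F A : Type} [Field F] [Ring A] [Algebra F A] {ξ : F} {n : ℕ} {x : ℕ → Aˣ}
  {C T : ℕ → A} {k : ℕ} {d : ℕ}

/-- A polynomial with constant coefficient `a₀`, monic of degree `d`. -/
theorem sum_sub_mem_midSpan {aa : ℕ → F} (h1 : aa (d + 1) = 1) :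
    ∑ i ∈ Finset.range (d + 1 + 1), aa i • (x 0 : A) ^ i - (x 0 : A) ^ (d + 1) - aa 0 • 1 ∈
      midSpan F x C T 0 (d + 1) := by
  rw [Finset.sum_range_succ, Finset.sum_range_succ', h1, one_smul, pow_zero, add_sub_cancel_right,
    add_sub_cancel_right]
  refine Submodule.sum_mem _ fun i hi => Submodule.smul_mem _ _ ?_
  rw [Finset.mem_range] at hi
  simpa using mem_midSpan (F := F) (x := x) (C := C) (T := T) (k := 0) (a := i + 1) (e := d + 1)
    (by omega) (by omega) (one_mem _) (one_mem _)

theorem HCRel.C_zero_mul_sum (h : HCRel ξ n x C T) {aa : ℕ → F}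
    (haa : ∀ i ≤ d, aa i = aa 0 * aa (d - i)) :
    ∃ p ∈ polyAlg F x 1, C 0 * ∑ i ∈ Finset.range (d + 1), aa i • (x 0 : A) ^ i =
      p * (∑ i ∈ Finset.range (d + 1), aa i • (x 0 : A) ^ i) * C 0 := by
  refine ⟨aa 0 • (↑(x 0)⁻¹ : A) ^ d, Subalgebra.smul_mem _
    (pow_mem (x_inv_mem_polyAlg zero_lt_one) d) _, ?_⟩
  have hC : ∀ i : ℕ, C 0 * (x 0 : A) ^ i = (↑(x 0)⁻¹ : A) ^ i * C 0 := fun i =>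
    (show SemiconjBy (C 0) (x 0 : A) (↑(x 0)⁻¹ : A) from h.C_x 0).pow_right i
  rw [← Finset.sum_range_reflect, Finset.mul_sum, Finset.mul_sum, Finset.sum_mul,
    ← Finset.sum_range_reflect]
  refine Finset.sum_congr rfl fun i hi => ?_
  have hi' : i ≤ d := Nat.lt_succ_iff.1 (Finset.mem_range.1 hi)
  have e1 : d + 1 - 1 - (d + 1 - 1 - i) = i := by omega
  have e2 : d + 1 - 1 - i = d - i := by omega
  rw [e1, e2, mul_smul_comm, hC, smul_mul_smul_comm, haa i hi', smul_mul_assoc]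
  congr 2
  obtain ⟨r, rfl⟩ := Nat.exists_eq_add_of_le hi'
  rw [Nat.add_sub_cancel_left, pow_add, mul_assoc, ← Units.val_pow_eq_pow_val,
    ← Units.val_pow_eq_pow_val, ← Units.val_pow_eq_pow_val, ← Units.val_mul, inv_pow,
    inv_pow, inv_mul_cancel, Units.val_one, mul_one]

theorem HCRel.prod_range_zpow_eq_mon (h : HCRel ξ n x C T) (γ : ℕ → ℤ) (k : ℕ) :
    ((List.range k).map fun i => (↑(x i ^ γ i) : A)).prod = mon x γ k := by
  induction k with
  | zero => rfl
  | succ k ih =>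
    have hc : Commute (mon x γ k) (↑(x k ^ γ k) : A) :=
      (h.x_comm_polyAlg k (mon_mem_polyAlg γ k)).symm.units_zpow_right (γ k)
    rw [List.range_succ, List.map_append, List.prod_append, ih, List.map_singleton,
      List.prod_singleton, mon, hc.eq]

theorem vec_eq_mon_mul_prod (φ : ℕ → A) (α : ℕ → ℤ) (Z : Finset ℕ) (k : ℕ) :
    vec x φ α Z k = mon x α k * (((List.range k).filter (· ∈ Z)).map φ).prod := by
  induction k with
  | zero => simp [vec, mon]
  | succ k ih =>
    rw [vec, ih, mon, List.range_succ, List.filter_append, List.map_append, List.prod_append]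
    by_cases hk : k ∈ Z <;> simp [hk, mul_assoc]

end Abstract

section Concrete

variable {F : Type} [Field F] {q : F} {n : ℕ}

/-- The units `X_i` of `H_n`, extended by `1`. -/
noncomputable def unitX (q : F) (n i : ℕ) : (H F q n)ˣ :=
  if h : i < n then ⟨X F q ⟨i, h⟩, Xinv F q ⟨i, h⟩, X_mul_Xinv _, Xinv_mul_X _⟩ else 1

/-- The elements `C_i` of `H_n`, extended by `0`. -/
noncomputable def natC (q : F) (n i : ℕ) : H F q n := if h : i < n then C F q ⟨i, h⟩ else 0

/-- The elements `T_i` of `H_n`, extended by `0`. -/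
noncomputable def natT (q : F) (n i : ℕ) : H F q n := if h : i < n - 1 then T F q ⟨i, h⟩ else 0

theorem unitX_val (i : Fin n) : (unitX q n i : H F q n) = X F q i := by
  simp [unitX]

theorem unitX_inv_val (i : Fin n) : (↑(unitX q n i)⁻¹ : H F q n) = Xinv F q i := by
  simp [unitX]

theorem natC_val (i : Fin n) : natC q n i = C F q i := by
  simp [natC]

theorem natT_val (i : Fin (n - 1)) : natT q n i = T F q i := by
  simp [natT]

theorem unitX_of_le {i : ℕ} (hi : n ≤ i) : unitX q n i = 1 := dif_neg (by omega)

theorem natC_of_le {i : ℕ} (hi : n ≤ i) : natC q n i = 0 := dif_neg (by omega)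

theorem natT_of_le {i : ℕ} (hi : n ≤ i + 1) : natT q n i = 0 := dif_neg (by omega)

theorem hcRel (q : F) (n : ℕ) : HCRel (q - q⁻¹) n (unitX q n) (natC q n) (natT q n) where
  x_comm i j := by
    by_cases hi : i < n
    · by_cases hj : j < n
      · lift i to Fin n using hi
        lift j to Fin n using hj
        rw [unitX_val, unitX_val, X_mul_X]
      · simp [unitX_of_le (not_lt.1 hj)]
    · simp [unitX_of_le (not_lt.1 hi)]
  C_sq {i} hi := by
    lift i to Fin n using hi
    rw [natC_val, C_mul_self]
  C_anti {i j} hij := by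
    by_cases hi : i < n
    · by_cases hj : j < n
      · lift i to Fin n using hi
        lift j to Fin n using hj
        rw [natC_val, natC_val, C_mul_C fun e => hij (congrArg Fin.val e)]
      · simp [natC_of_le (not_lt.1 hj)]
    · simp [natC_of_le (not_lt.1 hi)]
  C_x i := by
    by_cases hi : i < n
    · lift i to Fin n using hi
      rw [natC_val, unitX_val, unitX_inv_val, C_mul_X]
    · simp [natC_of_le (not_lt.1 hi)]
  C_x_ne {i j} hij := by
    by_cases hi : i < n
    · by_cases hj : j < n
      · lift i to Fin n using hi
        lift j to Fin n using hj
        rw [natC_val, unitX_val, C_mul_X_of_ne fun e => hij (congrArg Fin.val e)]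
      · simp [unitX_of_le (not_lt.1 hj)]
    · simp [natC_of_le (not_lt.1 hi)]
  T_sq {i} hi := by
    lift i to Fin (n - 1) using by omega
    rw [natT_val, T_mul_self]
  braid i := by
    by_cases hi : i + 2 < n
    · have e1 := natT_val (q := q) (n := n) ⟨i, by omega⟩
      have e2 := natT_val (q := q) (n := n) ⟨i + 1, by omega⟩
      simp only at e1 e2
      rw [e1, e2, T_braid rfl]
    · simp [natT_of_le (q := q) (show n ≤ i + 1 + 1 by omega)]
  far {i j} hij := by
    by_cases hj : j + 1 < n
    · lift j to Fin (n - 1) using by omega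
      lift i to Fin (n - 1) using by omega
      rw [natT_val, natT_val, T_mul_T hij]
    · simp [natT_of_le (not_lt.1 hj)]
  T_C i := by
    by_cases hi' : i + 1 < n
    · lift i to Fin (n - 1) using by omega
      have e1 := natC_val (q := q) (lo i)
      have e2 := natC_val (q := q) (hi i)
      simp only [lo, hi] at e1 e2
      rw [natT_val, e1, e2]
      exact T_mul_C_lo i
    · simp [natT_of_le (not_lt.1 hi')]
  T_C_ne {i j} h1 h2 := by
    by_cases hi : i + 1 < n
    · by_cases hj : j < n
      · lift i to Fin (n - 1) using by omega
        lift j to Fin n using hj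
        rw [natT_val, natC_val, T_mul_C (fun e => h1 (congrArg Fin.val e))
          (fun e => h2 (congrArg Fin.val e))]
      · simp [natC_of_le (not_lt.1 hj)]
    · simp [natT_of_le (not_lt.1 hi)]
  T_x_ne {i j} h1 h2 := by
    by_cases hi : i + 1 < n
    · by_cases hj : j < n
      · lift i to Fin (n - 1) using by omega
        lift j to Fin n using hj
        rw [natT_val, unitX_val, T_mul_X (fun e => h1 (congrArg Fin.val e))
          (fun e => h2 (congrArg Fin.val e))]
      · simp [unitX_of_le (not_lt.1 hj)]
    · simp [natT_of_le (not_lt.1 hi)]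
  cross {i} hi' := by
    lift i to Fin (n - 1) using by omega
    have e1 := natC_val (q := q) (lo i)
    have e2 := natC_val (q := q) (hi i)
    have e3 := unitX_val (q := q) (lo i)
    have e4 := unitX_val (q := q) (hi i)
    simp only [lo, hi] at e1 e2 e3 e4
    rw [natT_val, e1, e2, e3, e4]
    exact T_cross i

end Concrete

section Concrete

variable {F : Type} [Field F] {q : F} {n d : ℕ} {aa : ℕ → F}

theorem fam_eq_fseq {k : ℕ} (hk : k < n) :
    fam (q - q⁻¹) (natC q n) (natT q n) (felem F q n d aa) k = fseq F q n d aa k := by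
  induction k with
  | zero => rfl
  | succ k ih =>
    have hk' : k < n - 1 := by omega
    rw [fam, ih (by omega), fseq, dif_pos hk', Tp]
    simp [natC, natT, hk, hk', lo, hi, show k < n by omega]

theorem felem_eq_sum (hn : 0 < n) : felem F q n d aa =
    ∑ i ∈ Finset.range (d + 1), aa i • (unitX q n 0 : H F q n) ^ i := by
  simp [felem, hn, unitX]

theorem commute_felem {a : H F q n} (ha : Commute a (unitX q n 0)) :
    Commute a (felem F q n d aa) := by
  rcases Nat.eq_zero_or_pos n with rfl | hn
  · simp [felem]
  · rw [felem_eq_sum hn]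
    exact Commute.sum_right _ _ _ fun i _ => (ha.pow_right i).smul_right _

theorem exists_C_zero_mul_felem (hf : GoodPoly F d aa) :
    ∃ p ∈ polyAlg F (unitX q n) 1,
      natC q n 0 * felem F q n d aa = p * felem F q n d aa * natC q n 0 := by
  rcases Nat.eq_zero_or_pos n with rfl | hn
  · exact ⟨0, zero_mem _, by simp [felem]⟩
  · rw [felem_eq_sum hn]
    exact (hcRel q n).C_zero_mul_sum hf.2.2.1

theorem GoodPoly.coeff_zero_ne_zero (hf : GoodPoly F d aa) : aa 0 ≠ 0 := fun h0 => by
  simpa [h0, hf.2.1] using hf.2.2.1 d le_rfl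

theorem exists_fam_felem_eq (hf : GoodPoly F d aa) (k : ℕ) (hk : k < n) :
    ∃ u ∈ finAlg F (natC q n) (natT q n) (k + 1), ∃ w ∈ finAlg F (natC q n) (natT q n) (k + 1),
      u * w = 1 ∧ w * u = 1 ∧
        fam (q - q⁻¹) (natC q n) (natT q n) (felem F q n d aa) k - (unitX q n k : H F q n) ^ d
          - aa 0 • u ∈ midSpan F (unitX q n) (natC q n) (natT q n) k d := by
  obtain ⟨d, rfl⟩ := Nat.exists_eq_add_of_le' hf.1
  refine (hcRel q n).exists_fam_eq ?_ k hk
  rw [felem_eq_sum (by omega)]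
  exact sum_sub_mem_midSpan hf.2.1

theorem finAlg_eq_Hfin : finAlg F (natC q n) (natT q n) n = Hfin F q n := by
  unfold finAlg Hfin
  congr 2
  · ext a
    constructor
    · rintro ⟨i, hi, rfl⟩
      lift i to Fin n using hi
      exact ⟨i, (natC_val i).symm⟩
    · rintro ⟨i, rfl⟩
      exact ⟨i, i.2, (natC_val i).symm⟩
  · ext a
    constructor
    · rintro ⟨i, hi, rfl⟩
      lift i to Fin (n - 1) using by omega
      exact ⟨i, natT_val i⟩
    · rintro ⟨i, rfl⟩
      exact ⟨i, by omega, (natT_val i).symm⟩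

theorem XZ_eq_zpow (i : Fin n) (a : ℤ) : XZ F q i a = ↑(unitX q n i ^ a) := by
  unfold XZ
  split_ifs with ha
  · lift a to ℕ using ha
    simp [unitX_val]
  · obtain ⟨b, rfl⟩ : ∃ b : ℕ, a = -b := ⟨(-a).toNat, by omega⟩
    rw [zpow_neg, zpow_natCast, ← inv_pow, Units.val_pow_eq_pow_val, unitX_inv_val]
    simp

/-- The extension by zero of an exponent to `ℕ`. -/
def natExp (α : Fin n → ℤ) (i : ℕ) : ℤ := if h : i < n then α ⟨i, h⟩ else 0

theorem natExp_val (α : Fin n → ℤ) (i : Fin n) : natExp α i = α i := by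
  simp [natExp]

theorem Xmon_eq_mon (α : Fin n → ℤ) : Xmon F q α = mon (unitX q n) (natExp α) n := by
  rw [← (hcRel q n).prod_range_zpow_eq_mon, ← List.map_coe_finRange_eq_range, List.map_map, Xmon]
  congr 1
  refine List.map_congr_left fun i _ => ?_
  simp [XZ_eq_zpow, natExp_val]

theorem fZ_eq_prod_sort (Z : Finset (Fin n)) : fZ F q n d aa Z =
    ((Z.sort (· ≤ ·)).map fun z : Fin n => fseq F q n d aa (z : ℕ)).prod := by
  unfold fZ
  congr 1
  simp [← List.map_eq_flatMap, Function.comp_def]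

theorem fZ_eq_prod (Z : Finset (Fin n)) : fZ F q n d aa Z =
    (((List.range n).filter (· ∈ Z.map Fin.valEmbedding)).map
      (fam (q - q⁻¹) (natC q n) (natT q n) (felem F q n d aa))).prod := by
  have hs : Z.sort (· ≤ ·) = (List.finRange n).filter (· ∈ Z) := by
    have hp : ((List.finRange n).filter (· ∈ Z)).Pairwise (· ≤ ·) :=
      (List.pairwise_le_finRange n).filter _
    have hZ : Z = ((List.finRange n).filter (· ∈ Z)).toFinset := by ext; simp
    conv_lhs => rw [hZ]
    exact (List.toFinset_sort _ ((List.nodup_finRange n).filter _)).2 hp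
  rw [fZ_eq_prod_sort, hs, ← List.map_coe_finRange_eq_range, List.filter_map, List.map_map]
  congr 1
  have hfil : (List.finRange n).filter ((fun i : ℕ => decide (i ∈ Z.map Fin.valEmbedding)) ∘
      Fin.val) = (List.finRange n).filter (· ∈ Z) := by
    refine List.filter_congr fun i _ => ?_
    simp [← Fin.ext_iff]
  rw [hfil]
  exact List.map_congr_left fun i _ => (fam_eq_fseq i.2).symm

theorem Xmon_mul_fZ (α : Fin n → ℤ) (Z : Finset (Fin n)) :
    Xmon F q α * fZ F q n d aa Z =
      vec (unitX q n) (fam (q - q⁻¹) (natC q n) (natT q n) (felem F q n d aa)) (natExp α)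
        (Z.map Fin.valEmbedding) n := by
  rw [Xmon_eq_mon, fZ_eq_prod, vec_eq_mon_mul_prod]

theorem prodSpan_eq_top : prodSpan F (unitX q n) (natC q n) (natT q n) n = ⊤ := by
  refine eq_top_iff.2 fun h _ => ?_
  suffices key : ∀ a : FA F n, ∀ y ∈ prodSpan F (unitX q n) (natC q n) (natT q n) n,
      RingQuot.mkAlgHom F (Rel F q n) a * y ∈
        prodSpan F (unitX q n) (natC q n) (natT q n) n by
    obtain ⟨a, rfl⟩ := RingQuot.mkAlgHom_surjective F (Rel F q n) h
    have h1 : (1 : H F q n) ∈ prodSpan F (unitX q n) (natC q n) (natT q n) n := by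
      simpa using mul_mem_prodSpan (one_mem (polyAlg F (unitX q n) n))
        (one_mem (finAlg F (natC q n) (natT q n) n))
    simpa using key a 1 h1
  intro a
  induction a using FreeAlgebra.induction with
  | grade0 r =>
    intro y hy
    rw [AlgHom.commutes, ← Algebra.smul_def]
    exact Submodule.smul_mem _ _ hy
  | grade1 g =>
    intro y hy
    cases g with
    | X i =>
      have := x_mem_polyAlg (F := F) (x := unitX q n) i.2
      rw [unitX_val] at this
      exact poly_mul_mem_prodSpan this hy
    | Xinv i =>
      have := x_inv_mem_polyAlg (F := F) (x := unitX q n) i.2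
      rw [unitX_inv_val] at this
      exact poly_mul_mem_prodSpan this hy
    | C i =>
      have := C_mem_finAlg (F := F) (C := natC q n) (T := natT q n) i.2
      rw [natC_val] at this
      exact (hcRel q n).fin_mul_mem_prodSpan le_rfl this y hy
    | T i =>
      have := T_mem_finAlg (F := F) (C := natC q n) (T := natT q n) (i := i) (k := n) (by omega)
      rw [natT_val] at this
      exact (hcRel q n).fin_mul_mem_prodSpan le_rfl this y hy
  | mul a b ha hb =>
    intro y hy
    rw [map_mul, mul_assoc]
    exact ha _ (hb y hy)
  | add a b ha hb =>
    intro y hy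
    rw [map_add, add_mul]
    exact Submodule.add_mem _ (ha y hy) (hb y hy)

open Classical in
theorem exists_coeff_mon (γ : ℕ → ℤ) : ∃ ψ : H F q n →ₗ[F] H F q n, ∀ δ : ℕ → ℤ,
    ∀ b ∈ finAlg F (natC q n) (natT q n) n,
      ψ (mon (unitX q n) δ n * b) = if ∀ i < n, δ i = γ i then b else 0 := by
  obtain ⟨Φ, hΦ⟩ := exists_coeff (F := F) q n
  refine ⟨(Finsupp.lapply fun i : Fin n => γ i).comp Φ, fun δ b hb => ?_⟩
  have hδ : mon (unitX q n) δ n = Xmon F q fun i : Fin n => δ i := by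
    rw [Xmon_eq_mon]
    exact mon_congr n fun i hi => by simp [natExp, hi]
  rw [finAlg_eq_Hfin] at hb
  rw [hδ, LinearMap.comp_apply, hΦ _ _ hb, Finsupp.lapply_apply, Finsupp.single_apply]
  refine if_congr ⟨fun e i hi => congrFun e ⟨i, hi⟩, fun e => funext fun i => e i i.2⟩ rfl rfl

theorem mul_mem_Ifideal (u : H F q n) {h : H F q n} (hh : h ∈ Ifideal F q n d aa) :
    u * h ∈ Ifideal F q n d aa :=
  mul_mem_of_mem_span (by
    rintro _ ⟨v, w, rfl⟩
    exact Submodule.subset_span ⟨u * v, w, by simp only [mul_assoc]⟩) hh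

theorem mul_mem_Ifideal_right (u : H F q n) {h : H F q n} (hh : h ∈ Ifideal F q n d aa) :
    h * u ∈ Ifideal F q n d aa :=
  mul_mem_of_mem_span_right (by
    rintro _ ⟨v, w, rfl⟩
    exact Submodule.subset_span ⟨v, w * u, by simp only [mul_assoc]⟩) hh

theorem fseq_mem_Ifideal (k : ℕ) : fseq F q n d aa k ∈ Ifideal F q n d aa := by
  induction k with
  | zero => exact Submodule.subset_span ⟨1, 1, by simp [fseq]⟩
  | succ k ih =>
    rw [fseq]
    split_ifs with hk
    · exact mul_mem_Ifideal_right _ (mul_mem_Ifideal _ ih)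
    · exact zero_mem _

theorem fZ_mem_Ifideal {Z : Finset (Fin n)} (hZ : Z ≠ ∅) :
    fZ F q n d aa Z ∈ Ifideal F q n d aa := by
  rw [fZ_eq_prod_sort]
  rcases hs : Z.sort (· ≤ ·) with _ | ⟨z, l⟩
  · refine absurd ?_ hZ
    rw [← Finset.sort_toFinset (s := Z) (r := (· ≤ ·)), hs, List.toFinset_nil]
  · rw [List.map_cons, List.prod_cons]
    exact mul_mem_Ifideal_right _ (fseq_mem_Ifideal _)

/-- The map sending a family of coefficients to the corresponding combination of the elements
`X^α f_Z`. -/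
noncomputable def basisMap (q : F) (n d : ℕ) (aa : ℕ → F) :
    (PiIdxPlus n d →₀ ↥(Hfin F q n)) →ₗ[F] H F q n :=
  Finsupp.lsum F fun p =>
    (LinearMap.mulLeft F (Xmon F q p.1.1 * fZ F q n d aa p.1.2)).comp
      (Hfin F q n).val.toLinearMap

theorem basisMap_apply (c : PiIdxPlus n d →₀ ↥(Hfin F q n)) :
    basisMap q n d aa c =
      c.sum fun p b => Xmon F q p.1.1 * fZ F q n d aa p.1.2 * (b : H F q n) := rfl

theorem Ifideal_le_range_basisMap (hf : GoodPoly F d aa) :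
    Ifideal F q n d aa ≤ LinearMap.range (basisMap q n d aa) := by
  rcases Nat.eq_zero_or_pos n with rfl | hn
  · refine Submodule.span_le.2 ?_
    rintro _ ⟨u, v, rfl⟩
    simp [felem]
  have h := hcRel q n
  have hfC : ∀ j, 0 < j → Commute (natC q n j) (felem F q n d aa) := fun j hj =>
    commute_felem (h.C_x_ne hj.ne')
  have hfT : ∀ j, 0 < j → Commute (natT q n j) (felem F q n d aa) := fun j hj =>
    commute_felem (h.T_x_ne hj.ne (by omega))
  have hfx : ∀ i, Commute (felem F q n d aa) (unitX q n i : H F q n) := fun i =>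
    (commute_felem (h.x_comm i 0)).symm
  have hf0 := exists_C_zero_mul_felem (q := q) (n := n) hf
  have hexp := exists_fam_felem_eq (q := q) (n := n) hf
  have hvec := h.famSpan_le_vecSpan hfC hfT hf.1 hf.coeff_zero_ne_zero hexp hf0 hfx (le_refl n)
  refine Submodule.span_le.2 ?_
  rintro _ ⟨u, v, rfl⟩
  have htop : ∀ y : H F q n, y ∈ prodSpan F (unitX q n) (natC q n) (natT q n) n := fun y => by
    rw [prodSpan_eq_top]; trivial
  refine Submodule.span_le.2 ?_ (hvec (h.mul_mul_mem_famSpan hfC hfT hf0 hfx le_rfl hn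
    (htop u) (htop v)))
  rintro _ ⟨α, Z, hα, hZ, b, hb, rfl⟩
  obtain ⟨i, hi, hiZ⟩ := hZ trivial
  rw [finAlg_eq_Hfin] at hb
  let Z' : Finset (Fin n) := Finset.univ.filter fun i => (i : ℕ) ∈ Z
  let p : PiIdxPlus n d := ⟨(fun i => α i, Z'), fun i hi => hα i i.2 (by simpa [Z'] using hi),
    Finset.ne_empty_of_mem (a := ⟨i, hi⟩) (by simpa [Z'] using hiZ)⟩
  refine ⟨Finsupp.single p ⟨b, hb⟩, ?_⟩
  rw [basisMap_apply, Finsupp.sum_single_index (by simp), Xmon_mul_fZ]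
  congr 1
  refine vec_congr n (fun i hi => by simp [p, natExp, hi]) fun i hi => ?_
  simp only [p, Z', Finset.mem_map, Finset.mem_filter, Finset.mem_univ, true_and,
    Fin.valEmbedding_apply]
  exact ⟨by rintro ⟨j, hj, rfl⟩; exact hj, fun hiZ => ⟨⟨i, hi⟩, hiZ, rfl⟩⟩

theorem basisMap_injective (hf : GoodPoly F d aa) : Function.Injective (basisMap q n d aa) := by
  classical
  intro c c' hc
  have hmem : ∀ (Z : Finset (Fin n)) (i : Fin n), (i : ℕ) ∈ Z.map Fin.valEmbedding ↔ i ∈ Z :=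
    fun Z i => by simp [← Fin.ext_iff]
  have hsum : ∑ p ∈ c.support ∪ c'.support,
      vec (unitX q n) (fam (q - q⁻¹) (natC q n) (natT q n) (felem F q n d aa)) (natExp p.1.1)
        (p.1.2.map Fin.valEmbedding) n * ((c p : H F q n) - (c' p : H F q n)) = 0 := by
    simp only [mul_sub, Finset.sum_sub_distrib, ← Xmon_mul_fZ]
    rw [sub_eq_zero]
    rw [basisMap_apply, basisMap_apply,
      Finsupp.sum_of_support_subset c Finset.subset_union_left _ (by simp),
      Finsupp.sum_of_support_subset c' Finset.subset_union_right _ (by simp)] at hc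
    exact hc
  have key := (hcRel q n).eq_zero_of_sum_vec_eq_zero hf.1 hf.coeff_zero_ne_zero
    (exists_fam_felem_eq hf) exists_coeff_mon
    (fun p : PiIdxPlus n d => natExp p.1.1) (fun p => p.1.2.map Fin.valEmbedding)
    (fun p i hi hiZ => by
      lift i to Fin n using hi
      rw [natExp_val]
      exact p.2.1 i (by rwa [hmem] at hiZ))
    (fun p r hpr => by
      refine Subtype.ext (Prod.ext (funext fun i => ?_) (Finset.ext fun i => ?_))
      · simpa [natExp_val] using (hpr i i.2).1
      · simpa only [hmem] using (hpr i i.2).2)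
    _ (fun p => (c p : H F q n) - (c' p : H F q n))
    (fun p => by rw [finAlg_eq_Hfin]; exact sub_mem (c p).2 (c' p).2) hsum
  refine Finsupp.ext fun p => ?_
  by_cases hp : p ∈ c.support ∪ c'.support
  · exact Subtype.ext (sub_eq_zero.1 (key p hp))
  · rw [Finset.mem_union, not_or, Finsupp.notMem_support_iff, Finsupp.notMem_support_iff] at hp
    rw [hp.1, hp.2]

end Concrete

/-- **Basis of the cyclotomic ideal** (Lemma `ke` of Brundan–Kleshchev): the two-sided
ideal `I_f` of `H_n` generated by `f` decomposes as
`I_f = ⊕_{(α,Z) ∈ Π_n^+} X^α f_Z H^fn_n`; i.e. `{X^α f_Z : (α,Z) ∈ Π_n^+}` is a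
basis of `I_f` as a free right `H^fn_n`-module. -/
theorem cyclotomic_ideal_basis
    (F : Type) [Field F] [IsAlgClosed F] (h2 : (2 : F) ≠ 0)
    (q : F) (hq : GoodParam F q) (n : ℕ)
    (d : ℕ) (aa : ℕ → F) (hf : GoodPoly F d aa) :
    (∀ (p : PiIdxPlus n d) (b : ↥(Hfin F q n)),
      Xmon F q p.1.1 * fZ F q n d aa p.1.2 * (b : H F q n) ∈ Ifideal F q n d aa) ∧
    ∀ h ∈ Ifideal F q n d aa,
      ∃! c : PiIdxPlus n d →₀ ↥(Hfin F q n),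
        h = c.sum fun p b => Xmon F q p.1.1 * fZ F q n d aa p.1.2 * (b : H F q n) := by
  refine ⟨fun p b => mul_mem_Ifideal_right _ (mul_mem_Ifideal _ (fZ_mem_Ifideal p.2.2)),
    fun h hh => ?_⟩
  obtain ⟨c, rfl⟩ := Ifideal_le_range_basisMap hf hh
  exact ⟨c, basisMap_apply c, fun c' hc' => basisMap_injective hf hc'.symm⟩

end HC
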